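/- arXiv:1005.2561 — 4 statements merged into one kernel-verified Lean document; each statement's English description precedes it below -/
import Mathlib

section
/- Let n ≥ 1 and k ≥ 0. The number of D-multidissections of P_{2n} with exactly k edges is equal to 2h_k(1^n)h_0(1^n) + 2h_{k−1}(1^n)h_1(1^n) + ⋯ + 2h_{(k+1)/2}(1^n)h_{(k−1)/2}(1^n) if k is odd, and to 2h_k(1^n)h_0(1^n) + 2h_{k−1}(1^n)h_1(1^n) + ⋯ + 2h_{k/2+1}(1^n)h_{k/2−1}(1^n) + h_{k/2}(1^n)² if k is even; equivalently, it equals Σ_{ℓ=0}^{⌊k/2⌋} (k − 2ℓ + 1)·s_{(k−ℓ,ℓ)}(1^n). Here f(1^n) denotes the evaluation of a symmetric polynomial in n variables at x_1 = ⋯ = x_n = 1, so h_m(1^n) = C(n+m−1, m). -/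
/-!
The idea is to encode a D-multidissection by its degrees. Every edge of a centrally symmetric pair
is run through in the direction in which it covers less than half of the polygon; it opens at its
start and closes at its end. A blue diameter opens, and a red diameter closes, at both of its ends.
The opening and closing degrees `outDeg`, `inDeg` are invariant under the antipodal map, and
together they have total `k` over one half of the vertices.

Conversely, any two antipodally invariant functions `a`, `b` on the vertices are the degrees of
exactly one D-multidissection (`existsUnique_degrees`). This is cyclic matching of parentheses,
with `a z` opening and `b z` closing ones at `z`: if there are `x` and `y`, at clockwise distance
less than `n`, with `a x ≠ 0` and `b y ≠ 0`, then for a closest such pair the vertices in between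
have degree zero, so that the edge `{x, y}` is forced (`arc_forced`), can be removed
(`exists_addArc`), and crosses nothing when it is put back (`isDMulti_addArc`). If there are no such
`x` and `y`, only diameters remain, the blue ones given by `a` and the red ones by `b`; these do not
cross because all openings and closings that coexist sit on one single diameter.

Hence the multidissections with `k` edges are equinumerous with the pairs of functions
`Fin n → ℕ` of total sum `k`, and there are `∑ h_{k-l} h_l` of these over `0 ≤ l ≤ k`. Folding this
sum in the middle gives the first formula. The second one follows by Abel summation from the
Jacobi–Trudi identity `s_{(a,b)} = h_a h_b - h_{a+1} h_{b-1}` (`jacobiTrudi`), which is proved by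
induction on `n` from the branching rule for tableaux (`schur2_succ`).
-/

open Finset

/-- Two chords `{i,j}` and `{a,b}` of a polygon whose vertices are labeled clockwise by
`ZMod m` (i.e. `0,1,…,m−1`) cross iff their endpoints strictly interleave in cyclic order:
writing the pairs in increasing order of labels as `{p,q}`, `{r,s}` with `p<q`, `r<s`,
they cross iff `p<r<q<s` or `r<p<s<q`. -/
def crossE {m : ℕ} (i j a b : ZMod m) : Prop :=
  (min i.val j.val < min a.val b.val ∧ min a.val b.val < max i.val j.val ∧
     max i.val j.val < max a.val b.val) ∨
  (min a.val b.val < min i.val j.val ∧ min i.val j.val < max a.val b.val ∧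
     max a.val b.val < max i.val j.val)

/-- `T` is a semistandard tableau of two-row shape `(a,b)` (with `b ≤ a` in intended use)
with entries in `Fin n` (i.e. entries at most `n`): both rows weakly increase and the
columns strictly increase. -/
def IsSSYT2 {n a b : ℕ} (T : (Fin a → Fin n) × (Fin b → Fin n)) : Prop :=
  (∀ i j : Fin a, i ≤ j → T.1 i ≤ T.1 j) ∧
  (∀ i j : Fin b, i ≤ j → T.2 i ≤ T.2 j) ∧
  (∀ (i : Fin b) (h : (i : ℕ) < a), T.1 ⟨i, h⟩ < T.2 i)

open Classical in
/-- The Schur polynomial `s_{(a,b)}(x_1,…,x_n)` of a two-row shape, evaluated at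
`x = (x_1,…,x_n)`: the sum over all semistandard tableaux of shape `(a,b)` with entries
at most `n` of the products of the variables indexed by the entries. -/
noncomputable def schur2 {R : Type*} [CommSemiring R] (n a b : ℕ) (x : Fin n → R) : R :=
  ∑ T : (Fin a → Fin n) × (Fin b → Fin n),
    if IsSSYT2 T then (∏ p, x (T.1 p)) * ∏ p, x (T.2 p) else 0

open Classical in
/-- The complete homogeneous symmetric polynomial `h_k(x_1,…,x_n)` evaluated at
`x = (x_1,…,x_n)`: the sum over weakly increasing sequences `1 ≤ i_1 ≤ ⋯ ≤ i_k ≤ n`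
of `x_{i_1} ⋯ x_{i_k}`. -/
noncomputable def hh {R : Type*} [CommSemiring R] (n k : ℕ) (x : Fin n → R) : R :=
  ∑ T : Fin k → Fin n,
    if (∀ i j : Fin k, i ≤ j → T i ≤ T j) then ∏ p, x (T p) else 0

/-- The data of a D-multidissection of `P_{2n}` (vertices labeled clockwise by
`ZMod (2n)`): a multiplicity function on centrally symmetric pairs of non-diameter edges
(encoded as a symmetric antipodally invariant function `F.1` on edges), a multiplicity
function `F.2.1` on blue diameters (the diameter `{a, a+n}` indexed by `a`, antipodally
invariantly) and a multiplicity function `F.2.2` on red diameters. -/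
abbrev DTriple (n : ℕ) :=
  (ZMod (2*n) → ZMod (2*n) → ℕ) × (ZMod (2*n) → ℕ) × (ZMod (2*n) → ℕ)

/-- `F` is a D-multidissection: the underlying multiplicities are symmetric/antipodally
invariant, supported away from loops and diameters (for the pair part), and no two
D-edges of nonzero multiplicity cross.  Here distinct diameters of the same color never
cross, the same diameter in both colors does not cross itself, distinct diameters of
different colors always cross, and all other crossings are classical. -/
def IsDMulti (n : ℕ) (F : DTriple n) : Prop :=
  (∀ i j, F.1 i j = F.1 j i) ∧ (∀ i, F.1 i i = 0) ∧
  (∀ i, F.1 i (i + (n : ZMod (2*n))) = 0) ∧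
  (∀ i j, F.1 (i + (n : ZMod (2*n))) (j + (n : ZMod (2*n))) = F.1 i j) ∧
  (∀ a, F.2.1 (a + (n : ZMod (2*n))) = F.2.1 a) ∧
  (∀ a, F.2.2 (a + (n : ZMod (2*n))) = F.2.2 a) ∧
  (∀ i j a b, crossE i j a b → F.1 i j = 0 ∨ F.1 a b = 0) ∧
  (∀ a i j, crossE a (a + (n : ZMod (2*n))) i j → F.2.1 a = 0 ∨ F.1 i j = 0) ∧
  (∀ a i j, crossE a (a + (n : ZMod (2*n))) i j → F.2.2 a = 0 ∨ F.1 i j = 0) ∧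
  (∀ a b, F.2.1 a ≠ 0 → F.2.2 b ≠ 0 → b = a ∨ b = a + (n : ZMod (2*n)))

/-- The number of edges of a D-multidissection: each centrally symmetric pair of
non-diameter edges counts as two edges (so the sum of `F.1` over all edges) and each
colored diameter counts as one edge. -/
def dEdges (n : ℕ) (F : DTriple n) : ℕ :=
  (∑ i ∈ Finset.range (2*n), ∑ j ∈ Finset.range (2*n),
    if i < j then F.1 (i : ZMod (2*n)) (j : ZMod (2*n)) else 0) +
  ∑ a ∈ Finset.range n, (F.2.1 (a : ZMod (2*n)) + F.2.2 (a : ZMod (2*n)))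

/-- `F` is fixed by the `d`-th power of D-rotation (rotation by one vertex position
which additionally switches the colors of diameters). -/
def DFixed (n d : ℕ) (F : DTriple n) : Prop :=
  (∀ i j, F.1 (i + (d : ZMod (2*n))) (j + (d : ZMod (2*n))) = F.1 i j) ∧
  (∀ a, F.2.1 (a + (d : ZMod (2*n))) = if d % 2 = 0 then F.2.1 a else F.2.2 a) ∧
  (∀ a, F.2.2 (a + (d : ZMod (2*n))) = if d % 2 = 0 then F.2.2 a else F.2.1 a)

/-! ### Two-rowed tableaux -/

/-- On a two-rowed shape the first `p` entries of a row come from a smaller alphabet, and the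
remaining ones are all equal to the new largest letter. -/
def extendRow {n a p : ℕ} (S : Fin p → Fin n) : Fin a → Fin (n + 1) := fun i =>
  if h : (i : ℕ) < p then (S ⟨i, h⟩).castSucc else Fin.last n

theorem extendRow_lt {n a p : ℕ} (S : Fin p → Fin n) (i : Fin a) :
    extendRow S i < Fin.last n ↔ (i : ℕ) < p := by
  unfold extendRow
  split_ifs with h
  · simp [h, Fin.castSucc_lt_last]
  · simp [h]

theorem extendRow_length {n a p q : ℕ} (hp : p ≤ a) (hq : q ≤ a) {S : Fin p → Fin n}
    {S' : Fin q → Fin n}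
    (h : (extendRow S : Fin a → Fin (n + 1)) = extendRow S') : p = q := by
  have key : ∀ i : Fin a, (i : ℕ) < p ↔ (i : ℕ) < q := fun i => by
    rw [← extendRow_lt S i, ← extendRow_lt S' i, h]
  by_contra hne
  rcases lt_or_gt_of_ne hne with h1 | h1
  · have := (key ⟨p, by omega⟩).2 h1
    simp at this
  · have := (key ⟨q, by omega⟩).1 h1
    simp at this

theorem extendRow_inj {n a p : ℕ} (hp : p ≤ a) {S S' : Fin p → Fin n}
    (h : (extendRow S : Fin a → Fin (n + 1)) = extendRow S') : S = S' := by
  funext i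
  have := congrFun h ⟨i, by omega⟩
  simpa [extendRow] using this

theorem extendRow_mono {n a p : ℕ} {S : Fin p → Fin n} (hS : ∀ i j, i ≤ j → S i ≤ S j) :
    ∀ i j : Fin a, i ≤ j → (extendRow S i : Fin (n + 1)) ≤ extendRow S j := by
  intro i j hij
  unfold extendRow
  split_ifs with h1 h2
  · exact Fin.castSucc_le_castSucc_iff.2 (hS _ _ hij)
  · exact Fin.le_last _
  · exact absurd (lt_of_le_of_lt (show (i : ℕ) ≤ j from hij) ‹_›) h1
  · exact le_rfl

theorem exists_threshold {a : ℕ} (P : Fin a → Prop) (hP : ∀ i j, i ≤ j → P j → P i) :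
    ∃ p ≤ a, ∀ i : Fin a, P i ↔ (i : ℕ) < p := by
  classical
  by_cases h : ∀ i, P i
  · exact ⟨a, le_rfl, fun i => by simp [h i]⟩
  · push Not at h
    have hex : ∃ m, ∃ h : m < a, ¬ P ⟨m, h⟩ := ⟨h.choose, h.choose.2, h.choose_spec⟩
    obtain ⟨hlt, hn⟩ := Nat.find_spec hex
    refine ⟨Nat.find hex, hlt.le, fun i => ⟨fun hi => ?_, fun hi => ?_⟩⟩
    · by_contra hc
      exact hn (hP ⟨_, hlt⟩ i (by simpa [Fin.le_def] using hc) hi)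
    · by_contra hc
      exact Nat.find_min hex hi ⟨i.2, hc⟩

theorem exists_extendRow {n a : ℕ} (T : Fin a → Fin (n + 1)) (hT : ∀ i j, i ≤ j → T i ≤ T j) :
    ∃ p ≤ a, ∃ S : Fin p → Fin n, (∀ i j, i ≤ j → S i ≤ S j) ∧ T = extendRow S := by
  obtain ⟨p, hp, h⟩ := exists_threshold (fun i => T i < Fin.last n)
    (fun i j hij hj => lt_of_le_of_lt (hT i j hij) hj)
  refine ⟨p, hp, fun i => (T ⟨i, by omega⟩).castLT ?_, fun i j hij => ?_, funext fun i => ?_⟩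
  · exact (h ⟨i, by omega⟩).2 i.2
  · exact hT _ _ hij
  · unfold extendRow
    split_ifs with hi
    · simp
    · have := mt (h i).1 hi
      exact le_antisymm (Fin.le_last _) (not_lt.1 this)

theorem schur2_eq_card (n a b : ℕ) : schur2 n a b (fun _ : Fin n => (1 : ℕ)) =
    Nat.card {T : (Fin a → Fin n) × (Fin b → Fin n) // IsSSYT2 T} := by
  classical
  rw [Nat.card_eq_fintype_card, Fintype.card_subtype]
  simp [schur2]

theorem hh_eq_schur2 (n a : ℕ) : hh n a (fun _ : Fin n => (1 : ℕ)) =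
    schur2 n a 0 (fun _ : Fin n => (1 : ℕ)) := by
  classical
  simp only [hh, schur2, Fintype.sum_prod_type, Finset.univ_unique, Finset.sum_singleton]
  refine Finset.sum_congr rfl fun T _ => ?_
  simp [IsSSYT2]

/-- Branching rule: deleting the largest letter from a tableau of shape `(a, b)` leaves a tableau
whose shape `(p, q)` interlaces with `(a, b)`. -/
theorem schur2_succ (n a b : ℕ) (hb : b ≤ a) : schur2 (n + 1) a b (fun _ => (1 : ℕ)) =
    ∑ p ∈ Icc b a, ∑ q ∈ range (b + 1), schur2 n p q (fun _ => (1 : ℕ)) := by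
  classical
  simp only [schur2_eq_card]
  rw [← Finset.sum_product', ← Finset.sum_coe_sort, ← Nat.card_sigma]
  symm
  refine Nat.card_eq_of_bijective (fun T => ⟨(extendRow T.2.1.1, extendRow T.2.1.2),
    extendRow_mono T.2.2.1, extendRow_mono T.2.2.2.1, fun i h => ?_⟩) ⟨?_, ?_⟩
  · obtain ⟨⟨⟨p, q⟩, hpq⟩, T, h1, h2, h3⟩ := T
    simp only [mem_product, mem_Icc, mem_range] at hpq
    have hi : (i : ℕ) < p := by omega
    simp only [extendRow, hi, dif_pos]
    split_ifs with hq
    · exact Fin.castSucc_lt_castSucc_iff.2 (h3 ⟨i, hq⟩ hi)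
    · exact Fin.castSucc_lt_last _
  · rintro ⟨⟨⟨p, q⟩, hpq⟩, ⟨T1, T2⟩, h1, h2, h3⟩ ⟨⟨⟨p', q'⟩, hpq'⟩, ⟨T1', T2'⟩, h1', h2', h3'⟩ h
    simp only [mem_product, mem_Icc, mem_range] at hpq hpq'
    have ha := congrArg (fun T => T.1.1) h
    have hb := congrArg (fun T => T.1.2) h
    have hqb : q ≤ b := by omega
    obtain rfl := extendRow_length hpq.1.2 hpq'.1.2 ha
    obtain rfl := extendRow_length hqb (show q' ≤ b by omega) hb
    obtain rfl := extendRow_inj hpq.1.2 ha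
    obtain rfl := extendRow_inj hqb hb
    rfl
  · rintro ⟨⟨T1, T2⟩, h1, h2, h3⟩
    obtain ⟨p, hp, S, hS, rfl⟩ := exists_extendRow T1 h1
    obtain ⟨q, hq, S', hS', rfl⟩ := exists_extendRow T2 h2
    have hbp : b ≤ p := by
      by_contra hc
      have := h3 ⟨p, by omega⟩ (by simp; omega)
      have h4 := (extendRow_lt S (⟨p, by omega⟩ : Fin a)).1 (lt_of_lt_of_le this (Fin.le_last _))
      simp at h4
    refine ⟨⟨⟨(p, q), by simp; omega⟩, (S, S'), hS, hS', fun i hi => ?_⟩, rfl⟩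
    have hiq : (i : ℕ) < q := i.2
    have hip : (i : ℕ) < p := hi
    have := h3 ⟨i, by omega⟩ (show (i : ℕ) < a by omega)
    simpa [extendRow, hip] using this

theorem schur2_zero (a b : ℕ) : schur2 0 a b (fun _ => (1 : ℕ)) =
    if a = 0 ∧ b = 0 then 1 else 0 := by
  classical
  rcases a with _ | a <;> rcases b with _ | b <;> simp [schur2, IsSSYT2]

theorem hh_zero (a : ℕ) : hh 0 a (fun _ => (1 : ℕ)) = if a = 0 then 1 else 0 := by
  simp [hh_eq_schur2, schur2_zero]

theorem hh_succ (n a : ℕ) : hh (n + 1) a (fun _ => (1 : ℕ)) =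
    ∑ p ∈ range (a + 1), hh n p (fun _ => (1 : ℕ)) := by
  simp only [hh_eq_schur2]
  rw [schur2_succ _ _ _ (Nat.zero_le a)]
  refine sum_congr (by ext; simp) fun p _ => by simp

theorem hh_zero_right (n : ℕ) : hh n 0 (fun _ => (1 : ℕ)) = 1 := by
  induction n with
  | zero => simp [hh_zero]
  | succ n ih => simp [hh_succ, ih]

theorem hh_eq_multichoose (n k : ℕ) : hh n k (fun _ => (1 : ℕ)) = n.multichoose k := by
  induction n generalizing k with
  | zero => rcases k with _ | k <;> simp [hh_zero]
  | succ n ih =>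
    rw [hh_succ]
    induction k with
    | zero => simp [ih]
    | succ k ihk => rw [sum_range_succ, ihk, ih, Nat.multichoose_succ_succ, add_comm]

/-- The Jacobi–Trudi identity for two-rowed shapes at `x = (1, …, 1)`; the induction on the
alphabet works because the sum over interlacing shapes of the `2 × 2` determinants telescopes. -/
theorem jacobiTrudi (n a b : ℕ) (hb : b + 1 ≤ a) :
    schur2 n a (b + 1) (fun _ => (1 : ℕ)) +
      hh n (a + 1) (fun _ => (1 : ℕ)) * hh n b (fun _ => (1 : ℕ)) =
      hh n a (fun _ => (1 : ℕ)) * hh n (b + 1) (fun _ => (1 : ℕ)) := by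
  induction n generalizing a b with
  | zero =>
    have : a ≠ 0 := by omega
    simp [schur2_zero, hh_zero, this]
  | succ n ih =>
    set h : ℕ → ℕ := fun m => hh n m (fun _ => (1 : ℕ)) with hdef
    -- the row sums over `q`, for a fixed length `p` of the first row
    have row : ∀ p, b + 1 ≤ p → ∑ q ∈ range (b + 1 + 1), schur2 n p q (fun _ => (1 : ℕ)) +
        h (p + 1) * ∑ q ∈ range (b + 1), h q = h p * ∑ q ∈ range (b + 2), h q := by
      intro p hp
      rw [sum_range_succ' _ (b + 1), sum_range_succ' h (b + 1), mul_add, mul_sum, mul_sum,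
        ← hh_eq_schur2, add_right_comm, ← sum_add_distrib]
      congr 1
      · refine sum_congr rfl fun q hq => ih p q ?_
        have := mem_range.1 hq
        omega
      · simp [hdef, hh_zero_right]
    have key : ∀ d, (∑ p ∈ Icc (b + 1) (b + 1 + d), ∑ q ∈ range (b + 1 + 1),
        schur2 n p q (fun _ => (1 : ℕ))) +
        (∑ p ∈ range (b + 1 + d + 2), h p) * ∑ q ∈ range (b + 1), h q =
        (∑ p ∈ range (b + 1 + d + 1), h p) * ∑ q ∈ range (b + 2), h q := by
      intro d
      induction d with
      | zero =>
        have := row (b + 1) le_rfl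
        simp only [add_zero, Icc_self, sum_singleton]
        rw [sum_range_succ h (b + 1 + 1), add_mul, add_comm (_ * _), ← add_assoc, this,
          sum_range_succ h (b + 1)]
        ring
      | succ d ihd =>
        have := row (b + 1 + d + 1) (by omega)
        rw [← add_assoc (b + 1) d 1, sum_Icc_succ_top (by omega),
          sum_range_succ h (b + 1 + d + 1 + 1),
          sum_range_succ h (b + 1 + d + 1)]
        rw [sum_range_succ h (b + 1 + d + 1)] at ihd
        rw [add_mul (∑ x ∈ range (b + 1 + d + 1), h x) _ (∑ q ∈ range (b + 2), h q), ← ihd, ← this]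
        ring
    obtain ⟨d, rfl⟩ := Nat.exists_eq_add_of_le hb
    rw [schur2_succ _ _ _ hb]
    simp only [hh_succ]
    exact key d

/-- Abel summation of the Jacobi–Trudi identities. -/
theorem sum_schur2 (n k M : ℕ) (hM : 2 * M ≤ k) :
    ∑ l ∈ range (M + 1), (k - 2 * l + 1) * schur2 n (k - l) l (fun _ : Fin n => (1 : ℕ)) =
      2 * ∑ l ∈ range M, hh n (k - l) (fun _ => (1 : ℕ)) * hh n l (fun _ => (1 : ℕ)) +
        (k - 2 * M + 1) * (hh n (k - M) (fun _ => (1 : ℕ)) * hh n M (fun _ => (1 : ℕ))) := by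
  induction M with
  | zero => simp [hh_zero_right, ← hh_eq_schur2]
  | succ M ih =>
    rw [sum_range_succ, ih (by omega), sum_range_succ _ M]
    have h := jacobiTrudi n (k - (M + 1)) M (by omega)
    rw [show k - (M + 1) + 1 = k - M by omega] at h
    rw [← h, show k - 2 * M + 1 = (k - 2 * (M + 1) + 1) + 2 by omega]
    ring

theorem sum_hh_symm (n k : ℕ) :
    ∑ l ∈ range (k + 1), hh n (k - l) (fun _ : Fin n => (1 : ℕ)) * hh n l (fun _ => (1 : ℕ)) =
      if k % 2 = 1 then
        2 * ∑ l ∈ range ((k - 1) / 2 + 1),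
          hh n (k - l) (fun _ : Fin n => (1 : ℕ)) * hh n l (fun _ : Fin n => (1 : ℕ))
      else
        2 * (∑ l ∈ range (k / 2),
          hh n (k - l) (fun _ : Fin n => (1 : ℕ)) * hh n l (fun _ : Fin n => (1 : ℕ))) +
          hh n (k / 2) (fun _ : Fin n => (1 : ℕ)) * hh n (k / 2) (fun _ : Fin n => (1 : ℕ)) := by
  set g : ℕ → ℕ := fun l => hh n (k - l) (fun _ => (1 : ℕ)) * hh n l (fun _ => (1 : ℕ)) with hg
  have hs : ∀ l ≤ k, g (k - l) = g l := fun l hl => by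
    simp only [hg, Nat.sub_sub_self hl, mul_comm]
  have hrefl : ∀ M N, M + N = k + 1 → ∑ l ∈ range N, g (M + l) = ∑ l ∈ range N, g l := by
    intro M N h
    rw [← sum_range_reflect]
    refine sum_congr rfl fun l hl => ?_
    have := mem_range.1 hl
    rw [← hs l (by omega)]
    congr 1
    omega
  split_ifs with hk
  · rw [show k + 1 = ((k - 1) / 2 + 1) + ((k - 1) / 2 + 1) by omega, sum_range_add,
      hrefl _ _ (by omega), two_mul]
  · rw [show k + 1 = (k / 2 + 1) + (k / 2) by omega, sum_range_add,
      hrefl _ _ (by omega), sum_range_succ g]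
    have : g (k / 2) = hh n (k / 2) (fun _ => (1 : ℕ)) * hh n (k / 2) (fun _ => (1 : ℕ)) := by
      simp only [hg, show k - k / 2 = k / 2 by omega]
    rw [this]
    ring

theorem sum_schur2_eq (n k : ℕ) :
    ∑ l ∈ range (k / 2 + 1), (k - 2 * l + 1) * schur2 n (k - l) l (fun _ : Fin n => (1 : ℕ)) =
    ∑ l ∈ range (k + 1), hh n (k - l) (fun _ : Fin n => (1 : ℕ)) * hh n l (fun _ => (1 : ℕ)) := by
  rw [sum_schur2 n k (k / 2) (by omega), sum_hh_symm]
  split_ifs with hk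
  · rw [show k - 2 * (k / 2) + 1 = 2 by omega, show (k - 1) / 2 = k / 2 by omega,
      sum_range_succ]
    ring
  · rw [show k - 2 * (k / 2) + 1 = 1 by omega, show k - k / 2 = k / 2 by omega, one_mul]

theorem card_pairs (n k : ℕ) :
    Nat.card {p : (Fin n → ℕ) × (Fin n → ℕ) // ∑ i, p.1 i + ∑ i, p.2 i = k} =
    ∑ l ∈ range (k + 1), hh n (k - l) (fun _ : Fin n => (1 : ℕ)) * hh n l (fun _ => (1 : ℕ)) := by
  classical
  have hc : ∀ l, Nat.card {P : Fin n → ℕ // ∑ i, P i = l} = hh n l (fun _ => (1 : ℕ)) := by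
    intro l
    rw [hh_eq_multichoose, ← Nat.card_congr (Sym.equivNatSumOfFintype (Fin n) l),
      Nat.card_eq_fintype_card, Sym.card_sym_eq_multichoose, Fintype.card_fin]
  have hf : ∀ l, Finite {P : Fin n → ℕ // ∑ i, P i = l} := fun l =>
    Finite.of_equiv _ (Sym.equivNatSumOfFintype (Fin n) l)
  simp only [← hc, ← Nat.card_prod]
  rw [← Finset.sum_coe_sort, ← Nat.card_sigma]
  symm
  refine Nat.card_eq_of_bijective (fun x => ⟨(x.2.1.1, x.2.2.1), ?_⟩) ⟨?_, ?_⟩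
  · obtain ⟨⟨l, hl⟩, ⟨f, hf⟩, g, hg⟩ := x
    have := mem_range.1 hl
    simp only at hf hg ⊢
    omega
  · rintro ⟨⟨l, hl⟩, ⟨f, hf⟩, g, hg⟩ ⟨⟨l', hl'⟩, ⟨f', hf'⟩, g', hg'⟩ h
    simp only [Subtype.mk.injEq, Prod.mk.injEq] at h hg hg'
    obtain ⟨rfl, rfl⟩ := h
    obtain rfl : l = l' := hg.symm.trans hg'
    rfl
  · rintro ⟨⟨f, g⟩, h⟩
    simp only at h
    exact ⟨⟨⟨∑ i, g i, mem_range.2 (by omega)⟩, ⟨f, by simp only; omega⟩, g, rfl⟩, rfl⟩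

/-! ### Cyclic distances and crossings -/

theorem val_sub_add_val_sub {m : ℕ} [NeZero m] (u v w : ZMod m) :
    (u - v).val + (v - w).val = (u - w).val ∨ (u - v).val + (v - w).val = (u - w).val + m := by
  have h1 := ZMod.val_lt (u - v)
  have h2 := ZMod.val_lt (v - w)
  rw [show u - w = (u - v) + (v - w) by ring, ZMod.val_add]
  rcases lt_or_ge ((u - v).val + (v - w).val) m with h | h
  · left
    rw [Nat.mod_eq_of_lt h]
  · right
    rw [Nat.mod_eq_sub_mod h, Nat.mod_eq_of_lt (by omega)]
    omega

theorem val_sub_eq_zero {m : ℕ} {u v : ZMod m} : (u - v).val = 0 ↔ u = v := by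
  rw [ZMod.val_eq_zero, sub_eq_zero]

theorem val_sub_inj {m : ℕ} [NeZero m] {u v w : ZMod m} (h : (u - w).val = (v - w).val) :
    u = v :=
  sub_left_injective (ZMod.val_injective m h)

/-- Crossing, read off from the clockwise distances to the first endpoint `i`; in particular it is
invariant under rotation. -/
theorem crossE_iff {m : ℕ} [NeZero m] (i j p q : ZMod m) : crossE i j p q ↔
    (0 < (p - i).val ∧ (p - i).val < (j - i).val ∧ (j - i).val < (q - i).val) ∨
    (0 < (q - i).val ∧ (q - i).val < (j - i).val ∧ (j - i).val < (p - i).val) := by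
  have hi := ZMod.val_lt i
  have hj := ZMod.val_lt j
  have hp := ZMod.val_lt p
  have hq := ZMod.val_lt q
  have hj' := ZMod.val_lt (j - i)
  have hp' := ZMod.val_lt (p - i)
  have hq' := ZMod.val_lt (q - i)
  have h1 := val_sub_add_val_sub j i 0
  have h2 := val_sub_add_val_sub p i 0
  have h3 := val_sub_add_val_sub q i 0
  simp only [sub_zero] at h1 h2 h3
  unfold crossE
  omega

theorem crossE_swap {m : ℕ} {i j p q : ZMod m} (h : crossE i j p q) : crossE p q i j := by
  unfold crossE at *
  omega

theorem crossE_flip {m : ℕ} {i j p q : ZMod m} (h : crossE i j p q) : crossE j i p q := by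
  unfold crossE at *
  omega

section Half

set_option linter.unusedSectionVars false

variable {n : ℕ} [NeZero n]

theorem val_half : (n : ZMod (2 * n)).val = n :=
  ZMod.val_natCast_of_lt (by have := NeZero.pos n; omega)

theorem half_add_half (z : ZMod (2 * n)) : z + n + n = z := by
  have : ((2 * n : ℕ) : ZMod (2 * n)) = 0 := ZMod.natCast_self _
  push_cast at this
  rw [add_assoc, ← two_mul, this, add_zero]

/-- Passing to the antipode changes clockwise distances by `n`. -/
theorem val_half_sub (z x : ZMod (2 * n)) : n + (z - x).val = (z + (n : ZMod (2 * n)) - x).val ∨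
    n + (z - x).val = (z + (n : ZMod (2 * n)) - x).val + 2 * n := by
  have := val_sub_add_val_sub (z + (n : ZMod (2 * n))) z x
  rwa [add_sub_cancel_left, val_half] at this

theorem ne_add_half (z : ZMod (2 * n)) : z ≠ z + n := by
  intro h
  have h1 := val_half_sub z z
  rw [← h] at h1
  have := NeZero.pos n
  omega

theorem sum_eq_sum_range (m : ℕ) [NeZero m] (g : ZMod m → ℕ) :
    ∑ z, g z = ∑ i ∈ range m, g (i : ZMod m) := by
  refine sum_nbij' (fun z => z.val) (fun i => (i : ZMod m)) ?_ ?_ ?_ ?_ ?_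
  · intro z _
    exact mem_range.2 (ZMod.val_lt z)
  · intro i _
    exact mem_univ _
  · intro z _
    exact ZMod.natCast_zmod_val z
  · intro i hi
    exact ZMod.val_natCast_of_lt (mem_range.1 hi)
  · intro z _
    rw [ZMod.natCast_zmod_val]

theorem sum_periodic (g : ZMod (2 * n) → ℕ) (hg : ∀ z, g (z + n) = g z) :
    ∑ z, g z = 2 * ∑ i ∈ range n, g (i : ZMod (2 * n)) := by
  rw [sum_eq_sum_range]
  rw [show range (2 * n) = range (n + n) by rw [two_mul], sum_range_add,
    two_mul (∑ i ∈ range n, _)]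
  congr 1
  refine sum_congr rfl fun i _ => ?_
  rw [← hg i]
  push_cast
  rw [add_comm]

theorem eq_of_periodic {g g' : ZMod (2 * n) → ℕ} (hg : ∀ z, g (z + n) = g z)
    (hg' : ∀ z, g' (z + n) = g' z) (h : ∀ i < n, g (i : ZMod (2 * n)) = g' (i : ZMod (2 * n))) :
    g = g' := by
  funext z
  have hz := ZMod.val_lt z
  rcases lt_or_ge z.val n with h1 | h1
  · simpa using h z.val h1
  · have h2 := h (z.val - n) (by omega)
    rw [← hg, ← hg', Nat.cast_sub h1, ZMod.natCast_zmod_val, sub_add_cancel] at h2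
    exact h2

/-! ### Opening and closing degrees -/

/-- The number of arcs of `f` that start at `z` and run clockwise through less than half of the
polygon. -/
def arcOut (f : ZMod (2 * n) → ZMod (2 * n) → ℕ) (z : ZMod (2 * n)) : ℕ :=
  ∑ w, if (w - z).val < n then f z w else 0

/-- The number of arcs of `f` that run clockwise through less than half of the polygon and end at
`z`. -/
def arcIn (f : ZMod (2 * n) → ZMod (2 * n) → ℕ) (z : ZMod (2 * n)) : ℕ :=
  ∑ w, if (z - w).val < n then f z w else 0

/-- The opening degree at `z`; blue diameters count as opening at both of their ends. -/
def outDeg (F : DTriple n) (z : ZMod (2 * n)) : ℕ := arcOut F.1 z + F.2.1 z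

/-- The closing degree at `z`; red diameters count as closing at both of their ends. -/
def inDeg (F : DTriple n) (z : ZMod (2 * n)) : ℕ := arcIn F.1 z + F.2.2 z

/-- One arc `{x, y}`, recorded in both directions and together with its antipodal image. -/
def arc (x y i j : ZMod (2 * n)) : ℕ :=
  ((if i = x ∧ j = y then 1 else 0) + (if i = y ∧ j = x then 1 else 0)) +
  ((if i = x + n ∧ j = y + n then 1 else 0) + (if i = y + n ∧ j = x + n then 1 else 0))

/-- The indicator function of the diameter `{x, x + n}`. -/
def ind (x z : ZMod (2 * n)) : ℕ := (if z = x then 1 else 0) + (if z = x + n then 1 else 0)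

/-- `F` together with one more copy of the centrally symmetric pair of `{x, y}`. -/
def addArc (x y : ZMod (2 * n)) (F : DTriple n) : DTriple n :=
  (fun i j => F.1 i j + arc x y i j, F.2)

theorem arcOut_add (f g : ZMod (2 * n) → ZMod (2 * n) → ℕ) (z : ZMod (2 * n)) :
    arcOut (fun i j => f i j + g i j) z = arcOut f z + arcOut g z := by
  simp only [arcOut, ← sum_add_distrib]
  exact sum_congr rfl fun w _ => by split_ifs <;> rfl

theorem arcIn_add (f g : ZMod (2 * n) → ZMod (2 * n) → ℕ) (z : ZMod (2 * n)) :
    arcIn (fun i j => f i j + g i j) z = arcIn f z + arcIn g z := by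
  simp only [arcIn, ← sum_add_distrib]
  exact sum_congr rfl fun w _ => by split_ifs <;> rfl

theorem arcOut_single (p q z : ZMod (2 * n)) :
    arcOut (fun i j => if i = p ∧ j = q then 1 else 0) z =
      if z = p ∧ (q - p).val < n then 1 else 0 := by
  unfold arcOut
  rw [sum_eq_single q]
  · by_cases h : z = p
    · subst h
      simp
    · simp [h]
  · intro w _ hw
    simp [hw]
  · simp

theorem arcIn_single (p q z : ZMod (2 * n)) :
    arcIn (fun i j => if i = p ∧ j = q then 1 else 0) z =
      if z = p ∧ (p - q).val < n then 1 else 0 := by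
  unfold arcIn
  rw [sum_eq_single q]
  · by_cases h : z = p
    · subst h
      simp
    · simp [h]
  · intro w _ hw
    simp [hw]
  · simp

theorem not_val_sub_lt {x y : ZMod (2 * n)} (h0 : 0 < (y - x).val) (hlt : (y - x).val < n) :
    ¬ (x - y).val < n := by
  have h := val_sub_add_val_sub x y x
  have : (x - x : ZMod (2 * n)).val = 0 := val_sub_eq_zero.2 rfl
  omega

theorem arcOut_arc {x y : ZMod (2 * n)} (h0 : 0 < (y - x).val) (hlt : (y - x).val < n)
    (z : ZMod (2 * n)) : arcOut (arc x y) z = ind x z := by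
  have h1 := not_val_sub_lt h0 hlt
  unfold arc ind
  rw [arcOut_add, arcOut_add, arcOut_add]
  simp only [arcOut_single, add_sub_add_right_eq_sub, hlt, h1, and_true, and_false, if_false,
    add_zero]

theorem arcIn_arc {x y : ZMod (2 * n)} (h0 : 0 < (y - x).val) (hlt : (y - x).val < n)
    (z : ZMod (2 * n)) : arcIn (arc x y) z = ind y z := by
  have h1 := not_val_sub_lt h0 hlt
  unfold arc ind
  rw [arcIn_add, arcIn_add, arcIn_add]
  simp only [arcIn_single, add_sub_add_right_eq_sub, hlt, h1, and_true, and_false, if_false,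
    zero_add]

theorem outDeg_addArc {x y : ZMod (2 * n)} (h0 : 0 < (y - x).val) (hlt : (y - x).val < n)
    (F : DTriple n) (z : ZMod (2 * n)) : outDeg (addArc x y F) z = outDeg F z + ind x z := by
  simp only [outDeg, addArc, arcOut_add, arcOut_arc h0 hlt]
  ring

theorem inDeg_addArc {x y : ZMod (2 * n)} (h0 : 0 < (y - x).val) (hlt : (y - x).val < n)
    (F : DTriple n) (z : ZMod (2 * n)) : inDeg (addArc x y F) z = inDeg F z + ind y z := by
  simp only [inDeg, addArc, arcIn_add, arcIn_arc h0 hlt]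
  ring

theorem arc_symm (x y i j : ZMod (2 * n)) : arc x y i j = arc x y j i := by
  unfold arc
  simp only [and_comm]
  ring

theorem add_half_eq_iff (i x : ZMod (2 * n)) : i + n = x ↔ i = x + n := by
  constructor
  · rintro rfl
    rw [half_add_half]
  · rintro rfl
    rw [half_add_half]

theorem arc_half (x y i j : ZMod (2 * n)) : arc x y (i + n) (j + n) = arc x y i j := by
  unfold arc
  simp only [add_half_eq_iff, half_add_half]
  ring

theorem ind_half (x z : ZMod (2 * n)) : ind x (z + n) = ind x z := by
  unfold ind
  simp only [add_half_eq_iff, half_add_half]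
  ring

theorem arc_ne_zero {x y i j : ZMod (2 * n)} : arc x y i j ≠ 0 ↔
    (i = x ∧ j = y) ∨ (i = y ∧ j = x) ∨ (i = x + n ∧ j = y + n) ∨ (i = y + n ∧ j = x + n) := by
  unfold arc
  simp only [ne_eq, Nat.add_eq_zero_iff, ite_eq_right_iff, one_ne_zero, imp_false]
  tauto

theorem arc_le_one {x y : ZMod (2 * n)} (h0 : 0 < (y - x).val) (hlt : (y - x).val < n)
    (i j : ZMod (2 * n)) : arc x y i j ≤ 1 := by
  have h1 : x ≠ y := by
    rintro rfl
    simp at h0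
  have h2 : y ≠ x + n := by
    rintro rfl
    rw [add_sub_cancel_left, val_half] at hlt
    omega
  have h3 : x ≠ y + n := fun h => h2 ((add_half_eq_iff y x).1 h.symm)
  have h4 := ne_add_half x
  have h5 := ne_add_half y
  unfold arc
  by_cases a1 : i = x
  · subst a1
    simp only [h1, h3, h4, false_and, if_false, add_zero]
    split_ifs <;> omega
  by_cases a2 : i = y
  · subst a2
    simp only [h1.symm, h2, h5, false_and, if_false, add_zero, zero_add]
    split_ifs <;> omega
  simp only [a1, a2, false_and, if_false, zero_add]
  by_cases a3 : i = x + n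
  · have : i ≠ y + n := fun h => h1 (add_right_cancel (a3.symm.trans h))
    simp only [this, false_and, if_false, add_zero]
    split_ifs <;> omega
  · simp only [a3, false_and, if_false, zero_add]
    split_ifs <;> omega

theorem ind_le {x : ZMod (2 * n)} {a : ZMod (2 * n) → ℕ} (ha : ∀ z, a (z + n) = a z)
    (hx : a x ≠ 0) (z : ZMod (2 * n)) : ind x z ≤ a z := by
  have h1 : 0 < a x := Nat.pos_of_ne_zero hx
  unfold ind
  by_cases h : z = x
  · subst h
    simp only [ne_add_half z, if_true, if_false]
    exact h1
  · simp only [h, if_false, zero_add]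
    split_ifs with h2
    · subst h2
      rw [ha]
      exact h1
    · exact Nat.zero_le _

theorem arcOut_half {f : ZMod (2 * n) → ZMod (2 * n) → ℕ} (hf : ∀ i j, f (i + n) (j + n) = f i j)
    (z : ZMod (2 * n)) : arcOut f (z + n) = arcOut f z := by
  unfold arcOut
  rw [← Equiv.sum_comp (Equiv.addRight (n : ZMod (2 * n)))]
  simp [hf]

theorem arcIn_half {f : ZMod (2 * n) → ZMod (2 * n) → ℕ} (hf : ∀ i j, f (i + n) (j + n) = f i j)
    (z : ZMod (2 * n)) : arcIn f (z + n) = arcIn f z := by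
  unfold arcIn
  rw [← Equiv.sum_comp (Equiv.addRight (n : ZMod (2 * n)))]
  simp [hf]

theorem outDeg_half {F : DTriple n} (hF : IsDMulti n F) (z : ZMod (2 * n)) :
    outDeg F (z + n) = outDeg F z := by
  obtain ⟨-, -, -, h4, h5, -⟩ := hF
  simp only [outDeg, arcOut_half h4, h5]

theorem inDeg_half {F : DTriple n} (hF : IsDMulti n F) (z : ZMod (2 * n)) :
    inDeg F (z + n) = inDeg F z := by
  obtain ⟨-, -, -, h4, -, h6, -⟩ := hF
  simp only [inDeg, arcIn_half h4, h6]

theorem outDeg_ne_zero_iff (F : DTriple n) (z : ZMod (2 * n)) :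
    outDeg F z ≠ 0 ↔ F.2.1 z ≠ 0 ∨ ∃ w, (w - z).val < n ∧ F.1 z w ≠ 0 := by
  have : arcOut F.1 z ≠ 0 ↔ ∃ w, (w - z).val < n ∧ F.1 z w ≠ 0 := by
    simp [arcOut, sum_eq_zero_iff]
  rw [← this, outDeg]
  omega

theorem inDeg_ne_zero_iff (F : DTriple n) (z : ZMod (2 * n)) :
    inDeg F z ≠ 0 ↔ F.2.2 z ≠ 0 ∨ ∃ w, (z - w).val < n ∧ F.1 z w ≠ 0 := by
  have : arcIn F.1 z ≠ 0 ↔ ∃ w, (z - w).val < n ∧ F.1 z w ≠ 0 := by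
    simp [arcIn, sum_eq_zero_iff]
  rw [← this, inDeg]
  omega

/-- An edge that is neither a loop nor a diameter is shorter than half of the polygon in exactly
one direction. -/
theorem edge_direction {F : DTriple n} (hF : IsDMulti n F) {z w : ZMod (2 * n)}
    (h : F.1 z w ≠ 0) : ((w - z).val < n ∧ ¬ (z - w).val < n) ∨
      ((z - w).val < n ∧ ¬ (w - z).val < n) := by
  obtain ⟨-, h2, h3, -⟩ := hF
  have a1 : (w - z).val ≠ 0 := fun h' => by
    rw [val_sub_eq_zero] at h'
    exact h (h' ▸ h2 w)
  have a2 : (w - z).val ≠ n := fun h' => by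
    have : w = z + n := val_sub_inj (w := z) (by rw [h', add_sub_cancel_left, val_half])
    exact h (this ▸ h3 z)
  have a3 := val_sub_add_val_sub z w z
  have : (z - z : ZMod (2 * n)).val = 0 := val_sub_eq_zero.2 rfl
  have := ZMod.val_lt (w - z)
  omega

theorem degrees_of_edge {F : DTriple n} (hF : IsDMulti n F) {z w : ZMod (2 * n)}
    (h : F.1 z w ≠ 0) : outDeg F z ≠ 0 ∨ inDeg F z ≠ 0 := by
  rw [outDeg_ne_zero_iff, inDeg_ne_zero_iff]
  rcases edge_direction hF h with h1 | h1
  · exact Or.inl (Or.inr ⟨w, h1.1, h⟩)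
  · exact Or.inr (Or.inr ⟨w, h1.1, h⟩)

/-- The number of edges is the sum of all degrees over one half of the vertices. -/
theorem dEdges_eq {F : DTriple n} (hF : IsDMulti n F) : dEdges n F =
    ∑ i ∈ range n, outDeg F (i : ZMod (2 * n)) + ∑ i ∈ range n, inDeg F (i : ZMod (2 * n)) := by
  have h1 : ∑ z, ∑ w, F.1 z w = 2 * ∑ i ∈ range n,
      (arcOut F.1 (i : ZMod (2 * n)) + arcIn F.1 (i : ZMod (2 * n))) := by
    rw [← sum_periodic (fun z => arcOut F.1 z + arcIn F.1 z)
      (fun z => by rw [arcOut_half hF.2.2.2.1, arcIn_half hF.2.2.2.1])]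
    refine sum_congr rfl fun z _ => ?_
    unfold arcOut arcIn
    rw [← sum_add_distrib]
    refine sum_congr rfl fun w _ => ?_
    by_cases h : F.1 z w = 0
    · simp [h]
    · rcases edge_direction hF h with h1 | h1 <;> simp [h1.1, h1.2]
  have h2 : ∑ z, ∑ w, F.1 z w = 2 * ∑ i ∈ range (2 * n), ∑ j ∈ range (2 * n),
      if i < j then F.1 (i : ZMod (2 * n)) (j : ZMod (2 * n)) else 0 := by
    rw [two_mul (∑ i ∈ range (2 * n), _)]
    conv_rhs =>
      right
      rw [sum_comm]
    rw [← sum_add_distrib, sum_eq_sum_range]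
    refine sum_congr rfl fun i _ => ?_
    rw [sum_eq_sum_range, ← sum_add_distrib]
    refine sum_congr rfl fun j _ => ?_
    rcases lt_trichotomy i j with h | h | h
    · simp [h, h.not_gt]
    · subst h
      simp [hF.2.1]
    · simp only [h, h.not_gt, if_true, if_false, zero_add]
      exact hF.1 _ _
  simp only [dEdges, outDeg, inDeg, sum_add_distrib] at h1 h2 ⊢
  omega


/-! ### Innermost arcs -/

/-- An opening at `x` and a closing at `y` with nothing in between force the edge `{x, y}`: any
other edges (or diameters) responsible for the two degrees would cross each other. -/
theorem arc_forced {F : DTriple n} (hF : IsDMulti n F) {x y : ZMod (2 * n)}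
    (h0 : 0 < (y - x).val) (hlt : (y - x).val < n) (hx : outDeg F x ≠ 0) (hy : inDeg F y ≠ 0)
    (hz : ∀ z, 0 < (z - x).val → (z - x).val < (y - x).val → outDeg F z = 0 ∧ inDeg F z = 0) :
    F.1 x y ≠ 0 := by
  obtain ⟨h1, h2, -, -, -, -, h7, h8, h9, h10⟩ := id hF
  have hb : ∀ z w, F.1 z w ≠ 0 → ¬ (0 < (z - x).val ∧ (z - x).val < (y - x).val) := by
    rintro z w h ⟨a, b⟩
    have := hz z a b
    have := degrees_of_edge hF h
    omega
  by_contra hxy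
  have hout : F.2.1 x ≠ 0 ∨ ∃ p, (y - x).val < (p - x).val ∧ (p - x).val < n ∧ F.1 x p ≠ 0 := by
    rcases (outDeg_ne_zero_iff F x).1 hx with h | ⟨p, hp, h⟩
    · exact Or.inl h
    · refine Or.inr ⟨p, ?_, hp, h⟩
      have a1 := hb p x (by rwa [h1])
      have a2 : (p - x).val ≠ 0 := fun h' => h (by rw [val_sub_eq_zero.1 h', h2])
      have a3 : (p - x).val ≠ (y - x).val := fun h' => h (by rw [val_sub_inj h', hxy])
      omega
  have hin : F.2.2 y ≠ 0 ∨ ∃ q, n < (q - x).val ∧ F.1 y q ≠ 0 := by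
    rcases (inDeg_ne_zero_iff F y).1 hy with h | ⟨q, hq, h⟩
    · exact Or.inl h
    · refine Or.inr ⟨q, ?_, h⟩
      have a1 := hb q y (by rwa [h1])
      have a2 : (q - x).val ≠ 0 := fun h' => h (by rw [val_sub_eq_zero.1 h', h1, hxy])
      have a3 : (q - x).val ≠ (y - x).val := fun h' => h (by rw [val_sub_inj h', h2])
      have a4 := val_sub_add_val_sub y q x
      omega
  have hn := val_half_sub x x
  have hxx : (x - x : ZMod (2 * n)).val = 0 := val_sub_eq_zero.2 rfl
  have hxn : (x + n - x : ZMod (2 * n)).val = n := by rw [add_sub_cancel_left, val_half]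
  have hyn : (y + n - y : ZMod (2 * n)).val = n := by rw [add_sub_cancel_left, val_half]
  have hyx := val_sub_add_val_sub x y x
  rcases hout with hx' | ⟨p, hp1, hp2, hp⟩ <;> rcases hin with hy' | ⟨q, hq1, hq⟩
  · rcases h10 x y hx' hy' with h | h
    · rw [h] at h0
      omega
    · rw [h] at hlt
      omega
  · have := h8 x y q ((crossE_iff _ _ _ _).2 (by omega))
    tauto
  · have a4 := val_sub_add_val_sub p y x
    have a5 := ZMod.val_lt (p - y)
    have := h9 y x p ((crossE_iff _ _ _ _).2 (by omega))
    tauto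
  · have := h7 x p y q ((crossE_iff _ _ _ _).2 (by omega))
    tauto

theorem exists_addArc {F : DTriple n} (hF : IsDMulti n F) {x y : ZMod (2 * n)}
    (h0 : 0 < (y - x).val) (hlt : (y - x).val < n) (h : F.1 x y ≠ 0) :
    ∃ F', IsDMulti n F' ∧ F = addArc x y F' := by
  obtain ⟨h1, h2, h3, h4, h5, h6, h7, h8, h9, h10⟩ := id hF
  have hle : ∀ i j, arc x y i j ≤ F.1 i j := by
    intro i j
    have := arc_le_one h0 hlt i j
    by_cases ha : arc x y i j = 0
    · omega
    · have : F.1 i j ≠ 0 := by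
        rcases arc_ne_zero.1 ha with ⟨rfl, rfl⟩ | ⟨rfl, rfl⟩ | ⟨rfl, rfl⟩ | ⟨rfl, rfl⟩
        · exact h
        · rwa [h1]
        · rwa [h4]
        · rwa [h4, h1]
      omega
  refine ⟨(fun i j => F.1 i j - arc x y i j, F.2),
    ⟨?_, ?_, ?_, ?_, h5, h6, ?_, ?_, ?_, h10⟩, ?_⟩
  · intro i j
    simp only [h1 i j, arc_symm x y i j]
  · intro i
    simp [h2]
  · intro i
    simp [h3]
  · intro i j
    simp only [h4, arc_half]
  · intro i j p q hc
    have := h7 i j p q hc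
    simp only
    omega
  · intro d i j hc
    have := h8 d i j hc
    simp only
    omega
  · intro d i j hc
    have := h9 d i j hc
    simp only
    omega
  · refine Prod.ext (funext fun i => funext fun j => ?_) rfl
    have := hle i j
    simp only [addArc]
    omega

/-- A pair of edges may be added whenever the vertices that it cuts off are isolated. -/
theorem isDMulti_addArc {F : DTriple n} (hF : IsDMulti n F) {x y : ZMod (2 * n)}
    (h0 : 0 < (y - x).val) (hlt : (y - x).val < n)
    (hz : ∀ z, 0 < (z - x).val → (z - x).val < (y - x).val → outDeg F z = 0 ∧ inDeg F z = 0) :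
    IsDMulti n (addArc x y F) := by
  obtain ⟨h1, h2, h3, h4, h5, h6, h7, h8, h9, h10⟩ := id hF
  -- `B z`: the vertex `z` is cut off by `{x, y}` or by its antipodal image
  set B : ZMod (2 * n) → Prop := fun z => (0 < (z - x).val ∧ (z - x).val < (y - x).val) ∨
    (0 < (z + n - x).val ∧ (z + n - x).val < (y - x).val) with hB
  have hx1 := val_half_sub x x
  have hxx : (x - x : ZMod (2 * n)).val = 0 := val_sub_eq_zero.2 rfl
  have hy1 := val_half_sub y x
  have hnB : ∀ i j, arc x y i j ≠ 0 → ¬ B i := by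
    intro i j h
    rcases arc_ne_zero.1 h with ⟨rfl, rfl⟩ | ⟨rfl, rfl⟩ | ⟨rfl, rfl⟩ | ⟨rfl, rfl⟩ <;>
      simp only [hB, half_add_half] <;> omega
  have hcross : ∀ i j p q, arc x y i j ≠ 0 → crossE i j p q → B p ∨ B q := by
    have c1 : ∀ p q, crossE x y p q → B p ∨ B q := by
      intro p q hc
      have := (crossE_iff _ _ _ _).1 hc
      simp only [hB]
      omega
    have c2 : ∀ p q, crossE (x + (n : ZMod (2 * n))) (y + (n : ZMod (2 * n))) p q → B p ∨ B q := by
      intro p q hc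
      have e : ∀ z : ZMod (2 * n), z - (x + n) = z + n - x := fun z => by
        rw [← sub_sub, sub_right_comm, sub_left_inj, sub_eq_iff_eq_add, half_add_half]
      have := (crossE_iff _ _ _ _).1 hc
      rw [add_sub_add_right_eq_sub, e, e] at this
      simp only [hB]
      omega
    intro i j p q h hc
    rcases arc_ne_zero.1 h with ⟨rfl, rfl⟩ | ⟨rfl, rfl⟩ | ⟨rfl, rfl⟩ | ⟨rfl, rfl⟩
    · exact c1 _ _ hc
    · exact c1 _ _ (crossE_flip hc)
    · exact c2 _ _ hc
    · exact c2 _ _ (crossE_flip hc)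
  have hdeg : ∀ z, B z → outDeg F z = 0 ∧ inDeg F z = 0 := by
    rintro z (⟨a, b⟩ | ⟨a, b⟩)
    · exact hz z a b
    · rw [← outDeg_half hF, ← inDeg_half hF]
      exact hz _ a b
  have hedge : ∀ z w, F.1 z w ≠ 0 → ¬ B z := fun z w h hBz => by
    have := hdeg z hBz
    have := degrees_of_edge hF h
    omega
  have hblue : ∀ z, F.2.1 z ≠ 0 → ¬ B z := fun z h hBz =>
    (outDeg_ne_zero_iff F z).2 (Or.inl h) (hdeg z hBz).1
  have hred : ∀ z, F.2.2 z ≠ 0 → ¬ B z := fun z h hBz =>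
    (inDeg_ne_zero_iff F z).2 (Or.inl h) (hdeg z hBz).2
  have hxy : x ≠ y := by
    rintro rfl
    omega
  have hxy' : y ≠ x + n := by
    rintro rfl
    omega
  refine ⟨?_, ?_, ?_, ?_, h5, h6, ?_, ?_, ?_, h10⟩
  · intro i j
    simp only [addArc, h1 i j, arc_symm x y i j]
  · intro i
    simp only [addArc, h2, zero_add]
    by_contra h
    rcases arc_ne_zero.1 h with ⟨rfl, e⟩ | ⟨rfl, e⟩ | ⟨rfl, e⟩ | ⟨rfl, e⟩
    · exact hxy e
    · exact hxy e.symm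
    · exact hxy (add_right_cancel e)
    · exact hxy (add_right_cancel e).symm
  · intro i
    simp only [addArc, h3, zero_add]
    by_contra h
    rcases arc_ne_zero.1 h with ⟨rfl, e⟩ | ⟨rfl, e⟩ | ⟨rfl, e⟩ | ⟨rfl, e⟩
    · exact hxy' e.symm
    · exact hxy' ((add_half_eq_iff _ _).1 e)
    · rw [half_add_half] at e
      exact hxy' ((add_half_eq_iff _ _).1 e.symm)
    · rw [half_add_half] at e
      exact hxy' e
  · intro i j
    simp only [addArc, h4, arc_half]
  · intro i j p q hc
    simp only [addArc]
    have key := h7 i j p q hc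
    by_contra hcon
    have ht : (F.1 i j ≠ 0 ∨ arc x y i j ≠ 0) ∧ (F.1 p q ≠ 0 ∨ arc x y p q ≠ 0) := by omega
    obtain ⟨ht1, ht2⟩ := ht
    have n1 : ¬ B i := ht1.elim (hedge _ _) (hnB _ _)
    have n2 : ¬ B j := ht1.elim (fun h => hedge j i (by rwa [h1]))
      (fun h => hnB j i (by rwa [arc_symm]))
    have n3 : ¬ B p := ht2.elim (hedge _ _) (hnB _ _)
    have n4 : ¬ B q := ht2.elim (fun h => hedge q p (by rwa [h1]))
      (fun h => hnB q p (by rwa [arc_symm]))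
    rcases ht1 with h | h
    · rcases ht2 with h' | h'
      · exact key.elim h h'
      · exact (hcross _ _ _ _ h' (crossE_swap hc)).elim n1 n2
    · exact (hcross _ _ _ _ h hc).elim n3 n4
  · intro d i j hc
    simp only [addArc]
    have key := h8 d i j hc
    by_contra hcon
    have ht : F.2.1 d ≠ 0 ∧ (F.1 i j = 0 → arc x y i j ≠ 0) := by omega
    exact (hcross _ _ _ _ (ht.2 (key.resolve_left ht.1)) (crossE_swap hc)).elim (hblue _ ht.1)
      (hblue _ (by rw [h5]; exact ht.1))
  · intro d i j hc
    simp only [addArc]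
    have key := h9 d i j hc
    by_contra hcon
    have ht : F.2.2 d ≠ 0 ∧ (F.1 i j = 0 → arc x y i j ≠ 0) := by omega
    exact (hcross _ _ _ _ (ht.2 (key.resolve_left ht.1)) (crossE_swap hc)).elim (hred _ ht.1)
      (hred _ (by rw [h6]; exact ht.1))

/-! ### Multidissections are determined by their degrees -/

theorem isDMulti_diameters {a b : ZMod (2 * n) → ℕ} (ha : ∀ z, a (z + n) = a z)
    (hb : ∀ z, b (z + n) = b z)
    (hno : ∀ x y, a x ≠ 0 → b y ≠ 0 → 0 < (y - x).val → ¬ (y - x).val < n) :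
    IsDMulti n (fun _ _ => 0, a, b) := by
  refine ⟨fun _ _ => rfl, fun _ => rfl, fun _ => rfl, fun _ _ => rfl, ha, hb,
    fun _ _ _ _ _ => Or.inl rfl, fun _ _ _ _ => Or.inr rfl, fun _ _ _ _ => Or.inr rfl, ?_⟩
  intro x y hx hy
  simp only at hx hy
  by_contra hcon
  push Not at hcon
  have a1 : (y - x).val ≠ 0 := fun h => hcon.1 (val_sub_eq_zero.1 h)
  have a2 : (y - x).val ≠ n := fun h =>
    hcon.2 (val_sub_inj (w := x) (by rw [h, add_sub_cancel_left, val_half]))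
  have a3 := hno x y hx hy (by omega)
  have a4 := hno x (y + n) hx (by rwa [hb])
  have a5 := val_half_sub y x
  have a6 := ZMod.val_lt (y - x)
  have a7 := ZMod.val_lt (y + (n : ZMod (2 * n)) - x)
  omega

/-- Opening and closing degrees may be prescribed arbitrarily, and they determine the
multidissection. -/
theorem existsUnique_degrees (a b : ZMod (2 * n) → ℕ) (ha : ∀ z, a (z + n) = a z)
    (hb : ∀ z, b (z + n) = b z) :
    ∃! F : DTriple n, IsDMulti n F ∧ outDeg F = a ∧ inDeg F = b := by
  classical
  induction hN : ∑ z, a z using Nat.strong_induction_on generalizing a b with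
  | _ N ih =>
  by_cases hex : ∃ l, ∃ x y, (y - x).val = l ∧ 0 < l ∧ l < n ∧ a x ≠ 0 ∧ b y ≠ 0
  · obtain ⟨x, y, hl, h0, hlt, hx, hy⟩ := Nat.find_spec hex
    have hmin := fun m hm => Nat.find_min hex (m := m) hm
    rw [← hl] at h0 hlt hmin
    -- the vertices strictly between `x` and `y` carry no degree, by minimality
    have hz : ∀ z, 0 < (z - x).val → (z - x).val < (y - x).val → a z = 0 ∧ b z = 0 := by
      intro z hz0 hz1
      have h3 := val_sub_add_val_sub y z x
      have h4 := ZMod.val_lt (y - z)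
      constructor
      · by_contra hc
        exact hmin (y - z).val (by omega) ⟨z, y, rfl, by omega, by omega, hc, hy⟩
      · by_contra hc
        exact hmin (z - x).val (by omega) ⟨x, z, rfl, by omega, by omega, hx, hc⟩
    have hax := ind_le ha hx
    have hby := ind_le hb hy
    have hsum : ∑ z, (a z - ind x z) < N := by
      rw [← hN]
      refine sum_lt_sum (fun z _ => Nat.sub_le _ _) ⟨x, mem_univ _, ?_⟩
      have : 0 < ind x x := by simp [ind]
      omega
    obtain ⟨F', ⟨hF', hFa, hFb⟩, huniq⟩ := ih _ hsum (fun z => a z - ind x z)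
      (fun z => b z - ind y z) (fun z => by simp only [ha, ind_half])
      (fun z => by simp only [hb, ind_half]) rfl
    have ea : ∀ z, outDeg F' z = a z - ind x z := congrFun hFa
    have eb : ∀ z, inDeg F' z = b z - ind y z := congrFun hFb
    refine ⟨addArc x y F', ⟨isDMulti_addArc hF' h0 hlt ?_, ?_, ?_⟩, ?_⟩
    · intro z hz0 hz1
      have := hz z hz0 hz1
      rw [ea, eb]
      omega
    · funext z
      have := hax z
      rw [outDeg_addArc h0 hlt, ea]
      omega
    · funext z
      have := hby z
      rw [inDeg_addArc h0 hlt, eb]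
      omega
    · rintro G ⟨hG, rfl, rfl⟩
      obtain ⟨G', hG', rfl⟩ := exists_addArc hG h0 hlt (arc_forced hG h0 hlt hx hy hz)
      rw [huniq G' ⟨hG', ?_, ?_⟩]
      · funext z
        simp only [outDeg_addArc h0 hlt]
        omega
      · funext z
        simp only [inDeg_addArc h0 hlt]
        omega
  · have hno : ∀ x y, a x ≠ 0 → b y ≠ 0 → 0 < (y - x).val → ¬ (y - x).val < n :=
      fun x y hx hy h0 hlt => hex ⟨_, x, y, rfl, h0, hlt, hx, hy⟩
    refine ⟨(fun _ _ => 0, a, b), ⟨isDMulti_diameters ha hb hno, ?_, ?_⟩, ?_⟩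
    · funext z
      simp [outDeg, arcOut]
    · funext z
      simp [inDeg, arcIn]
    · rintro G ⟨hG, rfl, rfl⟩
      have hlong : ∀ z w, G.1 z w ≠ 0 → ¬ (w - z).val < n := by
        intro z w h hlt
        refine hno z w ((outDeg_ne_zero_iff _ _).2 (Or.inr ⟨w, hlt, h⟩))
          ((inDeg_ne_zero_iff _ _).2 (Or.inr ⟨z, hlt, by rwa [hG.1]⟩)) ?_ hlt
        refine Nat.pos_of_ne_zero fun h' => h ?_
        rw [val_sub_eq_zero.1 h', hG.2.1]
      have hzero : ∀ z w, G.1 z w = 0 := by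
        intro z w
        by_contra h
        rcases edge_direction hG h with h' | h'
        · exact hlong z w h h'.1
        · exact hlong w z (by rwa [hG.1]) h'.1
      refine Prod.ext (funext fun z => funext fun w => hzero z w) (Prod.ext ?_ ?_)
      · funext z
        simp [outDeg, arcOut, hzero]
      · funext z
        simp [inDeg, arcIn, hzero]

theorem periodic_extend (f : Fin n → ℕ) : ∃ g : ZMod (2 * n) → ℕ, (∀ z, g (z + n) = g z) ∧
    ∀ i : Fin n, g ((i : ℕ) : ZMod (2 * n)) = f i := by
  have hn := NeZero.pos n
  refine ⟨fun z => f ⟨z.val % n, Nat.mod_lt _ hn⟩, fun z => ?_, fun i => ?_⟩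
  · refine congrArg f (Fin.ext ?_)
    simp only
    rw [ZMod.val_add, val_half, Nat.mod_mod_of_dvd _ (Dvd.intro_left 2 rfl), Nat.add_mod_right]
  · have hi := i.2
    refine congrArg f (Fin.ext ?_)
    simp only
    rw [ZMod.val_natCast_of_lt (by omega), Nat.mod_eq_of_lt hi]

theorem card_multidissections (k : ℕ) :
    Nat.card {F : DTriple n // IsDMulti n F ∧ dEdges n F = k} =
    Nat.card {p : (Fin n → ℕ) × (Fin n → ℕ) // ∑ i, p.1 i + ∑ i, p.2 i = k} := by
  refine Nat.card_eq_of_bijective (fun F =>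
    ⟨(fun i => outDeg F.1 ((i : ℕ) : ZMod (2 * n)), fun i => inDeg F.1 ((i : ℕ) : ZMod (2 * n))),
      ?_⟩) ⟨?_, ?_⟩
  · obtain ⟨F, hF, hk⟩ := F
    rw [dEdges_eq hF, sum_range, sum_range] at hk
    exact hk
  · rintro ⟨F, hF, hk⟩ ⟨G, hG, hk'⟩ h
    simp only [Subtype.mk.injEq, Prod.mk.injEq] at h
    have ho : outDeg F = outDeg G := eq_of_periodic (outDeg_half hF) (outDeg_half hG)
      fun i hi => congrFun h.1 ⟨i, hi⟩
    have hi : inDeg F = inDeg G := eq_of_periodic (inDeg_half hF) (inDeg_half hG)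
      fun i hi => congrFun h.2 ⟨i, hi⟩
    exact Subtype.ext ((existsUnique_degrees _ _ (outDeg_half hG) (inDeg_half hG)).unique
      ⟨hF, ho, hi⟩ ⟨hG, rfl, rfl⟩)
  · rintro ⟨⟨f, g⟩, hfg⟩
    obtain ⟨a, ha, haf⟩ := periodic_extend f
    obtain ⟨b, hb, hbg⟩ := periodic_extend g
    obtain ⟨F, ⟨hF, rfl, rfl⟩, -⟩ := existsUnique_degrees a b ha hb
    refine ⟨⟨F, hF, ?_⟩, ?_⟩
    · rw [dEdges_eq hF, sum_range, sum_range]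
      simpa only [haf, hbg] using hfg
    · exact Subtype.ext (Prod.ext (funext haf) (funext hbg))

end Half

/-- Corollary 4.3.  Let `n ≥ 1` and `k ≥ 0`.  The number of
D-multidissections of `P_{2n}` with exactly `k` edges equals
`2h_k(1ⁿ)h_0(1ⁿ) + 2h_{k−1}(1ⁿ)h_1(1ⁿ) + ⋯` (ending in `2h_{(k+1)/2}(1ⁿ)h_{(k−1)/2}(1ⁿ)`
for `k` odd and in `⋯ + h_{k/2}(1ⁿ)²` for `k` even), and equivalently equals
`Σ_{ℓ=0}^{⌊k/2⌋} (k − 2ℓ + 1)·s_{(k−ℓ,ℓ)}(1ⁿ)`. -/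
theorem statement13 (n k : ℕ) (hn : 1 ≤ n) :
    (Nat.card {F : DTriple n // IsDMulti n F ∧ dEdges n F = k} =
      (if k % 2 = 1 then
        2 * ∑ l ∈ Finset.range ((k - 1) / 2 + 1),
          hh n (k - l) (fun _ : Fin n => (1 : ℕ)) * hh n l (fun _ : Fin n => (1 : ℕ))
      else
        2 * (∑ l ∈ Finset.range (k / 2),
          hh n (k - l) (fun _ : Fin n => (1 : ℕ)) * hh n l (fun _ : Fin n => (1 : ℕ))) +
          hh n (k / 2) (fun _ : Fin n => (1 : ℕ)) *
            hh n (k / 2) (fun _ : Fin n => (1 : ℕ)))) ∧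
    Nat.card {F : DTriple n // IsDMulti n F ∧ dEdges n F = k} =
      ∑ l ∈ Finset.range (k / 2 + 1),
        (k - 2 * l + 1) * schur2 n (k - l) l (fun _ : Fin n => (1 : ℕ)) := by
  have : NeZero n := ⟨by omega⟩
  rw [card_multidissections, card_pairs]
  exact ⟨sum_hh_symm n k, (sum_schur2_eq n k).symm⟩
end

section
/- (Folding Lemma, Part 1.) Let k ≥ 0, n ≥ 2, let d be an even divisor of 2n with d dividing n, and let r be the D-rotation operator on D-multidissections of P_{2n}. Then the set of D-multidissections of P_{2n} with exactly k edges that are invariant under r^d is in bijective correspondence with the set of D-multidissections of P_{2d} with exactly kd/n edges (this latter set being interpreted as empty if kd/n is not an integer). In particular the two sets have equal cardinality. -/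
/-!
If `d = n`, the `d`-th power of D-rotation is the antipodal map, it fixes every
D-multidissection, and the bijection is the identity.

Let `d < n`. A chord of an invariant D-multidissection of `P_{2n}` must not cross its translate
by `d`, so it has a side of length at most `d` (`LiftD.long_eq_zero`). A diameter must not cross
the translates of a diameter of the other color, so only one color occurs (`LiftD.mono`). Folding
(`foldD`) reduces labels modulo `2d`: chords of length less than `d` go to chords of `P_{2d}`,
diameters keep their color, and the *loops* `{a, a + d}`, which would become diameters, are
replaced by one blue and one red diameter at `a`. Unfolding (`unfoldD`) recovers the loops as
follows: if blue and red diameters of `P_{2d}` both occur, they all lie at one position `a`, and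
the minimum of the two multiplicities is the multiplicity of the loop at `a`. Since only one
color occurs upstairs, the two operations are mutually inverse (`unfold_fold`, `fold_unfold`).

Crossings are compared on the universal cover `ℤ` of the vertex circle (`LiftD`,
`isDMulti_iff`): chords with a short side cross exactly when the corresponding short integer
intervals interleave, and this does not depend on whether labels are read modulo `2n` or `2d`
(`cross_of_short`, `diamCross_of_short`, `LiftD.fold`, `LiftD.unfold`).

For the number of edges, a class modulo `d` of chords of length less than `d` has `2n/d` members
upstairs and `2` downstairs, a class of loops has `2n/d` members and becomes `2` diameters, and a
class of diameters has `n/d` members and becomes one; all ratios are `n/d` (`dEdges_fold`).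
-/


open Finset

/-! ### Crossings on the universal cover -/

theorem crossE_comm_left {m : ℕ} (i j a b : ZMod m) : crossE i j a b ↔ crossE j i a b := by
  unfold crossE
  rw [min_comm i.val, max_comm i.val]

theorem crossE_comm_right {m : ℕ} (i j a b : ZMod m) : crossE i j a b ↔ crossE i j b a := by
  unfold crossE
  rw [min_comm a.val, max_comm a.val]

/-- Four integers that increase within one period label two crossing chords; the converse is
`exists_lift_of_crossE`. -/
theorem crossE_of_lt {m : ℕ} [NeZero m] {p q r s : ℤ} (h1 : p < q) (h2 : q < r) (h3 : r < s)
    (h4 : s < p + m) : crossE (p : ZMod m) (r : ZMod m) (q : ZMod m) (s : ZMod m) := by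
  have hm : (0 : ℤ) < m := by exact_mod_cast Nat.pos_of_ne_zero (NeZero.ne m)
  have h0 := Int.emod_nonneg p hm.ne'
  have h0' := Int.emod_lt_of_pos p hm
  have hp : p = p % m + m * (p / m) := (Int.emod_add_mul_ediv p m).symm
  -- the residue of a label lying less than `m` beyond `p`
  have key : ∀ x : ℤ, p ≤ x → x < p + m →
      (((x : ZMod m).val : ℤ) = p % m + (x - p) ∧ p % m + (x - p) < m) ∨
      (((x : ZMod m).val : ℤ) = p % m + (x - p) - m ∧ m ≤ p % m + (x - p)) := by
    intro x hx hx'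
    have hxe : x = (p % m + (x - p)) + m * (p / m) := by linarith
    have hmod : x % m = (p % m + (x - p)) % m := by
      conv_lhs => rw [hxe]
      rw [Int.add_mul_emod_self_left]
    rw [ZMod.val_intCast, hmod]
    by_cases hlt : p % m + (x - p) < m
    · left
      exact ⟨Int.emod_eq_of_lt (by linarith) hlt, hlt⟩
    · right
      refine ⟨?_, by linarith⟩
      rw [← Int.sub_emod_right]
      exact Int.emod_eq_of_lt (by linarith) (by linarith)
  unfold crossE
  have kp := key p le_rfl (by linarith)
  have kq := key q (by linarith) (by linarith)
  have kr := key r (by linarith) (by linarith)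
  have ks := key s (by linarith) (by linarith)
  generalize (p : ZMod m).val = P at *
  generalize (q : ZMod m).val = Q at *
  generalize (r : ZMod m).val = R at *
  generalize (s : ZMod m).val = S at *
  generalize p % (m : ℤ) = e at *
  clear key hp
  omega

/-- Cyclic interleaving, read off on the universal cover `ℤ` of the vertex circle. -/
theorem exists_lift_of_crossE {m : ℕ} [NeZero m] {i j a b : ZMod m} (h : crossE i j a b) :
    ∃ p q r s : ℤ, p < q ∧ q < r ∧ r < s ∧ s < p + m ∧
      ((i = p ∧ j = r) ∨ (i = r ∧ j = p)) ∧ ((a = q ∧ b = s) ∨ (a = s ∧ b = q)) := by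
  have e : ∀ x : ZMod m, x = ((x.val : ℤ) : ZMod m) := by intro x; simp
  have e' : ∀ x : ZMod m, x = ((x.val + m : ℤ) : ZMod m) := by intro x; simp
  wlog hij : i.val ≤ j.val generalizing i j
  · obtain ⟨p, q, r, s, h1, h2, h3, h4, h5, h6⟩ :=
      this ((crossE_comm_left _ _ _ _).1 h) (le_of_not_ge hij)
    exact ⟨p, q, r, s, h1, h2, h3, h4, by tauto, h6⟩
  wlog hab : a.val ≤ b.val generalizing a b
  · obtain ⟨p, q, r, s, h1, h2, h3, h4, h5, h6⟩ :=
      this ((crossE_comm_right _ _ _ _).1 h) (le_of_not_ge hab)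
    exact ⟨p, q, r, s, h1, h2, h3, h4, h5, by tauto⟩
  have hi := ZMod.val_lt i
  have hj := ZMod.val_lt j
  have ha := ZMod.val_lt a
  have hb := ZMod.val_lt b
  unfold crossE at h
  rw [min_eq_left hij, max_eq_right hij, min_eq_left hab, max_eq_right hab] at h
  rcases h with h | h
  · exact ⟨i.val, a.val, j.val, b.val, by omega, by omega, by omega, by omega,
      Or.inl ⟨e i, e j⟩, Or.inl ⟨e a, e b⟩⟩
  · exact ⟨i.val, b.val, j.val, a.val + m, by omega, by omega, by omega, by omega,
      Or.inl ⟨e i, e j⟩, Or.inr ⟨e' a, e b⟩⟩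

theorem exists_int {m : ℕ} (i : ZMod m) : ∃ x : ℤ, i = x :=
  ⟨_, (ZMod.intCast_surjective i).choose_spec.symm⟩

theorem intCast_congr {m : ℕ} {x y : ℤ} (t : ℤ) (h : y = x + m * t) :
    (y : ZMod m) = (x : ZMod m) := by
  subst h; simp

/-- The conditions defining a D-multidissection of `P_{2N}`, with all vertices replaced by
integer labels: chords are pairs of integers modulo `2N`, and crossing means interleaving
within one period. -/
structure LiftD (N : ℕ) (F : DTriple N) : Prop where
  symm : ∀ x y : ℤ, F.1 x y = F.1 y x
  diag : ∀ x : ℤ, F.1 x x = 0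
  diam : ∀ x : ℤ, F.1 x (x + N : ℤ) = 0
  anti : ∀ x y : ℤ, F.1 (x + N : ℤ) (y + N : ℤ) = F.1 x y
  blueAnti : ∀ x : ℤ, F.2.1 (x + N : ℤ) = F.2.1 x
  redAnti : ∀ x : ℤ, F.2.2 (x + N : ℤ) = F.2.2 x
  cross : ∀ p q r s : ℤ, p < q → q < r → r < s → s < p + 2 * N →
    F.1 p r = 0 ∨ F.1 q s = 0
  blueCross : ∀ p q s : ℤ, p < q → q < p + N → p + N < s → s < p + 2 * N →
    F.2.1 p = 0 ∨ F.1 q s = 0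
  redCross : ∀ p q s : ℤ, p < q → q < p + N → p + N < s → s < p + 2 * N →
    F.2.2 p = 0 ∨ F.1 q s = 0
  colors : ∀ x y : ℤ, F.2.1 x ≠ 0 → F.2.2 y ≠ 0 → (N : ℤ) ∣ y - x

theorem eq_or_eq_add_iff {N : ℕ} (x y : ℤ) :
    ((y : ZMod (2 * N)) = x ∨ (y : ZMod (2 * N)) = x + (N : ZMod (2 * N))) ↔
      (N : ℤ) ∣ y - x := by
  have h2 : (x : ZMod (2 * N)) + (N : ZMod (2 * N)) = ((x + N : ℤ) : ZMod (2 * N)) := by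
    push_cast; rfl
  rw [h2, eq_comm, ZMod.intCast_eq_intCast_iff_dvd_sub, @eq_comm _ (y : ZMod (2 * N)),
    ZMod.intCast_eq_intCast_iff_dvd_sub]
  push_cast
  constructor
  · rintro (⟨t, h⟩ | ⟨t, h⟩)
    · exact ⟨2 * t, by linarith⟩
    · exact ⟨2 * t + 1, by linarith⟩
  · rintro ⟨t, h⟩
    rcases Int.even_or_odd' t with ⟨u, rfl | rfl⟩
    · exact Or.inl ⟨u, by linarith⟩
    · exact Or.inr ⟨u, by linarith⟩

/-- The multiplicity function of a monochromatic family of diameters is compatible with the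
chords, checked on integer labels. -/
theorem diam_cross_lift {N : ℕ} (hN : 0 < N) {f : ZMod (2 * N) → ZMod (2 * N) → ℕ}
    {b : ZMod (2 * N) → ℕ} (hsymm : ∀ x y : ℤ, f x y = f y x)
    (hb : ∀ x : ℤ, b (x + N : ℤ) = b x)
    (h : ∀ p q s : ℤ, p < q → q < p + N → p + N < s → s < p + 2 * N →
      b p = 0 ∨ f q s = 0) (a i j : ZMod (2 * N))
    (hc : crossE a (a + (N : ZMod (2 * N))) i j) : b a = 0 ∨ f i j = 0 := by
  have : NeZero (2 * N) := ⟨by omega⟩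
  obtain ⟨p, q, r, s, h1, h2, h3, h4, h5, h6⟩ := exists_lift_of_crossE hc
  push_cast at h4
  have hd : (2 * N : ℤ) ∣ r - p - N := by
    have e : ((r : ℤ) : ZMod (2 * N)) = ((p + N : ℤ) : ZMod (2 * N)) := by
      rcases h5 with ⟨ha, hr⟩ | ⟨ha, hr⟩
      · rw [← hr, ha]; push_cast; rfl
      · push_cast
        rw [← hr, ha, add_assoc]
        have : (N : ZMod (2 * N)) + N = 0 := by
          have h0 := ZMod.natCast_self (2 * N)
          push_cast at h0
          rw [← two_mul]; exact h0
        rw [this, add_zero]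
    have := (ZMod.intCast_eq_intCast_iff_dvd_sub _ _ _).1 e.symm
    push_cast at this
    rwa [sub_sub]
  have hr : r = p + N := by
    have := Int.eq_zero_of_abs_lt_dvd hd (by rw [abs_lt]; constructor <;> linarith)
    linarith
  subst hr
  have hba : b a = b p := by
    rcases h5 with ⟨ha, -⟩ | ⟨ha, -⟩
    · rw [ha]
    · rw [ha, hb]
  have hfij : f i j = f q s := by
    rcases h6 with ⟨rfl, rfl⟩ | ⟨rfl, rfl⟩
    · rfl
    · exact hsymm _ _
  rw [hba, hfij]
  exact h p q s h1 h2 h3 h4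

theorem isDMulti_iff {N : ℕ} (hN : 0 < N) (F : DTriple N) : IsDMulti N F ↔ LiftD N F := by
  have : NeZero (2 * N) := ⟨by omega⟩
  constructor
  · rintro ⟨h1, h2, h3, h4, h5, h6, h7, h8, h9, h10⟩
    have hcr : ∀ p q s : ℤ, p < q → q < p + N → p + N < s → s < p + 2 * N →
        crossE (p : ZMod (2 * N)) (p + (N : ZMod (2 * N))) (q : ZMod (2 * N)) s := by
      intro p q s a1 a2 a3 a4
      have := crossE_of_lt (m := 2 * N) a1 a2 a3 (by push_cast; exact a4)
      push_cast at this
      exact this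
    refine ⟨fun x y => h1 _ _, fun x => h2 _, fun x => ?_, fun x y => ?_, fun x => ?_,
      fun x => ?_, ?_, ?_, ?_, ?_⟩
    · push_cast; exact h3 _
    · push_cast; exact h4 _ _
    · push_cast; exact h5 _
    · push_cast; exact h6 _
    · intro p q r s a1 a2 a3 a4
      exact h7 _ _ _ _ (crossE_of_lt a1 a2 a3 (by push_cast; exact a4))
    · intro p q s a1 a2 a3 a4
      exact h8 _ _ _ (hcr p q s a1 a2 a3 a4)
    · intro p q s a1 a2 a3 a4
      exact h9 _ _ _ (hcr p q s a1 a2 a3 a4)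
    · intro x y hx hy
      exact (eq_or_eq_add_iff x y).1 (h10 _ _ hx hy)
  · rintro ⟨h1, h2, h3, h4, h5, h6, h7, h8, h9, h10⟩
    refine ⟨fun i j => ?_, fun i => ?_, fun i => ?_, fun i j => ?_, fun i => ?_, fun i => ?_,
      ?_, ?_, ?_, ?_⟩
    · obtain ⟨x, rfl⟩ := exists_int i
      obtain ⟨y, rfl⟩ := exists_int j
      exact h1 x y
    · obtain ⟨x, rfl⟩ := exists_int i
      exact h2 x
    · obtain ⟨x, rfl⟩ := exists_int i
      have := h3 x
      push_cast at this
      exact this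
    · obtain ⟨x, rfl⟩ := exists_int i
      obtain ⟨y, rfl⟩ := exists_int j
      have := h4 x y
      push_cast at this
      exact this
    · obtain ⟨x, rfl⟩ := exists_int i
      have := h5 x
      push_cast at this
      exact this
    · obtain ⟨x, rfl⟩ := exists_int i
      have := h6 x
      push_cast at this
      exact this
    · intro i j a b hc
      obtain ⟨p, q, r, s, a1, a2, a3, a4, a5, a6⟩ := exists_lift_of_crossE hc
      have e1 : F.1 i j = F.1 p r := by
        rcases a5 with ⟨rfl, rfl⟩ | ⟨rfl, rfl⟩
        · rfl
        · exact h1 _ _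
      have e2 : F.1 a b = F.1 q s := by
        rcases a6 with ⟨rfl, rfl⟩ | ⟨rfl, rfl⟩
        · rfl
        · exact h1 _ _
      rw [e1, e2]
      exact h7 p q r s a1 a2 a3 (by push_cast at a4; exact a4)
    · exact diam_cross_lift hN h1 h5 h8
    · exact diam_cross_lift hN h1 h6 h9
    · intro a b ha hb
      obtain ⟨x, rfl⟩ := exists_int a
      obtain ⟨y, rfl⟩ := exists_int b
      exact (eq_or_eq_add_iff x y).2 (h10 x y ha hb)

/-! ### Periodicity and short labels -/

/-- Invariance under rotation by `d` vertices with the colors kept, on integer labels. -/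
structure PerD (n d : ℕ) (F : DTriple n) : Prop where
  chord : ∀ x y t : ℤ, F.1 (x + d * t : ℤ) (y + d * t : ℤ) = F.1 x y
  blue : ∀ x t : ℤ, F.2.1 (x + d * t : ℤ) = F.2.1 x
  red : ∀ x t : ℤ, F.2.2 (x + d * t : ℤ) = F.2.2 x

theorem periodic_mul {α : Type*} (g : ℤ → α) (d : ℤ) (h : ∀ x, g (x + d) = g x) (x t : ℤ) :
    g (x + d * t) = g x := by
  have := (show Function.Periodic g d from h).int_mul t x
  rwa [mul_comm] at this

/-- Invariance under a single translation by `d` suffices. -/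
theorem perD_of {n d : ℕ} {F : DTriple n}
    (h1 : ∀ x y : ℤ, F.1 (x + d : ℤ) (y + d : ℤ) = F.1 x y)
    (h2 : ∀ x : ℤ, F.2.1 (x + d : ℤ) = F.2.1 x)
    (h3 : ∀ x : ℤ, F.2.2 (x + d : ℤ) = F.2.2 x) : PerD n d F := by
  refine ⟨fun x y t => ?_, fun x t => ?_, fun x t => ?_⟩
  · have := periodic_mul (fun z : ℤ => F.1 (x + z : ℤ) (y + z : ℤ)) d (fun z => by
      simp only [← add_assoc]; exact h1 _ _) 0 t
    simpa using this
  · exact periodic_mul (fun z : ℤ => F.2.1 z) d h2 x t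
  · exact periodic_mul (fun z : ℤ => F.2.2 z) d h3 x t

theorem dFixed_iff {n d : ℕ} (hd : d % 2 = 0) (F : DTriple n) : DFixed n d F ↔ PerD n d F := by
  unfold DFixed
  simp only [hd, if_true]
  constructor
  · rintro ⟨h1, h2, h3⟩
    refine perD_of (fun x y => ?_) (fun x => ?_) (fun x => ?_)
    · push_cast; exact h1 _ _
    · push_cast; exact h2 _
    · push_cast; exact h3 _
  · rintro ⟨h1, h2, h3⟩
    refine ⟨fun i j => ?_, fun i => ?_, fun i => ?_⟩
    · obtain ⟨x, rfl⟩ := exists_int i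
      obtain ⟨y, rfl⟩ := exists_int j
      have := h1 x y 1
      push_cast at this
      simpa using this
    · obtain ⟨x, rfl⟩ := exists_int i
      have := h2 x 1
      push_cast at this
      simpa using this
    · obtain ⟨x, rfl⟩ := exists_int i
      have := h3 x 1
      push_cast at this
      simpa using this

theorem LiftD.perD {N : ℕ} {F : DTriple N} (h : LiftD N F) : PerD N N F :=
  perD_of h.anti h.blueAnti h.redAnti

/-- Every pair of vertices of `P_{2N}` has integer labels at distance at most `N`. -/
theorem exists_near {N : ℕ} (hN : 0 < N) (i j : ZMod (2 * N)) :
    ∃ x y : ℤ, i = x ∧ j = y ∧ -N < y - x ∧ y - x ≤ N := by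
  have : NeZero (2 * N) := ⟨by omega⟩
  obtain ⟨x, rfl⟩ := exists_int i
  have h := ZMod.valMinAbs_mem_Ioc (j - (x : ZMod (2 * N)))
  obtain ⟨h1, h2⟩ := h
  push_cast at h1 h2
  refine ⟨x, x + (j - (x : ZMod (2 * N))).valMinAbs, rfl, ?_, by linarith, by linarith⟩
  rw [Int.cast_add, ZMod.coe_valMinAbs]
  ring

theorem valMinAbs_sub {N : ℕ} (hN : 0 < N) {x y : ℤ} (h1 : -N < y - x) (h2 : y - x ≤ N) :
    ((y : ZMod (2 * N)) - (x : ZMod (2 * N))).valMinAbs = y - x := by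
  have : NeZero (2 * N) := ⟨by omega⟩
  rw [ZMod.valMinAbs_spec]
  refine ⟨by push_cast; rfl, ?_, ?_⟩ <;> push_cast <;> linarith

/-! ### Folding and unfolding -/

/-- Folding: chords of length less than `d` are kept, the chord `{a, a+d}` of length `d`
becomes the blue diameter together with the red diameter at `a`, and diameters keep their
color. -/
def foldD (n d : ℕ) (F : DTriple n) : DTriple d :=
  (fun i j => if (j - i).valMinAbs = d then 0 else
      F.1 ((i.val : ℤ) : ZMod (2 * n)) (((i.val : ℤ) + (j - i).valMinAbs : ℤ) : ZMod (2 * n)),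
   fun a => F.2.1 ((a.val : ℤ) : ZMod (2 * n)) +
      F.1 ((a.val : ℤ) : ZMod (2 * n)) ((a.val + d : ℤ) : ZMod (2 * n)),
   fun a => F.2.2 ((a.val : ℤ) : ZMod (2 * n)) +
      F.1 ((a.val : ℤ) : ZMod (2 * n)) ((a.val + d : ℤ) : ZMod (2 * n)))

/-- Unfolding: chords of length less than `d` are lifted to all their translates, and each
pair consisting of a blue and a red diameter at `a` is lifted to the translates of the chord
`{a, a+d}`; the remaining diameters keep their color. -/
def unfoldD (n d : ℕ) (G : DTriple d) : DTriple n :=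
  (fun i j => if |(j - i).valMinAbs| < d then
      G.1 ((i.val : ℤ) : ZMod (2 * d)) ((j.val : ℤ) : ZMod (2 * d))
    else if |(j - i).valMinAbs| = d then
      min (G.2.1 ((i.val : ℤ) : ZMod (2 * d))) (G.2.2 ((i.val : ℤ) : ZMod (2 * d)))
    else 0,
   fun a => G.2.1 ((a.val : ℤ) : ZMod (2 * d)) -
      min (G.2.1 ((a.val : ℤ) : ZMod (2 * d))) (G.2.2 ((a.val : ℤ) : ZMod (2 * d))),
   fun a => G.2.2 ((a.val : ℤ) : ZMod (2 * d)) -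
      min (G.2.1 ((a.val : ℤ) : ZMod (2 * d))) (G.2.2 ((a.val : ℤ) : ZMod (2 * d))))

section Values

variable {n d : ℕ}

theorem val_eq_sub (hd : 0 < d) (x : ℤ) :
    (((x : ZMod (2 * d)).val : ℤ)) = x + d * (-(2 * (x / (2 * d)))) := by
  have : NeZero (2 * d) := ⟨by omega⟩
  rw [ZMod.val_intCast]
  push_cast
  have := Int.emod_add_mul_ediv x (2 * d)
  linarith

theorem fold_near (hd : 0 < d) {F : DTriple n} (hp : PerD n d F) {x y : ℤ}
    (h1 : -d < y - x) (h2 : y - x < d) : (foldD n d F).1 x y = F.1 x y := by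
  unfold foldD
  dsimp only
  rw [valMinAbs_sub hd h1 h2.le, if_neg h2.ne, val_eq_sub hd]
  set t : ℤ := -(2 * (x / (2 * d)))
  have : x + d * t + (y - x) = y + d * t := by ring
  rw [this, hp.chord]

theorem fold_diam (hd : 0 < d) (F : DTriple n) (x : ℤ) :
    (foldD n d F).1 x (x + d : ℤ) = 0 := by
  unfold foldD
  dsimp only
  rw [valMinAbs_sub hd (by linarith) (by linarith), if_pos (by ring)]

theorem fold_blue (hd : 0 < d) {F : DTriple n} (hp : PerD n d F) (x : ℤ) :
    (foldD n d F).2.1 x = F.2.1 x + F.1 x (x + d : ℤ) := by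
  unfold foldD
  dsimp only
  rw [val_eq_sub hd, add_right_comm, hp.chord, hp.blue]

theorem fold_red (hd : 0 < d) {F : DTriple n} (hp : PerD n d F) (x : ℤ) :
    (foldD n d F).2.2 x = F.2.2 x + F.1 x (x + d : ℤ) := by
  unfold foldD
  dsimp only
  rw [val_eq_sub hd, add_right_comm, hp.chord, hp.red]

theorem val_cast (hn : 0 < n) (hdn : d ∣ n) (x : ℤ) :
    ((((x : ZMod (2 * n)).val : ℤ)) : ZMod (2 * d)) = x := by
  obtain ⟨m, rfl⟩ := hdn
  rw [val_eq_sub hn]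
  refine intCast_congr (-(m * (x / (2 * ((d * m : ℕ) : ℤ))))) ?_
  push_cast
  ring

theorem unfold_near (hn : 0 < n) (hdn : d ∣ n) (hle : d ≤ n) (G : DTriple d) {x y : ℤ}
    (h1 : -d < y - x) (h2 : y - x < d) : (unfoldD n d G).1 x y = G.1 x y := by
  unfold unfoldD
  dsimp only
  have hle' : (d : ℤ) ≤ n := by exact_mod_cast hle
  rw [valMinAbs_sub hn (by linarith) (by linarith), if_pos (abs_lt.2 ⟨h1, h2⟩),
    val_cast hn hdn, val_cast hn hdn]

theorem unfold_loop (hn : 0 < n) (hdn : d ∣ n) (hlt : d < n) (G : DTriple d) {x y : ℤ}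
    (h : |y - x| = d) : (unfoldD n d G).1 x y = min (G.2.1 x) (G.2.2 x) := by
  unfold unfoldD
  dsimp only
  have hlt' : (d : ℤ) < n := by exact_mod_cast hlt
  have := abs_le.1 h.le
  rw [valMinAbs_sub hn (by linarith) (by linarith), if_neg h.not_lt, if_pos h,
    val_cast hn hdn]

theorem unfold_far (hn : 0 < n) (G : DTriple d) {x y : ℤ} (h : d < |y - x|)
    (h1 : -n < y - x) (h2 : y - x ≤ n) : (unfoldD n d G).1 x y = 0 := by
  unfold unfoldD
  dsimp only
  rw [valMinAbs_sub hn h1 h2, if_neg (not_lt.2 h.le), if_neg h.ne']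

theorem unfold_blue (hn : 0 < n) (hdn : d ∣ n) (G : DTriple d) (x : ℤ) :
    (unfoldD n d G).2.1 x = G.2.1 x - min (G.2.1 x) (G.2.2 x) := by
  unfold unfoldD
  dsimp only
  rw [val_cast hn hdn]

theorem unfold_red (hn : 0 < n) (hdn : d ∣ n) (G : DTriple d) (x : ℤ) :
    (unfoldD n d G).2.2 x = G.2.2 x - min (G.2.1 x) (G.2.2 x) := by
  unfold unfoldD
  dsimp only
  rw [val_cast hn hdn]

end Values

/-! ### Noncrossing conditions under folding and unfolding -/

section Crossings

variable {n d : ℕ}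

/-- If every chord of nonzero multiplicity has a side of length at most `e`, crossings need
only be checked for two arcs of length at most `e`. -/
theorem cross_of_short {N : ℕ} {F : DTriple N} {e : ℤ}
    (hsymm : ∀ x y : ℤ, F.1 x y = F.1 y x)
    (hS : ∀ p r : ℤ, p < r → r < p + 2 * N → F.1 p r ≠ 0 → r - p ≤ e ∨ p + 2 * N - r ≤ e)
    (hC : ∀ u w v z : ℤ, u < w → w < v → v < z → v - u ≤ e → z - w ≤ e →
      F.1 u v = 0 ∨ F.1 w z = 0)
    (p q r s : ℤ) (h1 : p < q) (h2 : q < r) (h3 : r < s) (h4 : s < p + 2 * N) :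
    F.1 p r = 0 ∨ F.1 q s = 0 := by
  by_contra hne
  push Not at hne
  obtain ⟨n1, n2⟩ := hne
  have sh : ∀ x : ℤ, ((x + 2 * N : ℤ) : ZMod (2 * N)) = x := fun x =>
    intCast_congr 1 (by push_cast; ring)
  have l1 : F.1 (r : ℤ) (p + 2 * N : ℤ) ≠ 0 := by rwa [sh, hsymm]
  have l2 : F.1 (s : ℤ) (q + 2 * N : ℤ) ≠ 0 := by rwa [sh, hsymm]
  have l3 : F.1 (p + 2 * N : ℤ) (r + 2 * N : ℤ) ≠ 0 := by rwa [sh, sh]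
  rcases hS p r (by linarith) (by linarith) n1 with a | a <;>
    rcases hS q s (by linarith) (by linarith) n2 with b | b
  · exact (hC p q r s h1 h2 h3 a b).elim n1 n2
  · exact (hC s (p + 2 * N) (q + 2 * N) (r + 2 * N) (by linarith) (by linarith) (by linarith)
      (by linarith) (by linarith)).elim l2 l3
  · exact (hC q r s (p + 2 * N) (by linarith) (by linarith) (by linarith)
      (by linarith) (by linarith)).elim n2 l1
  · exact (hC r s (p + 2 * N) (q + 2 * N) (by linarith) (by linarith) (by linarith)
      (by linarith) (by linarith)).elim l1 l2

/-- If every chord of nonzero multiplicity has a side of length at most `e`, a diameter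
crosses it only when one of its two ends lies inside that side. -/
theorem diamCross_of_short {N : ℕ} {F : DTriple N} {e : ℤ} {b : ZMod (2 * N) → ℕ}
    (hsymm : ∀ x y : ℤ, F.1 x y = F.1 y x) (hb : ∀ x : ℤ, b (x + N : ℤ) = b x)
    (hS : ∀ p r : ℤ, p < r → r < p + 2 * N → F.1 p r ≠ 0 → r - p ≤ e ∨ p + 2 * N - r ≤ e)
    (hC : ∀ w c z : ℤ, w < c → c < z → z - w ≤ e → b c = 0 ∨ F.1 w z = 0)
    (p q s : ℤ) (h1 : p < q) (h2 : q < p + N) (h3 : p + N < s) (h4 : s < p + 2 * N) :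
    b p = 0 ∨ F.1 q s = 0 := by
  by_contra hne
  push Not at hne
  obtain ⟨n1, n2⟩ := hne
  have sh : ∀ x : ℤ, ((x + 2 * N : ℤ) : ZMod (2 * N)) = x := fun x =>
    intCast_congr 1 (by push_cast; ring)
  rcases hS q s (by linarith) (by linarith) n2 with a | a
  · exact (hC q (p + N) s h2 h3 a).elim (by rwa [hb]) n2
  · refine (hC s (p + 2 * N) (q + 2 * N) h4 (by linarith) a).elim ?_ ?_
    · rwa [sh]
    · rwa [sh, hsymm]

/-- A blue diameter with an end `c` inside a short interval `(w, z)` crosses the chord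
`{w, z}`. -/
theorem LiftD.blueCross' {N : ℕ} {F : DTriple N} (h : LiftD N F) {w c z : ℤ} (h1 : w < c)
    (h2 : c < z) (h3 : z < c + N) (h4 : c - N < w) : F.2.1 c = 0 ∨ F.1 w z = 0 := by
  have := h.blueCross (c - N) w z h4 (by linarith) (by linarith) (by linarith)
  rwa [← h.blueAnti, sub_add_cancel] at this

theorem LiftD.redCross' {N : ℕ} {F : DTriple N} (h : LiftD N F) {w c z : ℤ} (h1 : w < c)
    (h2 : c < z) (h3 : z < c + N) (h4 : c - N < w) : F.2.2 c = 0 ∨ F.1 w z = 0 := by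
  have := h.redCross (c - N) w z h4 (by linarith) (by linarith) (by linarith)
  rwa [← h.redAnti, sub_add_cancel] at this

/-- A chord longer than `d` on both sides crosses its own translate by `d`. -/
theorem LiftD.long_eq_zero {F : DTriple n} (h : LiftD n F) (hp : PerD n d F) (hd : 0 < d)
    {x y : ℤ} (h1 : d < y - x) (h2 : y - x < 2 * n - d) : F.1 x y = 0 := by
  have hd' : (0 : ℤ) < d := by exact_mod_cast hd
  have := h.cross x (x + d) y (y + d) (by linarith) (by linarith) (by linarith) (by linarith)
  have e := hp.chord x y 1
  rw [mul_one] at e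
  rwa [e, or_self] at this

/-- A diameter of one color crosses the translates by `d` of the same diameter in the other
color. -/
theorem LiftD.mono {F : DTriple n} (h : LiftD n F) (hp : PerD n d F) (hd : 0 < d)
    (hlt : d < n) (x : ℤ) : F.2.1 x = 0 ∨ F.2.2 x = 0 := by
  by_contra hne
  push Not at hne
  have e := hp.blue x 1
  rw [mul_one] at e
  have := h.colors (x + d) x (by rw [e]; exact hne.1) hne.2
  have hz := Int.eq_zero_of_abs_lt_dvd this (by rw [abs_lt]; constructor <;> linarith)
  linarith [(by exact_mod_cast hd : (0 : ℤ) < d)]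

/-- Folding preserves the noncrossing conditions. A diameter of the folded dissection at `c`
comes from a diameter or from a loop at `c`, and either one crosses upstairs whatever the folded
diameter crosses downstairs. -/
theorem LiftD.fold (hd : 0 < d) (hlt : d < n) {F : DTriple n} (h : LiftD n F)
    (hp : PerD n d F) : LiftD d (foldD n d F) := by
  have hd' : (0 : ℤ) < d := by exact_mod_cast hd
  have hlt' : (d : ℤ) < n := by exact_mod_cast hlt
  have sh2 : ∀ x : ℤ, ((x + 2 * d : ℤ) : ZMod (2 * d)) = x := fun x =>
    intCast_congr 1 (by push_cast; ring)
  have cases : ∀ (P : ZMod (2 * d) → ZMod (2 * d) → Prop),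
      (∀ x y : ℤ, -d < y - x → y - x < d → P x y) → (∀ x : ℤ, P x (x + d : ℤ)) →
      ∀ i j, P i j := by
    intro P h1 h2 i j
    obtain ⟨x, y, rfl, rfl, a, b⟩ := exists_near hd i j
    rcases b.lt_or_eq with b | b
    · exact h1 x y a b
    · obtain rfl : y = x + d := by linarith
      exact h2 x
  have anti : ∀ x y : ℤ, F.1 (x + d : ℤ) (y + d : ℤ) = F.1 x y := fun x y => by
    simpa using hp.chord x y 1
  have bl : ∀ x : ℤ, F.2.1 (x + d : ℤ) = F.2.1 x := fun x => by simpa using hp.blue x 1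
  have re : ∀ x : ℤ, F.2.2 (x + d : ℤ) = F.2.2 x := fun x => by simpa using hp.red x 1
  have symm : ∀ x y : ℤ, (foldD n d F).1 x y = (foldD n d F).1 y x := by
    intro x y
    refine cases (fun i j => (foldD n d F).1 i j = (foldD n d F).1 j i) ?_ ?_ _ _
    · intro x y h1 h2
      rw [fold_near hd hp h1 h2, fold_near hd hp (by linarith) (by linarith), h.symm]
    · intro x
      have := fold_diam hd F (x + d)
      rw [add_assoc, ← two_mul, sh2] at this
      rw [fold_diam hd, this]
  have hblue : ∀ x : ℤ, (foldD n d F).2.1 (x + d : ℤ) = (foldD n d F).2.1 x := by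
    intro x
    rw [fold_blue hd hp, fold_blue hd hp, bl, anti]
  have hred : ∀ x : ℤ, (foldD n d F).2.2 (x + d : ℤ) = (foldD n d F).2.2 x := by
    intro x
    rw [fold_red hd hp, fold_red hd hp, re, anti]
  have short : ∀ p r : ℤ, p < r → r < p + 2 * d → (foldD n d F).1 p r ≠ 0 →
      r - p ≤ d - 1 ∨ p + 2 * d - r ≤ (d : ℤ) - 1 := by
    intro p r h1 h2 h3
    by_contra hne
    push Not at hne
    obtain rfl : r = p + d := by omega
    exact h3 (fold_diam hd F p)
  -- a loop `{c, c+d}` crosses every short chord around `c`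
  have loop : ∀ w c z : ℤ, w < c → c < z → z - w ≤ (d : ℤ) - 1 →
      F.1 c (c + d : ℤ) = 0 ∨ F.1 w z = 0 := by
    intro w c z h1 h2 h3
    exact (h.cross w c z (c + d) h1 h2 (by linarith) (by linarith)).symm
  refine ⟨symm, ?_, fold_diam hd F, ?_, hblue, hred, ?_, ?_, ?_, ?_⟩
  · intro x
    rw [fold_near hd hp (by linarith) (by linarith), h.diag]
  · intro x y
    have := cases (fun i j => (foldD n d F).1 (i + d) (j + d) = (foldD n d F).1 i j)
      ?_ ?_ x y
    · push_cast
      exact this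
    · intro x y h1 h2
      have := fold_near (x := x + d) (y := y + d) hd hp (by linarith) (by linarith)
      push_cast at this
      rw [this, fold_near hd hp h1 h2]
      have := anti x y
      push_cast at this
      exact this
    · intro x
      have := fold_diam hd F (x + d)
      rw [fold_diam hd]
      push_cast at this ⊢
      exact this
  · refine cross_of_short symm short ?_
    intro u w v z h1 h2 h3 h4 h5
    rw [fold_near hd hp (by linarith) (by linarith), fold_near hd hp (by linarith) (by linarith)]
    exact h.cross u w v z h1 h2 h3 (by linarith)
  · refine diamCross_of_short symm hblue short ?_
    intro w c z h1 h2 h3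
    rw [fold_blue hd hp, fold_near hd hp (by linarith) (by linarith)]
    have a1 := loop w c z h1 h2 h3
    have a2 := h.blueCross' h1 h2 (by linarith) (by linarith)
    omega
  · refine diamCross_of_short symm hred short ?_
    intro w c z h1 h2 h3
    rw [fold_red hd hp, fold_near hd hp (by linarith) (by linarith)]
    have a1 := loop w c z h1 h2 h3
    have a2 := h.redCross' h1 h2 (by linarith) (by linarith)
    omega
  · intro x y hx hy
    by_contra hdvd
    -- replace `y` by its translate in the open interval `(x, x + d)`
    obtain ⟨y', t, hy', h1, h2⟩ : ∃ y' t : ℤ, y = y' + d * t ∧ x < y' ∧ y' < x + d := by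
      refine ⟨x + (y - x) % d, (y - x) / d, ?_, ?_, ?_⟩
      · linarith [Int.emod_add_mul_ediv (y - x) d]
      · have := Int.emod_nonneg (y - x) hd'.ne'
        have : (y - x) % d ≠ 0 := fun h0 => hdvd (Int.dvd_of_emod_eq_zero h0)
        omega
      · linarith [Int.emod_lt_of_pos (y - x) hd']
    rw [fold_blue hd hp] at hx
    rw [fold_red hd hp, hy', add_right_comm, hp.chord, hp.red] at hy
    have c1 : F.2.1 x = 0 ∨ F.2.2 y' = 0 := by
      by_contra hne
      push Not at hne
      have := Int.eq_zero_of_abs_lt_dvd (h.colors x y' hne.1 hne.2)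
        (by rw [abs_lt]; constructor <;> linarith)
      linarith
    have c2 : F.2.1 x = 0 ∨ F.1 y' (y' + d : ℤ) = 0 := by
      rw [← bl]
      exact h.blueCross' h2 (by linarith) (by linarith) (by linarith)
    have c3 := h.redCross' (w := x) (c := y') (z := x + d) h1 h2 (by linarith) (by linarith)
    have c4 := h.cross x y' (x + d) (y' + d) h1 h2 (by linarith) (by linarith)
    omega

/-- Unfolding preserves the noncrossing conditions and gives an invariant dissection. A loop at
`c` has positive multiplicity only if both colors occur at `c`, so it crosses nothing. -/
theorem LiftD.unfold (hd : 0 < d) (hlt : d < n) (hdn : d ∣ n) {G : DTriple d}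
    (h : LiftD d G) : LiftD n (unfoldD n d G) ∧ PerD n d (unfoldD n d G) := by
  have hn : 0 < n := hd.trans hlt
  have hd' : (0 : ℤ) < d := by exact_mod_cast hd
  have hlt' : (d : ℤ) < n := by exact_mod_cast hlt
  have hp := h.perD
  have cases : ∀ (P : ZMod (2 * n) → ZMod (2 * n) → Prop),
      (∀ x y : ℤ, -d < y - x → y - x < d → P x y) →
      (∀ x y : ℤ, |y - x| = d → P x y) →
      (∀ x y : ℤ, d < |y - x| → -n < y - x → y - x ≤ n → P x y) →
      ∀ i j, P i j := by
    intro P h1 h2 h3 i j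
    obtain ⟨x, y, rfl, rfl, a, b⟩ := exists_near hn i j
    rcases lt_trichotomy |y - x| d with c | c | c
    · exact h1 x y (abs_lt.1 c).1 (abs_lt.1 c).2
    · exact h2 x y c
    · exact h3 x y c a b
  have bl : ∀ x : ℤ, G.2.1 (x + d : ℤ) = G.2.1 x := h.blueAnti
  have re : ∀ x : ℤ, G.2.2 (x + d : ℤ) = G.2.2 x := h.redAnti
  have far : ∀ x y : ℤ, d < y - x → y - x < 2 * n - d → (unfoldD n d G).1 x y = 0 := by
    intro x y h1 h2
    by_cases hyx : y - x ≤ n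
    · exact unfold_far hn G (by rwa [abs_of_pos (by linarith)]) (by linarith) hyx
    · have e : ((y - 2 * n : ℤ) : ZMod (2 * n)) = y := intCast_congr (-1) (by push_cast; ring)
      rw [← e]
      refine unfold_far hn G ?_ (by linarith) (by linarith)
      rw [abs_of_neg (by linarith)]
      linarith
  have symm : ∀ x y : ℤ, (unfoldD n d G).1 x y = (unfoldD n d G).1 y x := by
    intro x y
    refine cases (fun i j => (unfoldD n d G).1 i j = (unfoldD n d G).1 j i) ?_ ?_ ?_ _ _
    · intro x y h1 h2
      rw [unfold_near hn hdn hlt.le G h1 h2,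
        unfold_near hn hdn hlt.le G (by linarith) (by linarith), h.symm]
    · intro x y h1
      rw [unfold_loop hn hdn hlt G h1, unfold_loop hn hdn hlt G (by rwa [abs_sub_comm])]
      rcases (abs_eq hd'.le).1 h1 with e | e
      · obtain rfl : y = x + d := by linarith
        rw [bl, re]
      · obtain rfl : x = y + d := by linarith
        rw [bl, re]
    · intro x y h1 h2 h3
      rw [unfold_far hn G h1 h2 h3]
      rcases lt_or_ge (y - x) 0 with e | e
      · rw [abs_of_neg e] at h1
        rw [far y x (by linarith) (by linarith)]
      · rw [abs_of_nonneg e] at h1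
        have e : ((x + 2 * n : ℤ) : ZMod (2 * n)) = x := intCast_congr 1 (by push_cast; ring)
        rw [← e, far y (x + 2 * n) (by linarith) (by linarith)]
  have hper : PerD n d (unfoldD n d G) := by
    refine perD_of (fun x y => ?_) (fun x => ?_) (fun x => ?_)
    · have := cases (fun i j => (unfoldD n d G).1 (i + d) (j + d) = (unfoldD n d G).1 i j)
        ?_ ?_ ?_ x y
      · push_cast
        exact this
      · intro x y h1 h2
        have := unfold_near (x := x + d) (y := y + d) hn hdn hlt.le G (by linarith) (by linarith)
        push_cast at this
        rw [this, unfold_near hn hdn hlt.le G h1 h2]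
        have := h.anti x y
        push_cast at this
        exact this
      · intro x y h1
        have := unfold_loop (x := x + d) (y := y + d) hn hdn hlt G
          (by rwa [add_sub_add_right_eq_sub])
        rw [bl, re] at this
        push_cast at this
        rw [this, unfold_loop hn hdn hlt G h1]
      · intro x y h1 h2 h3
        have := unfold_far (x := x + d) (y := y + d) hn G
          (by rwa [add_sub_add_right_eq_sub]) (by linarith) (by linarith)
        push_cast at this
        rw [this, unfold_far hn G h1 h2 h3]
    · rw [unfold_blue hn hdn, unfold_blue hn hdn, bl, re]
    · rw [unfold_red hn hdn, unfold_red hn hdn, bl, re]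
  refine ⟨?_, hper⟩
  obtain ⟨m, hm⟩ := id hdn
  have hm' : (n : ℤ) = d * m := by exact_mod_cast hm
  have hblue : ∀ x : ℤ, (unfoldD n d G).2.1 (x + n : ℤ) = (unfoldD n d G).2.1 x := by
    intro x
    rw [hm', hper.blue]
  have hred : ∀ x : ℤ, (unfoldD n d G).2.2 (x + n : ℤ) = (unfoldD n d G).2.2 x := by
    intro x
    rw [hm', hper.red]
  have short : ∀ p r : ℤ, p < r → r < p + 2 * n → (unfoldD n d G).1 p r ≠ 0 →
      r - p ≤ d ∨ p + 2 * n - r ≤ (d : ℤ) := by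
    intro p r h1 h2 h3
    by_contra hne
    push Not at hne
    exact h3 (far p r (by linarith) (by linarith))
  have near : ∀ u v : ℤ, u < v → v < u + d → (unfoldD n d G).1 u v = G.1 u v :=
    fun u v h1 h2 => unfold_near hn hdn hlt.le G (by linarith) (by linarith)
  have loop : ∀ u : ℤ, (unfoldD n d G).1 u (u + d : ℤ) = min (G.2.1 u) (G.2.2 u) :=
    fun u => unfold_loop hn hdn hlt G (by rw [add_sub_cancel_left, abs_of_pos hd'])
  -- diameters of both colors at distinct positions of `P_{2d}` exclude each other
  have excl : ∀ x y : ℤ, x ≠ y → |y - x| < d → G.2.1 x = 0 ∨ G.2.2 y = 0 := by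
    intro x y hxy hab
    by_contra hne
    push Not at hne
    exact hxy (by linarith [Int.eq_zero_of_abs_lt_dvd (h.colors x y hne.1 hne.2) hab])
  have split : ∀ w z : ℤ, z - w ≤ d → z < w + d ∨ z = w + d := by
    intro w z hz
    rcases hz.lt_or_eq with c | c
    · left; linarith
    · right; linarith
  refine ⟨symm, ?_, ?_, ?_, hblue, hred, ?_, ?_, ?_, ?_⟩
  · intro x
    rw [unfold_near hn hdn hlt.le G (by linarith) (by linarith), h.diag]
  · intro x
    exact far _ _ (by linarith) (by linarith)
  · intro x y
    rw [hm', hper.chord]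
  · refine cross_of_short symm short ?_
    intro u w v z h1 h2 h3 h4 h5
    rcases split u v h4 with a | rfl <;> rcases split w z h5 with b | rfl
    · rw [near u v (by linarith) a, near w z (by linarith) b]
      exact h.cross u w v z h1 h2 h3 (by linarith)
    · rw [near u v (by linarith) a, loop]
      have := h.blueCross' (w := u) (c := w) (z := v) h1 h2 (by linarith) (by linarith)
      omega
    · rw [near w z (by linarith) b, loop]
      have := h.blueCross' (w := w) (c := u + d) (z := z) h2 h3 (by linarith) (by linarith)
      rw [bl] at this
      omega
    · rw [loop, loop]
      have := excl u w h1.ne (by rw [abs_lt]; constructor <;> linarith)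
      omega
  · refine diamCross_of_short symm hblue short ?_
    intro w c z h1 h2 h3
    rw [unfold_blue hn hdn]
    rcases split w z h3 with b | rfl
    · rw [near w z (by linarith) b]
      have := h.blueCross' h1 h2 (by linarith) (by linarith)
      omega
    · rw [loop]
      have := excl c w h1.ne' (by rw [abs_lt]; constructor <;> linarith)
      omega
  · refine diamCross_of_short symm hred short ?_
    intro w c z h1 h2 h3
    rw [unfold_red hn hdn]
    rcases split w z h3 with b | rfl
    · rw [near w z (by linarith) b]
      have := h.redCross' h1 h2 (by linarith) (by linarith)
      omega
    · rw [loop]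
      have := excl w c h1.ne (by rw [abs_lt]; constructor <;> linarith)
      omega
  · -- the surplus diameters of the two colors cannot both survive at one position
    intro x y hx hy
    exfalso
    rw [unfold_blue hn hdn] at hx
    rw [unfold_red hn hdn] at hy
    obtain ⟨t, ht⟩ := h.colors x y (by omega) (by omega)
    obtain rfl : y = x + d * t := by linarith
    rw [hp.blue, hp.red] at hy
    omega

/-- The loop multiplicity `ℓ` is recovered because `min (b + ℓ) (r + ℓ) = ℓ` when only one of
the diameter multiplicities `b`, `r` is nonzero. -/
theorem unfold_fold (hd : 0 < d) (hlt : d < n) (hdn : d ∣ n) {F : DTriple n}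
    (h : LiftD n F) (hp : PerD n d F) : unfoldD n d (foldD n d F) = F := by
  have hn : 0 < n := hd.trans hlt
  have hd' : (0 : ℤ) < d := by exact_mod_cast hd
  have hlt' : (d : ℤ) < n := by exact_mod_cast hlt
  refine Prod.ext ?_ (Prod.ext ?_ ?_)
  · funext i j
    obtain ⟨x, y, rfl, rfl, a, b⟩ := exists_near hn i j
    rcases lt_trichotomy |y - x| d with c | c | c
    · obtain ⟨c1, c2⟩ := abs_lt.1 c
      rw [unfold_near hn hdn hlt.le _ c1 c2, fold_near hd hp c1 c2]
    · rw [unfold_loop hn hdn hlt _ c, fold_blue hd hp, fold_red hd hp]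
      have e : F.1 x y = F.1 x (x + d : ℤ) := by
        rcases (abs_eq hd'.le).1 c with e | e
        · obtain rfl : y = x + d := by linarith
          rfl
        · obtain rfl : x = y + d := by linarith
          have := hp.chord y (y + d) 1
          rw [mul_one] at this
          rw [this, h.symm]
      have := h.mono hp hd hlt x
      omega
    · rw [unfold_far hn _ c a b]
      rcases lt_or_ge (y - x) 0 with e | e
      · rw [abs_of_neg e] at c
        rw [h.symm, h.long_eq_zero hp hd (by linarith) (by linarith)]
      · rw [abs_of_nonneg e] at c
        rw [h.long_eq_zero hp hd (by linarith) (by linarith)]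
  · funext i
    obtain ⟨x, rfl⟩ := exists_int i
    rw [unfold_blue hn hdn, fold_blue hd hp, fold_red hd hp]
    have := h.mono hp hd hlt x
    omega
  · funext i
    obtain ⟨x, rfl⟩ := exists_int i
    rw [unfold_red hn hdn, fold_blue hd hp, fold_red hd hp]
    have := h.mono hp hd hlt x
    omega

theorem fold_unfold (hd : 0 < d) (hlt : d < n) (hdn : d ∣ n) {G : DTriple d}
    (h : LiftD d G) : foldD n d (unfoldD n d G) = G := by
  have hn : 0 < n := hd.trans hlt
  have hd' : (0 : ℤ) < d := by exact_mod_cast hd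
  have hp := (h.unfold hd hlt hdn).2
  have loop : ∀ u : ℤ, (unfoldD n d G).1 u (u + d : ℤ) = min (G.2.1 u) (G.2.2 u) :=
    fun u => unfold_loop hn hdn hlt G (by rw [add_sub_cancel_left, abs_of_pos hd'])
  refine Prod.ext ?_ (Prod.ext ?_ ?_)
  · funext i j
    obtain ⟨x, y, rfl, rfl, a, b⟩ := exists_near hd i j
    rcases b.lt_or_eq with b | b
    · rw [fold_near hd hp a b, unfold_near hn hdn hlt.le G a b]
    · obtain rfl : y = x + d := by linarith
      rw [fold_diam hd, h.diam]
  · funext i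
    obtain ⟨x, rfl⟩ := exists_int i
    rw [fold_blue hd hp, unfold_blue hn hdn, loop]
    omega
  · funext i
    obtain ⟨x, rfl⟩ := exists_int i
    rw [fold_red hd hp, unfold_red hn hdn, loop]
    omega

end Crossings

/-! ### Counting edges -/

section Counting

variable {n d : ℕ}

theorem two_mul_sum_lt (M : ℕ) (g : ℕ → ℕ → ℕ) (hs : ∀ i j, g i j = g j i)
    (h0 : ∀ i, g i i = 0) :
    2 * (∑ i ∈ range M, ∑ j ∈ range M, if i < j then g i j else 0) =
      ∑ i ∈ range M, ∑ j ∈ range M, g i j := by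
  have e : (∑ i ∈ range M, ∑ j ∈ range M, if i < j then g i j else 0) =
      ∑ i ∈ range M, ∑ j ∈ range M, if j < i then g i j else 0 := by
    rw [sum_comm]
    simp only [hs]
  rw [two_mul]
  nth_rewrite 2 [e]
  simp only [← sum_add_distrib]
  refine sum_congr rfl fun i _ => sum_congr rfl fun j _ => ?_
  rcases lt_trichotomy i j with h | rfl | h
  · simp [h, h.not_gt]
  · simp [h0]
  · simp [h, h.not_gt]

theorem sum_range_eq_univ {M : ℕ} [NeZero M] (g : ZMod M → ℕ) :
    ∑ j ∈ range M, g (j : ZMod M) = ∑ z : ZMod M, g z := by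
  refine sum_of_injOn (fun j : ℕ => (j : ZMod M)) ?_ ?_ ?_ ?_
  · intro a ha b hb hab
    have h1 := ZMod.val_cast_of_lt (mem_range.1 ha)
    have h2 := ZMod.val_cast_of_lt (mem_range.1 hb)
    rw [← h1, ← h2]
    exact congrArg ZMod.val hab
  · intro a _
    exact mem_coe.2 (mem_univ _)
  · intro z _ hz
    exact (hz ⟨z.val, mem_coe.2 (mem_range.2 (ZMod.val_lt z)), by simp⟩).elim
  · intro i _
    rfl

/-- A sum over the vertices seen from `x`, restricted to a set of displacements that are
distinct modulo `M` and carry the whole support. -/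
theorem sum_range_eq_displacements {M : ℕ} [NeZero M] (g : ZMod M → ℕ) (x a b : ℤ)
    (hab : b - a < M) (h : ∀ z, g z ≠ 0 → ∃ s : ℤ, a ≤ s ∧ s ≤ b ∧ z = (x + s : ℤ)) :
    ∑ j ∈ range M, g (j : ZMod M) = ∑ s ∈ Icc a b, g (x + s : ℤ) := by
  rw [sum_range_eq_univ]
  symm
  refine sum_of_injOn (fun s : ℤ => ((x + s : ℤ) : ZMod M)) ?_ ?_ ?_ ?_
  · intro s hs t ht hst
    have hs := mem_Icc.1 hs
    have ht := mem_Icc.1 ht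
    have := Int.eq_zero_of_abs_lt_dvd ((ZMod.intCast_eq_intCast_iff_dvd_sub _ _ _).1 hst)
      (by rw [abs_lt]; constructor <;> linarith)
    linarith
  · intro s _
    exact mem_coe.2 (mem_univ _)
  · intro z _ hz
    by_contra hne
    obtain ⟨s, h1, h2, rfl⟩ := h z hne
    exact hz ⟨s, mem_coe.2 (mem_Icc.2 ⟨h1, h2⟩), rfl⟩
  · intro s _
    rfl

theorem sum_range_periodic (h : ℕ → ℕ) (K m : ℕ) (hK : K = d * m)
    (hper : ∀ x t, h (d * t + x) = h x) :
    ∑ x ∈ range K, h x = m * ∑ x ∈ range d, h x := by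
  subst hK
  induction m with
  | zero => simp
  | succ m ih =>
    rw [mul_add, mul_one, sum_range_add, ih, add_mul, one_mul]
    simp only [hper]

/-- Summing over ordered pairs of vertices counts each chord twice. -/
theorem two_mul_dEdges {N : ℕ} {F : DTriple N} (hF : LiftD N F) :
    2 * dEdges N F = ∑ x ∈ range (2 * N), ∑ j ∈ range (2 * N),
        F.1 ((x : ℤ) : ZMod (2 * N)) (j : ZMod (2 * N)) +
      2 * ∑ x ∈ range N, (F.2.1 ((x : ℤ) : ZMod (2 * N)) + F.2.2 ((x : ℤ) : ZMod (2 * N))) := by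
  unfold dEdges
  rw [mul_add, two_mul_sum_lt]
  · simp only [Int.cast_natCast]
  · intro i j
    simpa using hF.symm i j
  · intro i
    simpa using hF.diag i

/-- Total multiplicity of the chords at `x` of length less than `d`. -/
noncomputable def shortSum (n d : ℕ) (F : DTriple n) (x : ℤ) : ℕ :=
  ∑ s ∈ Icc (-(d : ℤ) + 1) (d - 1), F.1 x (x + s : ℤ)

/-- The edge count of an invariant dissection in terms of one fundamental domain. -/
theorem two_mul_dEdges_unfolded (hd : 0 < d) (hlt : d < n) (hdn : d ∣ n) {F : DTriple n}
    (hF : LiftD n F) (hp : PerD n d F) :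
    2 * dEdges n F * d = 2 * n * ∑ x ∈ range d, (shortSum n d F x +
      2 * F.1 (x : ℤ) (x + d : ℤ) + (F.2.1 (x : ℤ) + F.2.2 (x : ℤ))) := by
  have hn : 0 < n := hd.trans hlt
  have : NeZero (2 * n) := ⟨by omega⟩
  have hd' : (0 : ℤ) < d := by exact_mod_cast hd
  have hlt' : (d : ℤ) < n := by exact_mod_cast hlt
  have row : ∀ x : ℕ, ∑ j ∈ range (2 * n), F.1 ((x : ℤ) : ZMod (2 * n)) (j : ZMod (2 * n)) =
      shortSum n d F x + 2 * F.1 (x : ℤ) (x + d : ℤ) := by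
    intro x
    rw [sum_range_eq_displacements _ x (-d) d (by push_cast; linarith)]
    · have e1 : Icc (-(d : ℤ)) d = insert (-(d : ℤ)) (insert (d : ℤ)
          (Icc (-(d : ℤ) + 1) (d - 1))) := by
        ext z
        simp only [mem_insert, mem_Icc]
        omega
      rw [e1, sum_insert (by simp only [mem_insert, mem_Icc]; omega),
        sum_insert (by simp only [mem_Icc]; omega)]
      have e2 : F.1 (x : ℤ) (x + -d : ℤ) = F.1 (x : ℤ) (x + d : ℤ) := by
        have := hp.chord (x + -d) x 1
        rw [mul_one, neg_add_cancel_right] at this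
        rw [this, hF.symm]
      rw [e2]
      unfold shortSum
      ring
    · intro z hz
      obtain ⟨u, y, hu, rfl, a, b⟩ := exists_near hn ((x : ℤ) : ZMod (2 * n)) z
      refine ⟨y - u, ?_, ?_, ?_⟩
      · by_contra hc
        rw [hu, hF.symm] at hz
        exact hz (hF.long_eq_zero hp hd (by linarith) (by linarith))
      · by_contra hc
        rw [hu] at hz
        exact hz (hF.long_eq_zero hp hd (by linarith) (by linarith))
      · rw [Int.cast_add, hu]
        push_cast
        ring
  rw [two_mul_dEdges hF]
  simp only [row]
  obtain ⟨m, rfl⟩ := hdn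
  have lab : ∀ x t : ℕ, ((d * t + x : ℕ) : ℤ) = x + d * t := by
    intro x t
    push_cast
    ring
  have pc : ∀ (x t : ℕ) (y : ℤ),
      F.1 ((d * t + x : ℕ) : ℤ) (((d * t + x : ℕ) : ℤ) + y : ℤ) = F.1 (x : ℤ) (x + y : ℤ) := by
    intro x t y
    rw [lab, add_right_comm, hp.chord]
  have pb : ∀ (x t : ℕ), F.2.1 ((d * t + x : ℕ) : ℤ) = F.2.1 (x : ℤ) := by
    intro x t
    rw [lab, hp.blue]
  have pr : ∀ (x t : ℕ), F.2.2 ((d * t + x : ℕ) : ℤ) = F.2.2 (x : ℤ) := by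
    intro x t
    rw [lab, hp.red]
  rw [sum_range_periodic _ _ (2 * m) (by ring), sum_range_periodic _ _ m rfl]
  · simp only [sum_add_distrib]
    ring
  · intro x t
    rw [pb, pr]
  · intro x t
    unfold shortSum
    simp only [pc]

/-- Folding multiplies the number of edges by `d / n`. -/
theorem dEdges_fold (hd : 0 < d) (hlt : d < n) (hdn : d ∣ n) {F : DTriple n}
    (hF : LiftD n F) (hp : PerD n d F) :
    dEdges d (foldD n d F) * n = dEdges n F * d := by
  have hG := hF.fold hd hlt hp
  have : NeZero (2 * d) := ⟨by omega⟩
  have hd' : (0 : ℤ) < d := by exact_mod_cast hd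
  have row : ∀ x : ℕ, ∑ j ∈ range (2 * d),
      (foldD n d F).1 ((x : ℤ) : ZMod (2 * d)) (j : ZMod (2 * d)) = shortSum n d F x := by
    intro x
    rw [sum_range_eq_displacements _ x (-d + 1) (d - 1) (by push_cast; linarith)]
    · unfold shortSum
      refine sum_congr rfl fun s hs => ?_
      have := mem_Icc.1 hs
      rw [fold_near hd hp (by linarith) (by linarith)]
    · intro z hz
      obtain ⟨u, y, hu, rfl, a, b⟩ := exists_near hd ((x : ℤ) : ZMod (2 * d)) z
      refine ⟨y - u, by linarith, ?_, ?_⟩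
      · rcases b.lt_or_eq with b | b
        · linarith
        · obtain rfl : y = u + d := by linarith
          rw [hu, hG.diam] at hz
          exact (hz rfl).elim
      · rw [Int.cast_add, hu]
        push_cast
        ring
  have lab : ∀ x t : ℕ, ((d * t + x : ℕ) : ℤ) = x + d * t := by
    intro x t
    push_cast
    ring
  have pe : ∀ x t : ℕ, shortSum n d F ((d * t + x : ℕ) : ℤ) = shortSum n d F x := by
    intro x t
    unfold shortSum
    refine sum_congr rfl fun s _ => ?_
    rw [lab, add_right_comm, hp.chord]
  have h1 := two_mul_dEdges_unfolded hd hlt hdn hF hp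
  have h2 : 2 * dEdges d (foldD n d F) = 2 * ∑ x ∈ range d, (shortSum n d F x +
      2 * F.1 (x : ℤ) (x + d : ℤ) + (F.2.1 (x : ℤ) + F.2.2 (x : ℤ))) := by
    rw [two_mul_dEdges hG]
    simp only [row, fold_blue hd hp, fold_red hd hp]
    rw [sum_range_periodic _ _ 2 (mul_comm _ _) pe]
    simp only [sum_add_distrib, ← mul_sum]
    ring
  refine Nat.eq_of_mul_eq_mul_left two_pos ?_
  rw [← mul_assoc, ← mul_assoc, h1, h2]
  ring

end Counting

/-- Folding Lemma, Part 1.  Let `k ≥ 0`, `n ≥ 2`, and let `d` be an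
even divisor of `2n` which divides `n`.  The set of `k`-edge D-multidissections of
`P_{2n}` invariant under the `d`-th power of D-rotation is in bijective correspondence
with the set of `kd/n`-edge D-multidissections of `P_{2d}` (encoded by the equation
`(#edges)·n = k·d`, so that the latter set is empty when `n ∤ kd`). -/
theorem statement15 (n k d : ℕ) (hn : 2 ≤ n) (hd : d % 2 = 0) (hd2n : d ∣ 2 * n)
    (hdn : d ∣ n) :
    Nonempty
      ({F : DTriple n // IsDMulti n F ∧ dEdges n F = k ∧ DFixed n d F} ≃
       {F' : DTriple d // IsDMulti d F' ∧ dEdges d F' * n = k * d}) := by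
  have hn0 : 0 < n := by omega
  have hd0 : 0 < d := Nat.pos_of_dvd_of_pos hdn hn0
  rcases (Nat.le_of_dvd hn0 hdn).eq_or_lt with rfl | hlt
  · -- the `d`-th power of the rotation is the antipodal map, which fixes everything
    refine ⟨Equiv.subtypeEquivRight fun F => ?_⟩
    rw [isDMulti_iff hn0, dFixed_iff hd]
    constructor
    · rintro ⟨h1, rfl, -⟩
      exact ⟨h1, rfl⟩
    · rintro ⟨h1, h2⟩
      exact ⟨h1, Nat.eq_of_mul_eq_mul_right hn0 h2, h1.perD⟩
  · simp only [isDMulti_iff hn0, isDMulti_iff hd0, dFixed_iff hd]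
    refine ⟨⟨fun F => ⟨foldD n d F.1, ?_, ?_⟩, fun G => ⟨unfoldD n d G.1, ?_, ?_, ?_⟩, ?_, ?_⟩⟩
    · exact F.2.1.fold hd0 hlt F.2.2.2
    · rw [dEdges_fold hd0 hlt hdn F.2.1 F.2.2.2, F.2.2.1]
    · exact (G.2.1.unfold hd0 hlt hdn).1
    · obtain ⟨h1, h2⟩ := G.2.1.unfold hd0 hlt hdn
      have h3 := dEdges_fold hd0 hlt hdn h1 h2
      rw [fold_unfold hd0 hlt hdn G.2.1, G.2.2] at h3
      exact (Nat.eq_of_mul_eq_mul_right hd0 h3).symm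
    · exact (G.2.1.unfold hd0 hlt hdn).2
    · rintro ⟨F, h1, h2, h3⟩
      exact Subtype.ext (unfold_fold hd0 hlt hdn h1 h3)
    · rintro ⟨G, h1, h2⟩
      exact Subtype.ext (fold_unfold hd0 hlt hdn h1)
end

section
/- (Folding Lemma, Part 2.) Let k ≥ 0, n ≥ 2, let d be an even divisor of 2n with d not dividing n, and let r be the D-rotation operator on D-multidissections of P_{2n}. Then the set of D-multidissections of P_{2n} with exactly k edges that are invariant under r^d is in bijective correspondence with the set of D-multidissections of P_d with exactly kd/(2n) edges (this latter set being interpreted as empty if kd/(2n) is not an integer). In particular the two sets have equal cardinality. -/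
/-!
Write `d = 2m` and `n = m q`. Since `d ∤ n`, the number `q` is odd, so rotation by `d` together
with the central symmetry (rotation by `n`) generates rotation by `m`: the multidissections to be
counted are those invariant under rotation by `m`, colors being preserved (`dFixed_iff`). If
`q = 1`, the two sets coincide. Let `q ≥ 3`.

Both sides are described by `m`-periodic crossing-free systems of arcs and diameters on the
universal cover `ℤ` of the vertex circle (`ArcSys`).

* In `P_{2n}`, an edge of length more than `m` crosses its rotation by `m` (`shortD_of_MInv`), so
  arcs have length at most `m`; and since a diameter comes with its distinct rotation by `m`,
  diameters of only one color occur (`ArcSys.mono_color`).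
* In `P_{2m}`, arcs have length at most `m - 1`, and diameters of both colors may occur, provided
  they are all equal to one another.

An orbit of arcs of length `m` in `P_{2n}`, which is the boundary of an inner `2q`-gon, is traded
for a blue and a red copy of the same diameter of `P_{2m}` (`foldArc`). Conversely, at every
diameter of `P_{2m}` with multiplicities `(b, r)`, `min b r` pairs become arcs of length `m` and the
surplus remains as diameters of one color (`unfoldArc`). These maps are mutually inverse and
respect noncrossing. Each period of an arc system is repeated `q` times in `P_{2n}` and once in
`P_{2m}`, so the edge count is divided by `q = 2n / d` (`dEdges_projD`, `arcCount_foldArc`).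
-/

open Finset

/-! ### Arc systems -/

/-- Data on the universal cover `ℤ` of the vertex circle: a multiplicity for each arc from `x`
to `y` with `x < y`, and one for each blue and each red diameter, indexed by an endpoint. -/
abbrev ArcTriple := (ℤ → ℤ → ℕ) × (ℤ → ℕ) × (ℤ → ℕ)

/-- An `m`-periodic system of arcs of length at most `w`, and of diameters, that is free of
crossings: arcs do not strictly interleave, no diameter ends strictly inside an arc, and a blue
and a red diameter are present together only if their endpoints agree modulo `n`. -/
def ArcSys (m : ℕ) (w : ℤ) (n : ℕ) (G : ArcTriple) : Prop :=
  (∀ x y, G.1 x y ≠ 0 → x < y ∧ y ≤ x + w) ∧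
  (∀ x y, G.1 (x + m) (y + m) = G.1 x y) ∧
  (∀ a, G.2.1 (a + m) = G.2.1 a) ∧
  (∀ a, G.2.2 (a + m) = G.2.2 a) ∧
  (∀ x u y v, x < u → u < y → y < v → G.1 x y = 0 ∨ G.1 u v = 0) ∧
  (∀ a x y, x < a → a < y → G.2.1 a = 0 ∨ G.1 x y = 0) ∧
  (∀ a x y, x < a → a < y → G.2.2 a = 0 ∨ G.1 x y = 0) ∧
  (∀ a b, G.2.1 a ≠ 0 → G.2.2 b ≠ 0 → (n : ℤ) ∣ a - b)

/-- Invariance of all multiplicities under rotation by `m` vertices, without color change. -/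
def MInv (n m : ℕ) (F : DTriple n) : Prop :=
  (∀ i j, F.1 (i + (m : ZMod (2*n))) (j + (m : ZMod (2*n))) = F.1 i j) ∧
  (∀ a, F.2.1 (a + (m : ZMod (2*n))) = F.2.1 a) ∧
  (∀ a, F.2.2 (a + (m : ZMod (2*n))) = F.2.2 a)

/-- The lift to `ℤ` of the edges of length at most `w` and of the diameters of `P_{2n}`. -/
def liftD (n : ℕ) (w : ℤ) (F : DTriple n) : ArcTriple :=
  (fun x y => if x < y ∧ y ≤ x + w then F.1 (x : ZMod (2*n)) (y : ZMod (2*n)) else 0,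
   fun a => F.2.1 (a : ZMod (2*n)), fun a => F.2.2 (a : ZMod (2*n)))

/-- The projection of an arc system to `P_{2n}`. An edge `{i, j}` is the image of the arcs from
`i` clockwise to `j` and of those from `j` clockwise to `i`; only one of the two kinds is short. -/
def projD (n : ℕ) (G : ArcTriple) : DTriple n :=
  (fun i j => G.1 (i.val : ℤ) ((i.val : ℤ) + ((j - i).val : ℤ)) +
      G.1 (j.val : ℤ) ((j.val : ℤ) + ((i - j).val : ℤ)),
   fun a => G.2.1 (a.val : ℤ), fun a => G.2.2 (a.val : ℤ))

/-- The weighted number of arcs and diameters in one period of an arc system, arcs of length at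
most `m` counting twice: when `n = m * q`, an orbit of arcs has `2 * q` images in `P_{2n}`, and an
orbit of diameters has `q` images. -/
def arcCount (m : ℕ) (G : ArcTriple) : ℕ :=
  ∑ x ∈ range m, (2 * (∑ s ∈ range m, G.1 (x : ℤ) ((x : ℤ) + s + 1)) +
    (G.2.1 (x : ℤ) + G.2.2 (x : ℤ)))

/-- Replace each orbit of arcs of length `m` by one blue and one red diameter. -/
def foldArc (m : ℕ) (G : ArcTriple) : ArcTriple :=
  (fun x y => if y = x + m then 0 else G.1 x y,
   fun a => G.2.1 a + G.1 a (a + m), fun a => G.2.2 a + G.1 a (a + m))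

/-- Replace blue-red pairs of equal diameters, as many as possible, by arcs of length `m`.
The truncated subtractions leave the surplus of the more frequent color. -/
def unfoldArc (m : ℕ) (G : ArcTriple) : ArcTriple :=
  (fun x y => if y = x + m then min (G.2.1 x) (G.2.2 x) else G.1 x y,
   fun a => G.2.1 a - G.2.2 a, fun a => G.2.2 a - G.2.1 a)

/-! ### Crossings on the circle and on its universal cover -/

theorem crossE_comm {N : ℕ} {i j a b : ZMod N} (h : crossE i j a b) : crossE a b i j :=
  Or.symm h

theorem crossE_swap_left {N : ℕ} {i j a b : ZMod N} (h : crossE i j a b) : crossE j i a b := by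
  unfold crossE at *
  rw [min_comm j.val, max_comm j.val]
  exact h

theorem crossE_swap_right {N : ℕ} {i j a b : ZMod N} (h : crossE i j a b) : crossE i j b a :=
  crossE_comm (crossE_swap_left (crossE_comm h))

theorem val_window {N : ℕ} [NeZero N] (x z : ℤ) (h1 : x ≤ z) (h2 : z < x + N) :
    (((z : ZMod N).val : ℤ) = z - N * (x / N) ∧ z - N * (x / N) < N) ∨
    (((z : ZMod N).val : ℤ) = z - N * (x / N) - N ∧ N ≤ z - N * (x / N)) := by
  have hN : (0 : ℤ) < N := by exact_mod_cast Nat.pos_of_ne_zero (NeZero.ne N)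
  have h3 := Int.emod_add_mul_ediv x N
  have h4 := Int.emod_nonneg x hN.ne'
  have h5 := Int.emod_lt_of_pos x hN
  rw [ZMod.val_intCast]
  generalize hc : (N : ℤ) * (x / N) = c at *
  rcases lt_or_ge (z - c) N with h | h
  · left
    refine ⟨?_, h⟩
    have : z % (N : ℤ) = (z - c) % N := by
      rw [← hc, Int.sub_mul_emod_self_left]
    rw [this, Int.emod_eq_of_lt (by omega) h]
  · right
    refine ⟨?_, h⟩
    have : z % (N : ℤ) = (z - c - N) % N := by
      rw [← hc, Int.sub_emod_right, Int.sub_mul_emod_self_left]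
    rw [this, Int.emod_eq_of_lt (by omega) (by omega)]

/-- Interleaving on the universal cover, within one turn, gives a crossing in the polygon. -/
theorem cross_of_lt {N : ℕ} [NeZero N] {x u y v : ℤ} (h1 : x < u) (h2 : u < y) (h3 : y < v)
    (h4 : v < x + N) : crossE (x : ZMod N) (y : ZMod N) (u : ZMod N) (v : ZMod N) := by
  have hx := val_window (N := N) x x (by omega) (by omega)
  have hu := val_window (N := N) x u (by omega) (by omega)
  have hy := val_window (N := N) x y (by omega) (by omega)
  have hv := val_window (N := N) x v (by omega) (by omega)
  have h5 : 0 ≤ x - N * (x / N) ∧ x - N * (x / N) < N := by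
    have hN : (0 : ℤ) < N := by exact_mod_cast Nat.pos_of_ne_zero (NeZero.ne N)
    have := Int.emod_add_mul_ediv x N
    have := Int.emod_nonneg x hN.ne'
    have := Int.emod_lt_of_pos x hN
    omega
  unfold crossE
  generalize (N : ℤ) * (x / N) = c at *
  omega

theorem val_add_window {N : ℕ} [NeZero N] (i : ZMod N) (s : ℤ) (h0 : 0 ≤ s) (h1 : s < N) :
    (((((i.val : ℤ) + s : ℤ) : ZMod N).val : ℤ) = i.val + s ∧ i.val + s < N) ∨
    (((((i.val : ℤ) + s : ℤ) : ZMod N).val : ℤ) = i.val + s - N ∧ N ≤ i.val + s) := by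
  have h := val_window (N := N) i.val (i.val + s) (by omega) (by omega)
  have h2 := i.val_lt
  rw [Int.ediv_eq_zero_of_lt (by omega) (by omega)] at h
  simpa using h

/-- A crossing of two short edges comes from an interleaving of suitable lifts. -/
theorem lift_of_cross {N : ℕ} [NeZero N] (i a : ZMod N) (s t : ℤ) (hs : 0 < s) (ht : 0 < t)
    (hs2 : 2 * s < N) (ht2 : 2 * t < N)
    (h : crossE i (((i.val : ℤ) + s : ℤ) : ZMod N) a (((a.val : ℤ) + t : ℤ) : ZMod N)) :
    ∃ c : ℤ, ((i.val : ℤ) < a.val + c * N ∧ a.val + c * N < (i.val : ℤ) + s ∧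
        (i.val : ℤ) + s < a.val + t + c * N) ∨
      (a.val + c * N < (i.val : ℤ) ∧ (i.val : ℤ) < a.val + t + c * N ∧
        a.val + t + c * N < (i.val : ℤ) + s) := by
  have h1 := val_add_window i s hs.le (by omega)
  have h2 := val_add_window a t ht.le (by omega)
  have h3 := i.val_lt
  have h4 := a.val_lt
  unfold crossE at h
  by_contra! hcon
  have c0 := hcon 0
  have c1 := hcon 1
  have c2 := hcon (-1)
  generalize ((((i.val : ℤ) + s : ℤ) : ZMod N).val) = p at *
  generalize ((((a.val : ℤ) + t : ℤ) : ZMod N).val) = r at *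
  omega

/-- A diameter crossing a short edge has a lifted endpoint strictly inside the lifted edge. -/
theorem lift_of_cross_diam {n : ℕ} [NeZero (2 * n)] (a i : ZMod (2 * n)) (s : ℤ) (hs : 0 < s)
    (hs2 : s < n)
    (h : crossE a (a + (n : ZMod (2 * n))) i (((i.val : ℤ) + s : ℤ) : ZMod (2 * n))) :
    ∃ c : ℤ, (i.val : ℤ) < a.val + c * n ∧ a.val + c * n < (i.val : ℤ) + s := by
  have h1 := val_add_window i s hs.le (by push_cast; omega)
  have h2 := val_add_window a (n : ℤ) (by omega) (by push_cast; omega)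
  have h3 := i.val_lt
  have h4 := a.val_lt
  have h5 : (((a.val : ℤ) + n : ℤ) : ZMod (2 * n)) = a + (n : ZMod (2 * n)) := by
    push_cast
    rw [ZMod.natCast_zmod_val]
  rw [h5] at h2
  unfold crossE at h
  by_contra! hcon
  have c0 := hcon 0
  have c1 := hcon 1
  have c2 := hcon (-1)
  have c3 := hcon 2
  have c4 := hcon (-2)
  have c5 := hcon 3
  generalize ((((i.val : ℤ) + s : ℤ) : ZMod (2 * n)).val) = p at *
  generalize ((a + (n : ZMod (2 * n))).val) = r at *
  omega

theorem exists_rep {N : ℕ} [NeZero N] (i j : ZMod N) :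
    ∃ x y : ℤ, i = (x : ZMod N) ∧ j = (y : ZMod N) ∧ x ≤ y ∧ y < x + N := by
  refine ⟨i.val, i.val + (j - i).val, ?_, ?_, by omega, ?_⟩
  · push_cast
    rw [ZMod.natCast_zmod_val]
  · push_cast
    rw [ZMod.natCast_zmod_val, ZMod.natCast_zmod_val]
    ring
  · have := (j - i).val_lt
    omega

/-! ### Arc systems and symmetric D-multidissections -/

theorem ArcSys.per {m n : ℕ} {w : ℤ} {G : ArcTriple} (h : ArcSys m w n G) (x y t : ℤ) :
    G.1 (x + t * m) (y + t * m) = G.1 x y := by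
  have hp : Function.Periodic (fun z : ℤ => G.1 (x + z) (y + z)) (m : ℤ) := fun z => by
    simpa [add_assoc] using h.2.1 (x + z) (y + z)
  simpa using hp.int_mul t 0

theorem per_of {m : ℕ} {f : ℤ → ℕ} (h : ∀ a, f (a + m) = f a) (x t : ℤ) :
    f (x + t * m) = f x :=
  (show Function.Periodic f (m : ℤ) from h).int_mul t x

theorem per_of_dvd {m : ℕ} {f : ℤ → ℕ} (h : ∀ a, f (a + m) = f a) {x y : ℤ}
    (hd : (m : ℤ) ∣ x - y) : f x = f y := by
  obtain ⟨t, ht⟩ := hd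
  rw [← per_of h y t]
  congr 1
  linarith [mul_comm (m : ℤ) t]

theorem projD_cast {m n q : ℕ} {w : ℤ} {G : ArcTriple} [NeZero (2 * n)] (hq : n = m * q)
    (h : ArcSys m w n G) (x y : ℤ) (h1 : x ≤ y) (h2 : y < x + (2 * n : ℕ)) (hw : w < n) :
    (projD n G).1 (x : ZMod (2 * n)) (y : ZMod (2 * n)) = G.1 x y + G.1 y (x + 2 * n) := by
  have hN : (0 : ℤ) < (2 * n : ℕ) := by
    exact_mod_cast Nat.pos_of_ne_zero (NeZero.ne (2 * n))
  have key : ∀ z s : ℤ, G.1 (z % (2 * n : ℕ)) (z % (2 * n : ℕ) + s) = G.1 z (z + s) := by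
    intro z s
    rw [← h.per (z % (2 * n : ℕ)) (z % (2 * n : ℕ) + s) (2 * q * (z / (2 * n : ℕ)))]
    have e : z % (2 * n : ℕ) + 2 * q * (z / (2 * n : ℕ)) * m = z := by
      have e1 := Int.emod_add_mul_ediv z (2 * n : ℕ)
      have e2 : ((2 * n : ℕ) : ℤ) = 2 * q * m := by rw [hq]; push_cast; ring
      calc _ = z % (2 * n : ℕ) + (2 * q * m) * (z / (2 * n : ℕ)) := by ring
        _ = z := by rw [← e2]; exact e1
    rw [e, show z % (2 * n : ℕ) + s + 2 * q * (z / (2 * n : ℕ)) * m = z + s by linarith]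
  have e1 : (((y : ZMod (2 * n)) - (x : ZMod (2 * n))).val : ℤ) = y - x := by
    rw [← Int.cast_sub, ZMod.val_intCast, Int.emod_eq_of_lt (by omega) (by omega)]
  simp only [projD]
  rw [e1, ZMod.val_intCast, key, ZMod.val_intCast]
  rcases h1.eq_or_lt with rfl | hlt
  · rw [key]
    have z1 : G.1 x x = 0 := by
      by_contra hc
      have := h.1 _ _ hc
      omega
    have z2 : G.1 x (x + 2 * n) = 0 := by
      by_contra hc
      have := h.1 _ _ hc
      omega
    simp [z1, z2]
  · have e2 : (((x : ZMod (2 * n)) - (y : ZMod (2 * n))).val : ℤ) = x - y + (2 * n : ℕ) := by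
      rw [← Int.cast_sub, ZMod.val_intCast, ← Int.add_emod_right,
        Int.emod_eq_of_lt (by omega) (by omega)]
    rw [e2, key, show y + (x - y + ((2 * n : ℕ) : ℤ)) = x + 2 * n by push_cast; ring,
      show x + (y - x) = y by ring]

theorem per_val_cast {m n q : ℕ} [NeZero (2 * n)] (hq : n = m * q) {f : ℤ → ℕ}
    (h : ∀ a, f (a + m) = f a) (x : ℤ) : f ((x : ZMod (2 * n)).val : ℤ) = f x := by
  rw [ZMod.val_intCast]
  apply per_of_dvd h
  have h1 : ((2 * n : ℕ) : ℤ) ∣ x % (2 * n : ℕ) - x := by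
    have e1 := Int.emod_add_mul_ediv x (2 * n : ℕ)
    exact ⟨-(x / (2 * n : ℕ)), by linarith⟩
  exact dvd_trans ⟨2 * q, by rw [hq]; push_cast; ring⟩ h1

theorem exists_arc {m n : ℕ} {w : ℤ} {G : ArcTriple} [NeZero (2 * n)] (h : ArcSys m w n G)
    {i j : ZMod (2 * n)} (hF : (projD n G).1 i j ≠ 0) :
    ∃ (u : ZMod (2 * n)) (s : ℤ), 0 < s ∧ s ≤ w ∧ G.1 (u.val : ℤ) (u.val + s) ≠ 0 ∧
      ((i = u ∧ j = (((u.val : ℤ) + s : ℤ) : ZMod (2 * n))) ∨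
       (j = u ∧ i = (((u.val : ℤ) + s : ℤ) : ZMod (2 * n)))) := by
  have key : ∀ i j : ZMod (2 * n),
      j = (((i.val : ℤ) + (j - i).val : ℤ) : ZMod (2 * n)) := by
    intro i j
    push_cast
    rw [ZMod.natCast_zmod_val, ZMod.natCast_zmod_val]
    ring
  by_cases h1 : G.1 (i.val : ℤ) ((i.val : ℤ) + ((j - i).val : ℤ)) = 0
  · have h2 : G.1 (j.val : ℤ) ((j.val : ℤ) + ((i - j).val : ℤ)) ≠ 0 := by
      intro h2
      exact hF (by simp only [projD]; rw [h1, h2])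
    have := h.1 _ _ h2
    exact ⟨j, _, by omega, by omega, h2, Or.inr ⟨rfl, key j i⟩⟩
  · have := h.1 _ _ h1
    exact ⟨i, _, by omega, by omega, h1, Or.inl ⟨rfl, key i j⟩⟩

theorem projD_MInv {m n q : ℕ} {w : ℤ} {G : ArcTriple} [NeZero (2 * n)] (hq : n = m * q)
    (h : ArcSys m w n G) (hw : w < n) : MInv n m (projD n G) := by
  have hb : ∀ f : ℤ → ℕ, (∀ a, f (a + m) = f a) → ∀ a : ZMod (2 * n),
      f ((a + (m : ZMod (2 * n))).val : ℤ) = f (a.val : ℤ) := by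
    intro f hf a
    have e : a + (m : ZMod (2 * n)) = (((a.val : ℤ) + m : ℤ) : ZMod (2 * n)) := by
      push_cast
      rw [ZMod.natCast_zmod_val]
    rw [e, per_val_cast hq hf, hf]
  refine ⟨fun i j => ?_, hb _ h.2.2.1, hb _ h.2.2.2.1⟩
  obtain ⟨x, y, rfl, rfl, h1, h2⟩ := exists_rep i j
  have e := projD_cast hq h (x + m) (y + m) (by omega) (by omega) hw
  rw [projD_cast hq h x y h1 h2 hw, ← h.2.1 x y, ← h.2.1 y]
  push_cast at e
  rw [e, show x + m + 2 * (n : ℤ) = x + 2 * n + m by ring]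

theorem iterate_inv {N : ℕ} {m q : ℕ} {f : ZMod N → ZMod N → ℕ}
    (h : ∀ i j, f (i + (m : ZMod N)) (j + (m : ZMod N)) = f i j) (i j : ZMod N) :
    f (i + ((m * q : ℕ) : ZMod N)) (j + ((m * q : ℕ) : ZMod N)) = f i j := by
  induction q with
  | zero => simp
  | succ q ih =>
    have e : ∀ k : ZMod N, k + ((m * (q + 1) : ℕ) : ZMod N) =
        k + ((m * q : ℕ) : ZMod N) + (m : ZMod N) := by
      intro k
      push_cast
      ring
    rw [← ih, ← h (i + ((m * q : ℕ) : ZMod N)), e, e]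

theorem iterate_inv' {N : ℕ} {m q : ℕ} {f : ZMod N → ℕ}
    (h : ∀ i, f (i + (m : ZMod N)) = f i) (i : ZMod N) :
    f (i + ((m * q : ℕ) : ZMod N)) = f i :=
  iterate_inv (f := fun i _ => f i) (fun i _ => h i) i 0

theorem projD_spec {m n q : ℕ} {w : ℤ} {G : ArcTriple} [NeZero (2 * n)] (hq : n = m * q)
    (h : ArcSys m w n G) (hw : w < n) : IsDMulti n (projD n G) := by
  have hM := projD_MInv hq h hw
  have hdiam : ∀ f : ℤ → ℕ, (∀ a, f (a + m) = f a) →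
      (∀ a x y, x < a → a < y → f a = 0 ∨ G.1 x y = 0) → ∀ a i j : ZMod (2 * n),
      crossE a (a + (n : ZMod (2*n))) i j → f (a.val : ℤ) = 0 ∨ (projD n G).1 i j = 0 := by
    intro f hf hx a i j hc
    by_contra! hcon
    obtain ⟨hfa, hF⟩ := hcon
    obtain ⟨u, s, hs, hsw, hg, hij⟩ := exists_arc h hF
    have hc' : crossE a (a + (n : ZMod (2*n))) u (((u.val : ℤ) + s : ℤ) : ZMod (2 * n)) := by
      rcases hij with ⟨rfl, rfl⟩ | ⟨rfl, rfl⟩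
      · exact hc
      · exact crossE_swap_right hc
    obtain ⟨c, hc1, hc2⟩ := lift_of_cross_diam a u s hs (by omega) hc'
    rcases hx _ _ _ hc1 hc2 with h0 | h0
    · apply hfa
      rw [← h0]
      apply per_of_dvd hf
      have e : (n : ℤ) = m * q := by exact_mod_cast hq
      exact ⟨-(q * c), by rw [e]; ring⟩
    · exact hg h0
  refine ⟨fun i j => ?_, fun i => ?_, fun i => ?_, fun i j => ?_, fun a => ?_, fun a => ?_, ?_,
    hdiam _ h.2.2.1 h.2.2.2.2.2.1, hdiam _ h.2.2.2.1 h.2.2.2.2.2.2.1, ?_⟩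
  · simp only [projD]
    rw [add_comm]
  · obtain ⟨x, y, rfl, -, -, h2⟩ := exists_rep i i
    by_contra hc
    obtain ⟨u, s, hs, hsw, hg, hij⟩ := exists_arc h hc
    have hu : u = (((u.val : ℤ) + s : ℤ) : ZMod (2 * n)) := by
      rcases hij with ⟨e1, e2⟩ | ⟨e1, e2⟩ <;> exact e1.symm.trans e2
    have h3 := val_add_window u s hs.le (by push_cast; omega)
    rw [← hu] at h3
    push_cast at h3
    omega
  · by_contra hc
    have e : i + (n : ZMod (2 * n)) = (((i.val : ℤ) + n : ℤ) : ZMod (2 * n)) := by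
      push_cast
      rw [ZMod.natCast_zmod_val]
    have hn : 0 < 2 * n := Nat.pos_of_ne_zero (NeZero.ne _)
    have e2 : i = ((i.val : ℤ) : ZMod (2 * n)) := by simp
    rw [e] at hc
    nth_rewrite 1 [e2] at hc
    rw [projD_cast hq h _ _ (by omega) (by push_cast; omega) hw] at hc
    by_cases h1 : G.1 (i.val : ℤ) (i.val + n) = 0
    · rw [h1, zero_add] at hc
      have := h.1 _ _ hc
      omega
    · have := h.1 _ _ h1
      omega
  · have := iterate_inv (q := q) hM.1 i j
    rwa [← hq] at this
  · have := iterate_inv' (q := q) hM.2.1 a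
    rwa [← hq] at this
  · have := iterate_inv' (q := q) hM.2.2 a
    rwa [← hq] at this
  · intro i j a b hc
    by_contra! hcon
    obtain ⟨u, s, hs, hsw, hg, hij⟩ := exists_arc h hcon.1
    obtain ⟨v, t, ht, htw, hg', hab⟩ := exists_arc h hcon.2
    have hc' : crossE u (((u.val : ℤ) + s : ℤ) : ZMod (2 * n)) v
        (((v.val : ℤ) + t : ℤ) : ZMod (2 * n)) := by
      rcases hij with ⟨rfl, rfl⟩ | ⟨rfl, rfl⟩ <;> rcases hab with ⟨rfl, rfl⟩ | ⟨rfl, rfl⟩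
      · exact hc
      · exact crossE_swap_right hc
      · exact crossE_swap_left hc
      · exact crossE_swap_left (crossE_swap_right hc)
    obtain ⟨c, hc⟩ := lift_of_cross u v s t hs ht (by push_cast; omega) (by push_cast; omega) hc'
    have hg2 : G.1 (v.val + c * (2 * n : ℕ)) (v.val + t + c * (2 * n : ℕ)) ≠ 0 := by
      have e : c * ((2 * n : ℕ) : ℤ) = (2 * q * c) * m := by rw [hq]; push_cast; ring
      rw [e, h.per]
      exact hg'
    rcases hc with ⟨c1, c2, c3⟩ | ⟨c1, c2, c3⟩
    · exact (h.2.2.2.2.1 _ _ _ _ c1 c2 c3).elim hg hg2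
    · exact (h.2.2.2.2.1 _ _ _ _ c1 c2 c3).elim hg2 hg
  · intro a b ha hb
    obtain ⟨t, ht⟩ := h.2.2.2.2.2.2.2 _ _ ha hb
    have h1 := a.val_lt
    have h2 := b.val_lt
    have e : (b : ZMod (2 * n)) = a - (n : ZMod (2 * n)) * (t : ZMod (2 * n)) := by
      have := congrArg (fun z : ℤ => (z : ZMod (2 * n))) ht
      push_cast at this
      rw [ZMod.natCast_zmod_val, ZMod.natCast_zmod_val] at this
      rw [← this]
      ring
    have h2n : (n : ZMod (2 * n)) * 2 = 0 := by
      have := ZMod.natCast_self (2 * n)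
      push_cast at this
      linear_combination this
    rcases Int.even_or_odd' t with ⟨c, rfl | rfl⟩
    · left
      rw [e]
      push_cast
      linear_combination (-(c : ZMod (2 * n))) * h2n
    · right
      rw [e]
      push_cast
      linear_combination (-(c : ZMod (2 * n)) - 1) * h2n

/-- Every edge of `P_{2n}` present in `F` has length at most `w` in one of the two directions. -/
def ShortD (n : ℕ) (w : ℤ) (F : DTriple n) : Prop :=
  ∀ x y : ℤ, x ≤ y → y < x + 2 * n → F.1 (x : ZMod (2 * n)) (y : ZMod (2 * n)) ≠ 0 →
    y ≤ x + w ∨ x + 2 * n ≤ y + w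

theorem liftD_spec {m n : ℕ} {w : ℤ} {F : DTriple n} [NeZero (2 * n)]
    (h : IsDMulti n F) (hM : MInv n m F) (hw : w < n) : ArcSys m w n (liftD n w F) := by
  obtain ⟨hs, hl, hdd, hn1, hn2, hn3, hx, hb, hr, hcol⟩ := h
  have hdiam : ∀ f : ZMod (2 * n) → ℕ, 
      (∀ a i j, crossE a (a + (n : ZMod (2*n))) i j → f a = 0 ∨ F.1 i j = 0) →
      ∀ a x y : ℤ, x < a → a < y → f (a : ZMod (2 * n)) = 0 ∨ (liftD n w F).1 x y = 0 := by
    intro f hf a x y h1 h2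
    by_cases hc : x < y ∧ y ≤ x + w
    · have := cross_of_lt (N := 2 * n) h1 h2 (v := a + n) (by omega) (by push_cast; omega)
      simp only [liftD, if_pos hc]
      apply hf
      apply crossE_comm
      push_cast at this
      exact this
    · right
      simp only [liftD, if_neg hc]
  refine ⟨fun x y hxy => ?_, fun x y => ?_, fun a => ?_, fun a => ?_, fun x u y v h1 h2 h3 => ?_,
    hdiam _ hb, hdiam _ hr, fun a b ha hb => ?_⟩
  · by_contra hc
    exact hxy (by simp only [liftD, if_neg hc])
  · have e : (x + m < y + m ∧ y + m ≤ x + m + w) ↔ (x < y ∧ y ≤ x + w) := by omega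
    simp only [liftD, e]
    push_cast
    rw [hM.1]
  · simp only [liftD]
    push_cast
    rw [hM.2.1]
  · simp only [liftD]
    push_cast
    rw [hM.2.2]
  · by_cases hc : x < y ∧ y ≤ x + w
    · by_cases hc' : u < v ∧ v ≤ u + w
      · simp only [liftD, if_pos hc, if_pos hc']
        exact hx _ _ _ _ (cross_of_lt h1 h2 h3 (by push_cast; omega))
      · right
        simp only [liftD, if_neg hc']
    · left
      simp only [liftD, if_neg hc]
  · have := hcol _ _ ha hb
    have key : ∀ z : ℤ, (z : ZMod (2 * n)) = 0 → (n : ℤ) ∣ z := fun z hz =>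
      dvd_trans ⟨2, by push_cast; ring⟩ ((ZMod.intCast_zmod_eq_zero_iff_dvd z (2 * n)).1 hz)
    rcases this with h1 | h1
    · apply key
      push_cast
      rw [h1, sub_self]
    · have := key (a + n - b) (by push_cast; rw [h1, sub_self])
      have := dvd_sub this (dvd_refl (n : ℤ))
      rwa [show a + n - b - n = a - b by ring] at this

theorem liftD_projD {m n q : ℕ} {w : ℤ} {G : ArcTriple} [NeZero (2 * n)] (hq : n = m * q)
    (h : ArcSys m w n G) (hw : w < n) : liftD n w (projD n G) = G := by
  refine Prod.ext ?_ (Prod.ext ?_ ?_)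
  · funext x y
    simp only [liftD]
    split_ifs with hc
    · rw [projD_cast hq h x y hc.1.le (by push_cast; omega) hw]
      have : G.1 y (x + 2 * n) = 0 := by
        by_contra h0
        have := h.1 _ _ h0
        omega
      rw [this, add_zero]
    · by_contra h0
      exact hc (h.1 _ _ (Ne.symm h0))
  · funext a
    exact per_val_cast hq h.2.2.1 a
  · funext a
    exact per_val_cast hq h.2.2.2.1 a

theorem projD_liftD {m n q : ℕ} {w : ℤ} {F : DTriple n} [NeZero (2 * n)] (hq : n = m * q)
    (h : IsDMulti n F) (hM : MInv n m F) (hw : w < n) (hsh : ShortD n w F) :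
    projD n (liftD n w F) = F := by
  refine Prod.ext ?_ (Prod.ext ?_ ?_)
  · funext i j
    obtain ⟨x, y, rfl, rfl, h1, h2⟩ := exists_rep i j
    rw [projD_cast hq (liftD_spec h hM hw) x y h1 h2 hw]
    have e : ((x + 2 * n : ℤ) : ZMod (2 * n)) = x := by
      have := ZMod.natCast_self (2 * n)
      push_cast at this ⊢
      rw [this, add_zero]
    simp only [liftD, e, h.1 (y : ZMod (2 * n)) x]
    by_cases h0 : F.1 (x : ZMod (2 * n)) (y : ZMod (2 * n)) = 0
    · simp [h0]
    · have hs := hsh x y h1 (by push_cast at h2; exact h2) h0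
      have hne : x ≠ y := by
        rintro rfl
        exact h0 (h.2.1 _)
      push_cast at h2
      rcases hs with hs | hs
      · rw [if_pos (by omega), if_neg (by omega), add_zero]
      · rw [if_neg (by omega), if_pos (by omega), zero_add]
  · funext a
    simp [projD, liftD]
  · funext a
    simp [projD, liftD]

/-! ### Counting edges -/

theorem sum_range_periodic_s16 {m : ℕ} (q : ℕ) {f : ℕ → ℕ} (h : ∀ a, f (a + m) = f a) :
    ∑ a ∈ range (m * q), f a = q * ∑ a ∈ range m, f a := by
  induction q with
  | zero => simp
  | succ q ih =>
    have h2 : ∀ t a, f (m * t + a) = f a := by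
      intro t
      induction t with
      | zero => simp
      | succ t iht =>
        intro a
        rw [← iht a, ← h (m * t + a)]
        congr 1
        ring
    rw [Nat.mul_succ, Finset.sum_range_add, ih]
    simp only [h2]
    ring

/-- Sorting the edges `{i, j}` by their initial vertex, in the direction of the short arc. -/
theorem sum_pairs (N : ℕ) (g : ℕ → ℕ → ℕ) :
    (∑ i ∈ range N, ∑ j ∈ range N, if i < j then g i j + g j (i + N) else 0) =
    ∑ x ∈ range N, ∑ s ∈ range (N - 1), g x (x + s + 1) := by
  have e : ∀ i j, (if i < j then g i j + g j (i + N) else 0) =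
      (if i < j then g i j else 0) + (if i < j then g j (i + N) else 0) := by
    intro i j
    split_ifs <;> simp
  simp only [e, Finset.sum_add_distrib]
  rw [Finset.sum_comm (f := fun i j => if i < j then g j (i + N) else 0),
    ← Finset.sum_add_distrib]
  refine Finset.sum_congr rfl fun x hx => ?_
  rw [Finset.mem_range] at hx
  have e1 : (∑ j ∈ range N, if x < j then g x j else 0) = ∑ j ∈ Ico (x + 1) N, g x j := by
    rw [← Finset.sum_filter]
    congr 1
    ext j
    simp only [Finset.mem_filter, Finset.mem_range, Finset.mem_Ico]
    omega
  have e2 : (∑ i ∈ range N, if i < x then g x (i + N) else 0) =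
      ∑ j ∈ Ico N (x + N), g x j := by
    rw [← Finset.sum_filter, Finset.sum_Ico_eq_sum_range]
    have : (range N).filter (fun i => i < x) = range (x + N - N) := by
      ext j
      simp only [Finset.mem_filter, Finset.mem_range]
      omega
    rw [this]
    exact Finset.sum_congr rfl fun i _ => by rw [add_comm]
  rw [e1, e2, Finset.sum_Ico_consecutive _ (by omega) (by omega), Finset.sum_Ico_eq_sum_range]
  have : x + N - (x + 1) = N - 1 := by omega
  rw [this]
  exact Finset.sum_congr rfl fun i _ => by rw [Nat.add_right_comm]

theorem dEdges_projD {m n q : ℕ} {w : ℤ} {G : ArcTriple} [NeZero (2 * n)] (hq : n = m * q)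
    (h : ArcSys m w n G) (hw : w < n) (hwm : w ≤ m) :
    dEdges n (projD n G) = q * arcCount m G := by
  have hpos : 0 < n := by
    have := NeZero.ne (2 * n)
    omega
  have hmn : m ≤ n := by
    rw [hq]
    apply Nat.le_mul_of_pos_right
    rcases Nat.eq_zero_or_pos q with rfl | h0
    · omega
    · exact h0
  unfold dEdges
  have e1 : ∀ i ∈ range (2 * n), ∀ j ∈ range (2 * n),
      (if i < j then (projD n G).1 (i : ZMod (2*n)) (j : ZMod (2*n)) else 0) =
      (if i < j then (fun a b : ℕ => G.1 a b) i j +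
        (fun a b : ℕ => G.1 a b) j (i + 2 * n) else 0) := by
    intro i hi j hj
    rw [Finset.mem_range] at hi hj
    split_ifs with hij
    · have := projD_cast hq h (i : ℤ) (j : ℤ) (by omega) (by omega) hw
      push_cast at this ⊢
      exact this
    · rfl
  rw [Finset.sum_congr rfl fun i hi => Finset.sum_congr rfl (e1 i hi), sum_pairs]
  have e2 : ∀ x : ℕ, (∑ s ∈ range (2 * n - 1), (fun a b : ℕ => G.1 a b) x (x + s + 1)) =
      ∑ s ∈ range m, G.1 (x : ℤ) ((x : ℤ) + s + 1) := by
    intro x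
    symm
    have hsub : range m ⊆ range (2 * n - 1) := by
      intro s
      simp only [Finset.mem_range]
      omega
    rw [Finset.sum_subset (f := fun s : ℕ => G.1 (x : ℤ) ((x : ℤ) + s + 1)) hsub]
    · exact Finset.sum_congr rfl fun s _ => by push_cast; rfl
    · intro s _ hs
      rw [Finset.mem_range] at hs
      by_contra h0
      have := h.1 _ _ h0
      omega
  have e3 : (∑ x ∈ range (2 * n), ∑ s ∈ range (2 * n - 1),
      (fun a b : ℕ => G.1 a b) x (x + s + 1)) =
      (2 * q) * ∑ x ∈ range m, ∑ s ∈ range m, G.1 (x : ℤ) ((x : ℤ) + s + 1) := by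
    rw [Finset.sum_congr rfl fun x _ => e2 x, ← sum_range_periodic_s16 (m := m) (2 * q)]
    · congr 2
      rw [hq]
      ring
    · intro x
      refine Finset.sum_congr rfl fun s _ => ?_
      rw [← h.2.1 (x : ℤ)]
      push_cast
      rw [show (x : ℤ) + s + 1 + m = x + m + s + 1 by ring]
  have e4 : (∑ a ∈ range n, ((projD n G).2.1 (a : ZMod (2*n)) + (projD n G).2.2 (a : ZMod (2*n))))
      = q * ∑ a ∈ range m, (G.2.1 (a : ℤ) + G.2.2 (a : ℤ)) := by
    rw [← sum_range_periodic_s16 (m := m) q, ← hq]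
    · refine Finset.sum_congr rfl fun a _ => ?_
      have h1 := per_val_cast hq h.2.2.1 (a : ℤ)
      have h2 := per_val_cast hq h.2.2.2.1 (a : ℤ)
      simp only [Int.cast_natCast] at h1 h2
      simp only [projD, h1, h2]
    · intro a
      push_cast
      rw [h.2.2.1, h.2.2.2.1]
  rw [e3, e4, arcCount, Finset.sum_add_distrib (f := fun x : ℕ => 2 * _), ← Finset.mul_sum]
  ring

/-! ### Trading long arcs for bicolored diameters -/

/-- If `n` is a proper multiple of `m`, an `m`-periodic system has diameters of one color only. -/
theorem ArcSys.mono_color {m n : ℕ} {w : ℤ} {G : ArcTriple} (h : ArcSys m w n G) (hm : 0 < m)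
    (hmn : m < n) (a b : ℤ) : G.2.1 a = 0 ∨ G.2.2 b = 0 := by
  by_contra! hc
  have h1 := h.2.2.2.2.2.2.2 a b hc.1 hc.2
  have h2 := h.2.2.2.2.2.2.2 (a + m) b (by rw [h.2.2.1]; exact hc.1) hc.2
  have h3 := dvd_sub h2 h1
  rw [show a + m - b - (a - b) = m by ring] at h3
  have := Int.le_of_dvd (by omega) h3
  omega

theorem exists_shift {m : ℕ} (hm : 0 < m) {a b : ℤ} (h : ¬ (m : ℤ) ∣ a - b) :
    ∃ t : ℤ, a < b + t * m ∧ b + t * m < a + m := by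
  have hm' : (0 : ℤ) < m := by exact_mod_cast hm
  have h1 := Int.emod_add_mul_ediv (b - a) m
  have h2 := Int.emod_nonneg (b - a) hm'.ne'
  have h3 := Int.emod_lt_of_pos (b - a) hm'
  have h4 : (b - a) % m ≠ 0 := fun h0 => h (by
    rw [← neg_sub, dvd_neg]
    exact Int.dvd_of_emod_eq_zero h0)
  refine ⟨-((b - a) / m), ?_⟩
  have : -((b - a) / m) * (m : ℤ) = -(m * ((b - a) / m)) := by ring
  rw [this]
  generalize (m : ℤ) * ((b - a) / m) = c at *
  omega

theorem foldArc_spec {m n : ℕ} {G : ArcTriple} (hm : 0 < m) (hmn : m < n)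
    (h : ArcSys m m n G) : ArcSys m (m - 1 : ℤ) m (foldArc m G) := by
  have hmono := h.mono_color hm hmn
  have hper := h.per
  obtain ⟨hs, hp, hpb, hpr, hx, hb, hr, -⟩ := h
  have hle : ∀ x y, (foldArc m G).1 x y ≠ 0 → G.1 x y ≠ 0 ∧ y ≠ x + m := by
    intro x y h0
    simp only [foldArc] at h0
    split_ifs at h0 with hc
    · exact absurd rfl h0
    · exact ⟨h0, hc⟩
  have hdiam : ∀ f : ℤ → ℕ, (∀ a x y, x < a → a < y → f a = 0 ∨ G.1 x y = 0) →
      ∀ a x y, x < a → a < y → f a + G.1 a (a + m) = 0 ∨ (foldArc m G).1 x y = 0 := by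
    intro f hf a x y h1 h2
    by_contra! hc
    obtain ⟨h3, h4⟩ := hle _ _ hc.2
    have h5 := hs _ _ h3
    have h6 := (hf a x y h1 h2).resolve_right h3
    have h7 := (hx x a y (a + m) h1 h2 (by omega)).resolve_left h3
    omega
  -- two orbits, one of long arcs, the other of long arcs or of diameters, meet only if equal
  have hcd : ∀ f : ℤ → ℕ, (∀ a, f (a + m) = f a) →
      (∀ a x y, x < a → a < y → f a = 0 ∨ G.1 x y = 0) →
      ∀ a b, G.1 a (a + m) ≠ 0 → f b ≠ 0 → (m : ℤ) ∣ a - b := by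
    intro f hf hfx a b h1 h2
    by_contra hnd
    obtain ⟨t, ht1, ht2⟩ := exists_shift hm hnd
    rcases hfx _ _ _ ht1 ht2 with h0 | h0
    · exact h2 (by rw [← per_of hf b t]; exact h0)
    · exact h1 h0
  refine ⟨fun x y h0 => ?_, fun x y => ?_, fun a => ?_, fun a => ?_,
    fun x u y v h1 h2 h3 => ?_, hdiam _ hb, hdiam _ hr, fun a b ha hb' => ?_⟩
  · obtain ⟨h1, h2⟩ := hle _ _ h0
    have := hs _ _ h1
    omega
  · have e : y + m = x + m + m ↔ y = x + m := by omega
    simp only [foldArc, e, hp]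
  · simp only [foldArc, hp, hpb]
  · simp only [foldArc, hp, hpr]
  · by_contra! hc
    exact (hx x u y v h1 h2 h3).elim (hle _ _ hc.1).1 (hle _ _ hc.2).1
  · simp only [foldArc] at ha hb'
    by_cases ca : G.1 a (a + m) = 0
    · have ca' : G.2.1 a ≠ 0 := by omega
      have hrb := (hmono a b).resolve_left ca'
      have cb : G.1 b (b + m) ≠ 0 := by omega
      rw [← neg_sub, dvd_neg]
      exact hcd _ hpb hb b a cb ca'
    · by_cases cb : G.1 b (b + m) = 0
      · exact hcd _ hpr hr a b ca (by omega)
      · by_contra hnd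
        obtain ⟨t, ht1, ht2⟩ := exists_shift hm hnd
        have h1 : G.1 (b + t * m) (b + m + t * m) ≠ 0 := by rw [hper]; exact cb
        exact (hx _ _ _ _ ht1 ht2 (by omega)).elim ca h1

theorem unfoldArc_spec {m n : ℕ} {G : ArcTriple} (hm : 0 < m)
    (h : ArcSys m (m - 1 : ℤ) m G) : ArcSys m m n (unfoldArc m G) := by
  obtain ⟨hs, hp, hpb, hpr, hx, hb, hr, hcol⟩ := h
  have hnd : ∀ a b : ℤ, a < b → b < a + m → ¬ (m : ℤ) ∣ a - b := by
    intro a b h1 h2 hd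
    rw [← neg_sub, dvd_neg] at hd
    have := Int.le_of_dvd (by omega) hd
    omega
  have hle : ∀ x y, (unfoldArc m G).1 x y ≠ 0 →
      (y = x + m ∧ G.2.1 x ≠ 0 ∧ G.2.2 x ≠ 0) ∨ (G.1 x y ≠ 0 ∧ x < y ∧ y < x + m) := by
    intro x y h0
    simp only [unfoldArc] at h0
    split_ifs at h0 with hc
    · left
      refine ⟨hc, ?_, ?_⟩ <;> omega
    · right
      have := hs _ _ h0
      exact ⟨h0, by omega, by omega⟩
  refine ⟨fun x y h0 => ?_, fun x y => ?_, fun a => ?_, fun a => ?_,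
    fun x u y v h1 h2 h3 => ?_, fun a x y h1 h2 => ?_, fun a x y h1 h2 => ?_,
    fun a b ha hb' => ?_⟩
  · rcases hle _ _ h0 with h1 | h1 <;> omega
  · have e : y + m = x + m + m ↔ y = x + m := by omega
    simp only [unfoldArc, e, hp, hpb, hpr]
  · simp only [unfoldArc, hpb, hpr]
  · simp only [unfoldArc, hpb, hpr]
  · by_contra! hc
    rcases hle _ _ hc.1 with ⟨rfl, c1, c2⟩ | ⟨c1, c2, c3⟩
    · rcases hle _ _ hc.2 with ⟨rfl, d1, d2⟩ | ⟨d1, d2, d3⟩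
      · exact hnd x u h1 h2 (hcol x u c1 d2)
      · rcases hb (x + m) u v h2 h3 with h0 | h0
        · exact c1 (by rw [← hpb]; exact h0)
        · exact d1 h0
    · rcases hle _ _ hc.2 with ⟨rfl, d1, d2⟩ | ⟨d1, d2, d3⟩
      · exact (hb u x y h1 h2).elim d1 c1
      · exact (hx x u y v h1 h2 h3).elim c1 d1
  · by_contra! hc
    simp only [unfoldArc] at hc
    have hba : G.2.1 a ≠ 0 := by omega
    rcases hle _ _ hc.2 with ⟨rfl, c1, c2⟩ | ⟨c1, c2, c3⟩
    · have := hcol a x hba c2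
      rw [← neg_sub, dvd_neg] at this
      exact hnd x a h1 h2 this
    · exact (hb a x y h1 h2).elim hba c1
  · by_contra! hc
    simp only [unfoldArc] at hc
    have hba : G.2.2 a ≠ 0 := by omega
    rcases hle _ _ hc.2 with ⟨rfl, c1, c2⟩ | ⟨c1, c2, c3⟩
    · exact hnd x a h1 h2 (hcol x a c1 hba)
    · exact (hr a x y h1 h2).elim hba c1
  · exfalso
    simp only [unfoldArc] at ha hb'
    have hd := hcol a b (by omega) (by omega)
    have e1 := per_of_dvd hpb hd
    have e2 := per_of_dvd hpr hd
    omega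

theorem unfoldArc_foldArc {m n : ℕ} {G : ArcTriple} (hm : 0 < m) (hmn : m < n)
    (h : ArcSys m m n G) : unfoldArc m (foldArc m G) = G := by
  have hmono := h.mono_color hm hmn
  refine Prod.ext ?_ (Prod.ext ?_ ?_)
  · funext x y
    have := hmono x x
    simp only [unfoldArc, foldArc]
    split_ifs with hc
    · subst hc
      omega
    · rfl
  · funext a
    have := hmono a a
    simp only [unfoldArc, foldArc]
    omega
  · funext a
    have := hmono a a
    simp only [unfoldArc, foldArc]
    omega

theorem foldArc_unfoldArc {m n : ℕ} {G : ArcTriple}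
    (h : ArcSys m (m - 1 : ℤ) n G) : foldArc m (unfoldArc m G) = G := by
  refine Prod.ext ?_ (Prod.ext ?_ ?_)
  · funext x y
    simp only [unfoldArc, foldArc]
    split_ifs with hc
    · by_contra h0
      have := h.1 _ _ (Ne.symm h0)
      omega
    · rfl
  · funext a
    simp only [unfoldArc, foldArc, if_true]
    omega
  · funext a
    simp only [unfoldArc, foldArc, if_true]
    omega

theorem arcCount_foldArc {m : ℕ} (G : ArcTriple) :
    arcCount m (foldArc m G) = arcCount m G := by
  unfold arcCount
  refine Finset.sum_congr rfl fun x _ => ?_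
  rcases m with _ | p
  · simp at *
  · rw [Finset.sum_range_succ, Finset.sum_range_succ]
    have e : ∀ s ∈ range p, (foldArc (p + 1) G).1 (x : ℤ) ((x : ℤ) + s + 1) =
        G.1 (x : ℤ) ((x : ℤ) + s + 1) := by
      intro s hs
      rw [Finset.mem_range] at hs
      simp only [foldArc]
      rw [if_neg (by push_cast; omega)]
    rw [Finset.sum_congr rfl e]
    have e1 : (x : ℤ) + ((p + 1 : ℕ) : ℤ) = (x : ℤ) + p + 1 := by push_cast; ring
    simp only [foldArc, e1, if_true]
    ring

/-! ### Assembling the bijection -/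

theorem shortD_self {m : ℕ} {F : DTriple m} (h : IsDMulti m F) : ShortD m (m - 1 : ℤ) F := by
  intro x y h1 h2 h0
  have hne : x ≠ y := by
    rintro rfl
    exact h0 (h.2.1 _)
  have hne2 : y ≠ x + m := by
    rintro rfl
    apply h0
    push_cast
    exact h.2.2.1 _
  omega

/-- An edge longer than `m` crosses its own image under rotation by `m`. -/
theorem shortD_of_MInv {m n : ℕ} {F : DTriple n} [NeZero (2 * n)] (hm : 0 < m)
    (h : IsDMulti n F) (hM : MInv n m F) : ShortD n m F := by
  intro x y h1 h2 h0
  by_contra! hc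
  have hcr := cross_of_lt (N := 2 * n) (x := x) (u := x + m) (y := y) (v := y + m) (by omega)
    (by omega) (by omega) (by push_cast; omega)
  have := h.2.2.2.2.2.2.1 _ _ _ _ hcr
  push_cast at this
  rw [hM.1] at this
  exact this.elim h0 h0

/-- As `n` is an odd multiple of `m`, rotations by `2m` and by `n` generate rotation by `m`. -/
theorem dFixed_iff_s16 {m n p : ℕ} {F : DTriple n} (hn : n = m * (2 * p + 1)) (h : IsDMulti n F) :
    DFixed n (2 * m) F ↔ MInv n m F := by
  obtain ⟨-, -, -, hn1, hn2, hn3, -⟩ := h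
  have e0 : (2 * m) % 2 = 0 := by omega
  have e1 : ∀ i : ZMod (2 * n), i + (m : ZMod (2 * n)) + ((2 * m * p : ℕ) : ZMod (2 * n)) =
      i + ((n : ℕ) : ZMod (2 * n)) := by
    intro i
    rw [add_assoc, ← Nat.cast_add]
    congr 2
    rw [hn]
    ring
  simp only [DFixed, MInv, e0, if_true]
  constructor
  · rintro ⟨h1, h2, h3⟩
    refine ⟨fun i j => ?_, fun a => ?_, fun a => ?_⟩
    · rw [← iterate_inv (q := p) h1 (i + m) (j + m), e1, e1, hn1]
    · rw [← iterate_inv' (q := p) h2 (a + m), e1, hn2]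
    · rw [← iterate_inv' (q := p) h3 (a + m), e1, hn3]
  · rintro ⟨h1, h2, h3⟩
    have e2 : ((2 * m : ℕ) : ZMod (2 * n)) = ((m * 2 : ℕ) : ZMod (2 * n)) := 
      congrArg _ (Nat.mul_comm 2 m)
    rw [e2]
    exact ⟨iterate_inv h1, iterate_inv' h2, iterate_inv' h3⟩

theorem mInv_self {m : ℕ} {F : DTriple m} (h : IsDMulti m F) : MInv m m F :=
  ⟨h.2.2.2.1, h.2.2.2.2.1, h.2.2.2.2.2.1⟩

/-- The folding bijection when `n` is a proper odd multiple of `m`. -/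
theorem fold_nontrivial {m n p k : ℕ} (hm : 0 < m) (hp : 0 < p) (hn : n = m * (2 * p + 1)) :
    Nonempty
      ({F : DTriple n // IsDMulti n F ∧ dEdges n F = k ∧ DFixed n (2 * m) F} ≃
       {F' : DTriple m // IsDMulti m F' ∧ dEdges m F' * (2 * n) = k * (2 * m)}) := by
  have hmn : m < n := by
    rw [hn]
    nlinarith
  have : NeZero (2 * n) := ⟨by omega⟩
  have : NeZero (2 * m) := ⟨by omega⟩
  have hw : (m : ℤ) < n := by exact_mod_cast hmn
  have hw' : (m - 1 : ℤ) < m := by omega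
  have hm1 : m = m * 1 := (mul_one m).symm
  have A : ∀ F : DTriple n, IsDMulti n F → DFixed n (2 * m) F →
      ArcSys m m n (liftD n m F) ∧ projD n (liftD n m F) = F := fun F h hF =>
    have hM := (dFixed_iff_s16 hn h).1 hF
    ⟨liftD_spec h hM hw, projD_liftD hn h hM hw (shortD_of_MInv hm h hM)⟩
  have B : ∀ F : DTriple m, IsDMulti m F →
      ArcSys m (m - 1 : ℤ) m (liftD m (m - 1) F) ∧ projD m (liftD m (m - 1) F) = F := fun F h =>
    ⟨liftD_spec h (mInv_self h) hw', projD_liftD hm1 h (mInv_self h) hw' (shortD_self h)⟩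
  refine ⟨⟨fun F => ⟨projD m (foldArc m (liftD n m F.1)), ?_⟩,
    fun F => ⟨projD n (unfoldArc m (liftD m (m - 1) F.1)), ?_⟩, fun F => ?_, fun F => ?_⟩⟩
  · obtain ⟨F, h1, h2, h3⟩ := F
    obtain ⟨a1, a2⟩ := A F h1 h3
    have hf := foldArc_spec hm hmn a1
    refine ⟨projD_spec hm1 hf hw', ?_⟩
    rw [dEdges_projD hm1 hf hw' (by omega), arcCount_foldArc, ← h2]
    conv_rhs => rw [← a2, dEdges_projD hn a1 hw le_rfl]
    have e : 2 * n = 2 * (m * (2 * p + 1)) := by rw [← hn]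
    linear_combination arcCount m (liftD n m F) * e
  · obtain ⟨F, h1, h2⟩ := F
    obtain ⟨a1, a2⟩ := B F h1
    have hf := unfoldArc_spec (n := n) hm a1
    have hd := projD_spec hn hf hw
    refine ⟨hd, ?_, (dFixed_iff_s16 hn hd).2 (projD_MInv hn hf hw)⟩
    rw [dEdges_projD hn hf hw le_rfl, ← arcCount_foldArc, foldArc_unfoldArc a1]
    rw [← a2, dEdges_projD hm1 a1 hw' (by omega)] at h2
    apply Nat.eq_of_mul_eq_mul_right (show 0 < 2 * m by omega)
    rw [← h2]
    have e : 2 * n = 2 * (m * (2 * p + 1)) := by rw [← hn]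
    rw [e]
    ring
  · obtain ⟨F, h1, h2, h3⟩ := F
    obtain ⟨a1, a2⟩ := A F h1 h3
    apply Subtype.ext
    simp only
    rw [liftD_projD hm1 (foldArc_spec hm hmn a1) hw', unfoldArc_foldArc hm hmn a1, a2]
  · obtain ⟨F, h1, h2⟩ := F
    obtain ⟨a1, a2⟩ := B F h1
    apply Subtype.ext
    simp only
    rw [liftD_projD hn (unfoldArc_spec hm a1) hw, foldArc_unfoldArc a1, a2]

/-- Folding Lemma, Part 2.  Let `k ≥ 0`, `n ≥ 2`, and let `d` be an
even divisor of `2n` which does not divide `n`.  The set of `k`-edge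
D-multidissections of `P_{2n}` invariant under the `d`-th power of D-rotation is in
bijective correspondence with the set of `kd/(2n)`-edge D-multidissections of `P_d`
(the polygon `P_d = P_{2·(d/2)}`; the edge count is encoded by the equation
`(#edges)·2n = k·d`, so that the latter set is empty when `2n ∤ kd`). -/
theorem statement16 (n k d : ℕ) (hn : 2 ≤ n) (hd : d % 2 = 0) (hd2n : d ∣ 2 * n)
    (hdn : ¬ d ∣ n) :
    Nonempty
      ({F : DTriple n // IsDMulti n F ∧ dEdges n F = k ∧ DFixed n d F} ≃
       {F' : DTriple (d / 2) // IsDMulti (d / 2) F' ∧ dEdges (d / 2) F' * (2 * n) = k * d}) := by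
  obtain ⟨m, rfl⟩ : ∃ m, d = 2 * m := ⟨d / 2, by omega⟩
  rw [show 2 * m / 2 = m by omega]
  obtain ⟨q, hq⟩ := hd2n
  have hnq : n = m * q := by
    apply Nat.eq_of_mul_eq_mul_left (show 0 < 2 by norm_num)
    rw [hq]
    ring
  have hm : 0 < m := by
    rcases Nat.eq_zero_or_pos m with rfl | h
    · omega
    · exact h
  rcases Nat.even_or_odd' q with ⟨p, hp | hp⟩
  · exact absurd ⟨p, by rw [hnq, hp]; ring⟩ hdn
  · rcases Nat.eq_zero_or_pos p with h0 | h0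
    · -- here `2m = 2n`: the rotation is trivial and both sides are the same set
      obtain rfl : n = m := by rw [hnq, hp, h0]; ring
      refine ⟨Equiv.subtypeEquivRight fun F => ?_⟩
      have hfix : DFixed n (2 * n) F := by
        have e : ((2 * n : ℕ) : ZMod (2 * n)) = 0 := ZMod.natCast_self _
        have e0 : (2 * n) % 2 = 0 := by omega
        simp only [DFixed, e0, e, add_zero, if_true, implies_true, and_self]
      have hpos : 0 < 2 * n := by omega
      refine and_congr_right fun _ => ⟨fun h => by rw [h.1], fun h => ⟨?_, hfix⟩⟩
      exact Nat.eq_of_mul_eq_mul_right hpos h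
    · rw [hp] at hnq
      exact fold_nontrivial hm h0 hnq
end

section
/- Let ζ ∈ ℂ be a root of unity of multiplicative order d, and suppose d divides n. Then for every k ≥ 0, the evaluation h_k(1, ζ, ζ², …, ζ^{n−1}) equals h_{k/d}(1^{n/d}) = C(n/d + k/d − 1, k/d) if d divides k, and equals 0 otherwise. -/
/-!
The complete homogeneous polynomials have the generating function
`∑ₖ hₖ(x₁, …, xₙ) tᵏ = ∏ᵢ (1 - xᵢ t)⁻¹` (`mk_hh_mul_prod`), which follows from the recurrence
`hₖ₊₁(x₁, …, xₙ₊₁) = hₖ₊₁(x₁, …, xₙ) + xₙ₊₁ hₖ(x₁, …, xₙ₊₁)` (`hh_succ_succ`).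
At the values `ζ ^ i`, `0 ≤ i < n = d m`, every `d`-th root of unity occurs `m` times, so the product is
`(1 - tᵈ)⁻ᵐ` (`prod_range_mul_one_sub`). Its expansion `∑ⱼ C(m + j - 1, j) tᵈʲ`
(`mk_choose_mul_pow`) gives the result on comparing coefficients of `tᵏ`.
-/


open Finset

/-- Splitting off the last variable: a weakly increasing sequence of length `k + 1` either ends in
the largest index, and deleting that entry leaves an arbitrary weakly increasing sequence of
length `k`, or avoids the largest index altogether. -/
theorem hh_succ_succ {R : Type*} [CommSemiring R] (n k : ℕ) (x : Fin (n + 1) → R) :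
    hh (n + 1) (k + 1) x =
      hh n (k + 1) (fun i => x i.castSucc) + hh (n + 1) k x * x (Fin.last n) := by
  classical
  simp only [hh, ← Finset.sum_filter]
  rw [← Finset.sum_filter_add_sum_filter_not _ (fun T => T (Fin.last k) ≠ Fin.last n),
    Finset.filter_filter, Finset.filter_filter]
  congr 1
  · symm
    refine Finset.sum_nbij (fun T i => (T i).castSucc) ?_ ?_ ?_ ?_
    · intro T hT
      simp only [Finset.mem_filter, Finset.mem_univ, true_and] at hT ⊢
      exact ⟨fun i j h => Fin.castSucc_le_castSucc_iff.2 (hT i j h), Fin.castSucc_ne_last _⟩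
    · intro S _ T _ h
      funext i
      exact Fin.castSucc_injective _ (congrFun h i)
    · intro T hT
      simp only [Finset.coe_filter, Finset.mem_univ, true_and, Set.mem_ofPred_eq] at hT
      have hne : ∀ i, T i ≠ Fin.last n := fun i =>
        ((hT.1 i _ (Fin.le_last i)).trans_lt (Fin.lt_last_iff_ne_last.2 hT.2)).ne
      refine ⟨fun i => (T i).castPred (hne i), ?_, ?_⟩
      · simp only [Finset.coe_filter, Finset.mem_univ, true_and, Set.mem_ofPred_eq]
        exact fun i j h => Fin.castPred_le_castPred_iff.2 (hT.1 i j h)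
      · funext i
        simp
    · intro T _
      rfl
  · symm
    rw [Finset.sum_mul]
    refine Finset.sum_nbij (fun T => Fin.snoc (α := fun _ => Fin (n + 1)) T (Fin.last n))
      ?_ ?_ ?_ ?_
    · intro T hT
      simp only [Finset.mem_filter, Finset.mem_univ, true_and] at hT ⊢
      refine ⟨fun i j h => ?_, by simp⟩
      induction j using Fin.lastCases with
      | last => simpa using Fin.le_last _
      | cast j =>
        induction i using Fin.lastCases with
        | last => exact absurd h (not_le.2 (Fin.castSucc_lt_last j))
        | cast i => simpa using hT i j (Fin.castSucc_le_castSucc_iff.1 h)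
    · intro S _ T _ h
      exact (Fin.snoc_injective2 h).1
    · intro T hT
      simp only [Finset.coe_filter, Finset.mem_univ, true_and, Set.mem_ofPred_eq, not_not] at hT
      refine ⟨fun i => T i.castSucc, ?_, ?_⟩
      · simp only [Finset.coe_filter, Finset.mem_univ, true_and, Set.mem_ofPred_eq]
        exact fun i j h => hT.1 _ _ (Fin.castSucc_le_castSucc_iff.2 h)
      · have := Fin.snoc_init_self T
        rw [hT.2] at this
        exact this
    · intro T _
      simp [Fin.prod_univ_castSucc]

theorem hh_zero_right_s18 {R : Type*} [CommSemiring R] (n : ℕ) (x : Fin n → R) : hh n 0 x = 1 := by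
  simp [hh]

theorem hh_zero_succ {R : Type*} [CommSemiring R] (k : ℕ) (x : Fin 0 → R) :
    hh 0 (k + 1) x = 0 := by
  simp [hh]

open PowerSeries in
/-- The generating function identity `∑ₖ hₖ(x) tᵏ = ∏ᵢ (1 - xᵢ t)⁻¹`. -/
theorem mk_hh_mul_prod {R : Type*} [CommRing R] (n : ℕ) (x : ℕ → R) :
    (mk fun k => hh n k (fun i : Fin n => x i)) * ∏ i ∈ range n, (1 - C (x i) * X) = 1 := by
  induction n with
  | zero =>
    ext (_ | k) <;> simp [hh_zero_right_s18, hh_zero_succ, coeff_one]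
  | succ n ih =>
    rw [Finset.prod_range_succ, mul_comm (∏ i ∈ range n, _), ← mul_assoc]
    refine Eq.trans (congrArg (· * _) ?_) ih
    rw [mul_sub, mul_one, ← mul_assoc]
    ext (_ | k)
    · simp [hh_zero_right_s18]
    · simp [hh_succ_succ, coeff_succ_mul_X]

open PowerSeries in
/-- The expansion of `(1 - t ^ d)⁻ᵐ`; the truncated subtraction is harmless, since
`m + k / d = 0` forces `k / d = 0`, where the binomial coefficient is `1` anyway. -/
theorem mk_choose_mul_pow {R : Type*} [CommRing R] (d m : ℕ) (hd : 0 < d) :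
    (mk fun k => if d ∣ k then ((m + k / d - 1).choose (k / d) : R) else 0) *
      (1 - X ^ d) ^ m = 1 := by
  induction m with
  | zero =>
    ext k
    by_cases hk : d ∣ k
    · obtain ⟨_ | j, rfl⟩ := hk
      · simp
      · simp [coeff_one, Nat.mul_div_cancel_left _ hd, hd.ne']
    · have : k ≠ 0 := by rintro rfl; simp at hk
      simp [hk, coeff_one, this]
  | succ m ih =>
    rw [pow_succ', ← mul_assoc]
    refine Eq.trans (congrArg (· * _) ?_) ih
    rw [mul_sub, mul_one]
    ext k
    rw [map_sub, coeff_mul_X_pow', coeff_mk, coeff_mk]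
    by_cases hk : d ∣ k
    · obtain ⟨_ | j, rfl⟩ := hk
      · simp [hd.ne']
      · have h1 : d * (j + 1) - d = d * j := by rw [mul_add, mul_one, Nat.add_sub_cancel]
        have h2 : d ≤ d * (j + 1) := Nat.le_mul_of_pos_right d j.succ_pos
        have h3 : m + 1 + (j + 1) - 1 = m + j + 1 := by omega
        have h4 : m + 1 + j - 1 = m + j := by omega
        have h5 : m + (j + 1) - 1 = m + j := by omega
        simp [h1, h2, h3, h4, h5, Nat.mul_div_cancel_left _ hd, Nat.choose_succ_succ]
    · have : d ≤ k → ¬ d ∣ k - d := fun h h' => hk ((Nat.dvd_sub_iff_left h dvd_rfl).1 h')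
      simp +contextual [hk, this]

open PowerSeries in
theorem prod_range_one_sub {ζ : ℂ} {d : ℕ} (hd : 0 < d) (hζ : IsPrimitiveRoot ζ d) :
    ∏ i ∈ range d, (1 - C (ζ ^ i) * X) = 1 - (X : PowerSeries ℂ) ^ d := by
  have hC : IsPrimitiveRoot (C ζ : PowerSeries ℂ) d := hζ.map_of_injective C_injective
  rw [← one_pow (M := PowerSeries ℂ) d, hC.pow_sub_pow_eq_prod_sub_mul _ _ hd]
  have hval : (Polynomial.nthRootsFinset d (1 : PowerSeries ℂ)).val =
      (Multiset.range d).map (fun i => C ζ ^ i) := by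
    classical
    rw [Polynomial.nthRootsFinset_def, Multiset.toFinset_val, hC.nthRoots_one_nodup.dedup,
      hC.nthRoots_eq (one_pow d)]
    simp
  rw [Finset.prod_eq_multiset_prod, Finset.prod_eq_multiset_prod, hval, Multiset.map_map]
  simp

open PowerSeries in
/-- As `i` runs over `0, …, dm - 1`, the powers `ζ ^ i` run `m` times over the `d`-th roots of
unity. -/
theorem prod_range_mul_one_sub {ζ : ℂ} {d : ℕ} (hd : 0 < d) (hζ : IsPrimitiveRoot ζ d) (m : ℕ) :
    ∏ i ∈ range (d * m), (1 - C (ζ ^ i) * X) = (1 - (X : PowerSeries ℂ) ^ d) ^ m := by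
  induction m with
  | zero => simp
  | succ m ih =>
    rw [mul_add, mul_one, Finset.prod_range_add, ih, pow_succ, ← prod_range_one_sub hd hζ]
    simp [pow_add, pow_mul, hζ.pow_eq_one]

/-- Reiner–Stanton–White, Theorem 1.1(a).  Let `ζ ∈ ℂ` be a root of
unity of multiplicative order `d`, and suppose `d ∣ n`.  Then for every `k ≥ 0`,
`h_k(1,ζ,ζ²,…,ζ^{n−1})` equals `h_{k/d}(1^{n/d}) = C(n/d + k/d − 1, k/d)` if `d ∣ k`,
and equals `0` otherwise. -/
theorem statement18 (n d k : ℕ) (hd : 0 < d) (ζ : ℂ) (hζ : IsPrimitiveRoot ζ d)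
    (hdn : d ∣ n) :
    hh n k (fun i : Fin n => ζ ^ (i : ℕ)) =
      if d ∣ k then ((n / d + k / d - 1).choose (k / d) : ℂ) else 0 := by
  obtain ⟨m, rfl⟩ := hdn
  have h1 := mk_hh_mul_prod (d * m) (fun i => ζ ^ i)
  have h2 := mk_choose_mul_pow (R := ℂ) d m hd
  rw [prod_range_mul_one_sub hd hζ] at h1
  have h := congrArg (PowerSeries.coeff k)
    (left_inv_eq_right_inv h1 ((mul_comm _ _).trans h2))
  rw [PowerSeries.coeff_mk, PowerSeries.coeff_mk] at h
  rw [h, Nat.mul_div_cancel_left _ hd]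
end
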